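/- (Prescribed scalar curvature solution on the Euclidean background.) Let n ≥ 3, p > n and δ ∈ (2−n, 0). Let τ : ℝⁿ → ℝ be smooth with ‖τ‖_{W^{1,p}_{δ−1}} < ∞. Then there exists a smooth function u : ℝⁿ → ℝ with u > 0 everywhere, u − 1 ∈ W^{2,p}_δ (i.e. ‖u − 1‖_{W^{2,p}_δ} < ∞), and Δu = b_n τ² u^{N−1} on ℝⁿ, where N = 2n/(n−2) and b_n = (n−2)/(4n). -/

import Mathlib

/-!
With `a = N - 1` and `w = b_n τ²`, the equation `Δu = w u^a` with `u → 1` at infinity is solved in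
the integral form `u + (-Δ)⁻¹(w u^a) = 1`, where `(-Δ)⁻¹` is the Newtonian potential.

*Decay of the data.* A weighted Morrey inequality (`morrey`, `tau_bounds`) turns the hypothesis on
`τ` into `τ = O(⟨x⟩^{δ-1})`, so that `w = O(⟨x⟩^{-2-s})` with `s = -2δ > 0`. Densities of this kind
(`Dec s`) have well-behaved Newtonian potentials: they gain one classical derivative (`contDiff_P`),
solve the Poisson equation (`lap_P`), and decay like `⟨x⟩^{-θ}` for every `0 ≤ θ ≤ n - 2` with
`θ < s` (`pot_decay`).

*Existence.* The power is replaced by a monotone, globally Lipschitz function `g` which agrees with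
`t^a` on `[0, 1]` and vanishes for `t ≤ 0`. The equation `u + t (-Δ)⁻¹(w g(u)) = F` is then solved
by continuation in `t ∈ [0, 1]`: the maximum principle and the monotonicity of `g` show that `u`
depends on `F` in a Lipschitz way with constant `2`, independently of `t` (`stab`), so that
solvability at `t` propagates to `t + σ` by the contraction principle, with a fixed `σ`
(`cont_step`). Since `g ≥ 0`, the solution satisfies `u ≤ 1`; comparison with `exp(-v)`, where
`-Δv = w`, gives `u > 0`, so the truncation is not active (`exists_pos_sol`). Smoothness follows by
bootstrapping (`contDiff_sol`).

*Decay of the solution.* For `θ` strictly between `-δ` and `min(-2δ, n-2)`, the derivatives of order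
`j ≤ 2` of `u - 1 = -(-Δ)⁻¹(w u^a)` are `O(⟨x⟩^{-θ-j})` (`sol_decay`). For `j = 2` the kernel is not
integrable; near `x` the derivative is put on the density instead, and `∇τ`, which is controlled
only in `L^p`, is paired with the kernel `|x-y|^{1-n}` by Hölder's inequality, which is possible as
`p > n` (`locB_of_integrable`, `norm_hess_P_le`). As `θ > -δ`, these bounds give
`u - 1 ∈ W^{2,p}_δ` (`sob_lt_top`).
-/

noncomputable section

open MeasureTheory Filter
open scoped ENNReal Topology

/-- `n`-dimensional Euclidean space. -/
abbrev Euc (n : ℕ) := EuclideanSpace ℝ (Fin n)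

/-- The Japanese bracket `⟨x⟩ = (1 + ‖x‖²)^(1/2)`. -/
def jap {n : ℕ} (x : Euc n) : ℝ := Real.sqrt (1 + ‖x‖ ^ 2)

/-- Partial derivative `∂ᵢ f` of a real-valued function. -/
def pd {n : ℕ} (i : Fin n) (f : Euc n → ℝ) (x : Euc n) : ℝ :=
  fderiv ℝ f x (EuclideanSpace.single i 1)

/-- The Euclidean Laplacian `Δf = Σᵢ ∂ᵢ²f`. -/
def lap {n : ℕ} (f : Euc n → ℝ) (x : Euc n) : ℝ :=
  ∑ i, pd i (pd i f) x

/-- Divergence of a vector field. -/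
def divg {n : ℕ} (W : Euc n → Euc n) (x : Euc n) : ℝ :=
  ∑ i, pd i (fun y => W y i) x

/-- The conformal Killing operator `(𝒟W)ᵢⱼ = ∂ᵢWⱼ + ∂ⱼWᵢ − (2/n)(div W)δᵢⱼ`. -/
def confKill {n : ℕ} (W : Euc n → Euc n) (x : Euc n) : Matrix (Fin n) (Fin n) ℝ :=
  Matrix.of fun i j =>
    pd i (fun y => W y j) x + pd j (fun y => W y i) x
      - (2 / (n : ℝ)) * divg W x * (if i = j then 1 else 0)

/-- The Frobenius norm of a matrix. -/
def frob {n : ℕ} (M : Matrix (Fin n) (Fin n) ℝ) : ℝ :=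
  Real.sqrt (∑ i, ∑ j, (M i j) ^ 2)

/-- The vector Laplacian `(Δ_L W)ⱼ = −Σᵢ ∂ᵢ (𝒟W)ᵢⱼ`. -/
def vecLap {n : ℕ} (W : Euc n → Euc n) (x : Euc n) : Euc n :=
  (EuclideanSpace.equiv (Fin n) ℝ).symm
    (fun j => -∑ i, pd i (fun y => confKill W y i j) x)

/-- Weighted `L^p_δ` norm (as an extended nonnegative real). -/
def LpW {n : ℕ} {F : Type*} [NormedAddCommGroup F] (p δ : ℝ) (f : Euc n → F) : ℝ≥0∞ :=
  (∫⁻ x, ENNReal.ofReal ((jap x ^ (-δ - (n : ℝ) / p) * ‖f x‖) ^ p)) ^ (1 / p)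

/-- Weighted Sobolev `W^{k,p}_δ` norm. -/
def SobW {n : ℕ} {F : Type*} [NormedAddCommGroup F] [NormedSpace ℝ F]
    (k : ℕ) (p δ : ℝ) (f : Euc n → F) : ℝ≥0∞ :=
  ∑ j ∈ Finset.range (k + 1),
    (∫⁻ x, ENNReal.ofReal
      ((jap x ^ (-δ - (n : ℝ) / p + (j : ℝ)) * ‖iteratedFDeriv ℝ j f x‖) ^ p)) ^ (1 / p)

/-- Weighted `L^∞_δ` norm. -/
def LinfW {n : ℕ} {F : Type*} [NormedAddCommGroup F] (δ : ℝ) (f : Euc n → F) : ℝ≥0∞ :=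
  ⨆ x, ENNReal.ofReal (jap x ^ (-δ) * ‖f x‖)

/-- Weighted `L^∞_δ` norm of a matrix field, pointwise Frobenius norm. -/
def LinfWM {n : ℕ} (δ : ℝ) (σ : Euc n → Matrix (Fin n) (Fin n) ℝ) : ℝ≥0∞ :=
  ⨆ x, ENNReal.ofReal (jap x ^ (-δ) * frob (σ x))

/-- `N = 2n/(n−2)`. -/
def Nc (n : ℕ) : ℝ := 2 * n / ((n : ℝ) - 2)
/-- `c_n = (n−2)/(4(n−1))`. -/
def cc (n : ℕ) : ℝ := ((n : ℝ) - 2) / (4 * ((n : ℝ) - 1))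
/-- `b_n = (n−2)/(4n)`. -/
def bc (n : ℕ) : ℝ := ((n : ℝ) - 2) / (4 * (n : ℝ))

/-- Componentwise smoothness of a matrix field. -/
def SmoothMat {n : ℕ} (σ : Euc n → Matrix (Fin n) (Fin n) ℝ) : Prop :=
  ∀ i j, ContDiff ℝ (⊤ : ℕ∞) fun x => σ x i j

/-- A matrix field is symmetric, trace-free and divergence-free. -/
def SymTT {n : ℕ} (σ : Euc n → Matrix (Fin n) (Fin n) ℝ) : Prop :=
  (∀ x i j, σ x i j = σ x j i) ∧ (∀ x, ∑ i, σ x i i = 0) ∧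
    (∀ x j, ∑ i, pd i (fun y => σ y i j) x = 0)

/-- The left-hand side of the Lichnerowicz (Hamiltonian) equation (i). -/
def HamExpr {n : ℕ} (τ : Euc n → ℝ) (σ : Euc n → Matrix (Fin n) (Fin n) ℝ)
    (ρ : Euc n → ℝ) (u : Euc n → ℝ) (W : Euc n → Euc n) (x : Euc n) : ℝ :=
  lap u x + cc n * frob (σ x + confKill W x) ^ 2 * u x ^ (-(Nc n) - 1)
    - bc n * τ x ^ 2 * u x ^ (Nc n - 1) + cc n * ρ x * u x ^ (-(Nc n) / 2)

/-- Equation (i): the Lichnerowicz equation. -/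
def HamEq {n : ℕ} (τ : Euc n → ℝ) (σ : Euc n → Matrix (Fin n) (Fin n) ℝ)
    (ρ : Euc n → ℝ) (u : Euc n → ℝ) (W : Euc n → Euc n) : Prop :=
  ∀ x, HamExpr τ σ ρ u W x = 0

/-- Equation (ii): the momentum constraint `Δ_L W + ((n−1)/n) u^N ∇τ + J = 0`. -/
def MomEq {n : ℕ} (τ : Euc n → ℝ) (J : Euc n → Euc n)
    (u : Euc n → ℝ) (W : Euc n → Euc n) : Prop :=
  ∀ x, vecLap W x + ((((n : ℝ) - 1) / n) * u x ^ Nc n) • gradient τ x + J x = 0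

/-- Global supersolution property for `φ₊`. -/
def GlobalSuperSol {n : ℕ} (p δ : ℝ) (τ : Euc n → ℝ)
    (σ : Euc n → Matrix (Fin n) (Fin n) ℝ) (ρ : Euc n → ℝ) (J : Euc n → Euc n)
    (φp : Euc n → ℝ) : Prop :=
  ∀ φ : Euc n → ℝ, Continuous φ → (∀ x, 0 < φ x ∧ φ x ≤ φp x) →
    ∀ W : Euc n → Euc n, ContDiff ℝ (⊤ : ℕ∞) W → SobW 2 p δ W < ⊤ → MomEq τ J φ W →
    ∀ x, HamExpr τ σ ρ φp W x ≤ 0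

/-- Global subsolution property for `φ₋`. -/
def GlobalSubSol {n : ℕ} (p δ : ℝ) (τ : Euc n → ℝ)
    (σ : Euc n → Matrix (Fin n) (Fin n) ℝ) (ρ : Euc n → ℝ) (J : Euc n → Euc n)
    (φm : Euc n → ℝ) : Prop :=
  ∀ φ : Euc n → ℝ, Continuous φ → (∀ x, φm x ≤ φ x) →
    ∀ W : Euc n → Euc n, ContDiff ℝ (⊤ : ℕ∞) W → SobW 2 p δ W < ⊤ → MomEq τ J φ W →
    ∀ x, 0 ≤ HamExpr τ σ ρ φm W x

section

variable {n : ℕ}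

/-! ### The Japanese bracket -/

lemma one_le_jap (x : Euc n) : 1 ≤ jap x := by
  unfold jap
  rw [Real.one_le_sqrt]
  nlinarith [sq_nonneg ‖x‖]

lemma jap_pos (x : Euc n) : 0 < jap x := lt_of_lt_of_le one_pos (one_le_jap x)

lemma jap_sq (x : Euc n) : jap x ^ 2 = 1 + ‖x‖ ^ 2 := by
  unfold jap
  rw [Real.sq_sqrt (by positivity)]

lemma continuous_jap : Continuous (jap : Euc n → ℝ) := by
  unfold jap
  fun_prop

lemma continuous_jap_rpow (a : ℝ) : Continuous (fun x : Euc n => jap x ^ a) :=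
  continuous_jap.rpow_const fun x => Or.inl (jap_pos x).ne'

lemma norm_le_jap (x : Euc n) : ‖x‖ ≤ jap x := by
  have := jap_sq x
  nlinarith [jap_pos x, norm_nonneg x]

lemma jap_le_jap_add (x y : Euc n) : jap x ≤ jap y + ‖x - y‖ := by
  have h1 := jap_sq x
  have h2 := jap_sq y
  have h3 : ‖x‖ ≤ ‖y‖ + ‖x - y‖ := by
    simpa using norm_add_le y (x - y)
  have h4 := norm_le_jap y
  have h5 := norm_nonneg (x - y)
  have h6 := norm_nonneg x
  have h7 := norm_nonneg y
  refine le_of_sq_le_sq ?_ (by linarith [jap_pos y])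
  nlinarith [mul_le_mul_of_nonneg_right h4 h5]
where
  le_of_sq_le_sq {a b : ℝ} (h : a ^ 2 ≤ b ^ 2) (hb : 0 ≤ b) : a ≤ b := abs_le_of_sq_le_sq' h hb |>.2

lemma jap_le_mul (x y : Euc n) : jap y ≤ 2 * jap x * jap (x - y) := by
  have h := jap_le_jap_add y x
  have h1 := one_le_jap x
  have h2 := one_le_jap (x - y)
  have h3 := norm_le_jap (x - y)
  rw [norm_sub_rev] at h
  nlinarith

lemma jap_near {x y : Euc n} (h : ‖x - y‖ ≤ jap x / 2) : jap x ≤ 2 * jap y := by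
  linarith [jap_le_jap_add x y]

lemma jap_near' {x y : Euc n} (h : ‖x - y‖ ≤ jap x / 2) : jap y ≤ 2 * jap x := by
  have := jap_le_jap_add y x
  rw [norm_sub_rev] at this
  linarith [jap_pos x]

/-- Weights at comparable points are comparable, whatever the sign of the exponent. -/
lemma jap_rpow_near (a : ℝ) {x y : Euc n} (h : ‖x - y‖ ≤ jap x / 2) :
    jap y ^ a ≤ 2 ^ |a| * jap x ^ a := by
  have hx := jap_pos x
  have hy := jap_pos y
  rcases le_total 0 a with ha | ha
  · rw [abs_of_nonneg ha, ← Real.mul_rpow (by norm_num) hx.le]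
    exact Real.rpow_le_rpow hy.le (jap_near' h) ha
  · rw [abs_of_nonpos ha]
    have h1 : (2 * jap y) ^ a ≤ jap x ^ a :=
      Real.rpow_le_rpow_of_nonpos hx (jap_near h) ha
    rw [Real.mul_rpow (by norm_num) hy.le] at h1
    calc jap y ^ a = 2 ^ (-a) * (2 ^ a * jap y ^ a) := by
          rw [← mul_assoc, ← Real.rpow_add (by norm_num)]; simp
      _ ≤ 2 ^ (-a) * jap x ^ a := by gcongr

lemma jap_rpow_mono (x : Euc n) {a b : ℝ} (h : a ≤ b) : jap x ^ a ≤ jap x ^ b :=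
  Real.rpow_le_rpow_of_exponent_le (one_le_jap x) h

/-- Away from the diagonal a power of the distance is controlled by a product of weights, and the
exponent may be distributed freely between the two points. -/
lemma far_kernel_le {m θ : ℝ} (hθ : 0 ≤ θ) (hm : θ ≤ m) {x y : Euc n}
    (h : jap x / 4 ≤ ‖x - y‖) :
    ‖x - y‖ ^ (-m) ≤ 5 ^ m * jap x ^ (-θ) * jap y ^ (-(m - θ)) := by
  have hx := jap_pos x
  have hy := jap_pos y
  have hd : 0 < ‖x - y‖ := by linarith
  have h1 : jap x ≤ 5 * ‖x - y‖ := by linarith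
  have h2 : jap y ≤ 5 * ‖x - y‖ := by
    have := jap_le_jap_add y x
    rw [norm_sub_rev] at this
    linarith
  have h3 : jap x ^ θ * jap y ^ (m - θ) ≤ 5 ^ m * ‖x - y‖ ^ m := by
    calc jap x ^ θ * jap y ^ (m - θ) ≤ (5 * ‖x - y‖) ^ θ * (5 * ‖x - y‖) ^ (m - θ) := by
          gcongr
      _ = (5 * ‖x - y‖) ^ m := by rw [← Real.rpow_add (by positivity)]; ring_nf
      _ = _ := Real.mul_rpow (by norm_num) hd.le
  rw [Real.rpow_neg hd.le, Real.rpow_neg hx.le, Real.rpow_neg hy.le, mul_assoc, ← mul_inv,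
    ← div_eq_mul_inv, inv_eq_one_div, div_le_div_iff₀ (by positivity) (by positivity), one_mul]
  exact h3

lemma integrable_jap {r : ℝ} (hr : (n : ℝ) < r) : Integrable (fun x : Euc n => jap x ^ (-r)) := by
  have h := integrable_rpow_neg_one_add_norm_sq (E := Euc n) (μ := volume) (r := r)
    (by simpa using hr)
  refine h.congr (Eventually.of_forall fun x => ?_)
  simp only
  rw [← jap_sq, ← Real.rpow_natCast, ← Real.rpow_mul (jap_pos x).le]
  congr 1
  push_cast
  ring

/-! ### Riesz kernels -/

lemma integrableOn_norm_rpow (hn : 1 ≤ n) {m : ℝ} (hm : m < n) (R : ℝ) :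
    IntegrableOn (fun z : Euc n => ‖z‖ ^ (-m)) (Metric.ball 0 R) := by
  have : Nontrivial (Euc n) := by
    have : Nonempty (Fin n) := ⟨⟨0, hn⟩⟩
    infer_instance
  rw [MeasureTheory.integrableOn_fun_norm_addHaar (μ := volume) (E := Euc n)
    (f := fun r => r ^ (-m))]
  rcases le_or_gt R 0 with hR | hR
  · simp [Set.Ioo_eq_empty (not_lt.2 hR)]
  have h1 : IntegrableOn (fun y : ℝ => y ^ ((n : ℝ) - 1 - m)) (Set.Ioo 0 R) := by
    rw [intervalIntegral.integrableOn_Ioo_rpow_iff hR]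
    linarith
  refine h1.congr_fun (fun y hy => ?_) measurableSet_Ioo
  simp only [smul_eq_mul, finrank_euclideanSpace, Fintype.card_fin]
  rw [← Real.rpow_natCast, ← Real.rpow_add hy.1]
  congr 1
  push_cast [hn]
  ring

/-- `∫_{|z| < 1} |z|^{-m}`. -/
def ballInt (n : ℕ) (m : ℝ) : ℝ := ∫ z in Metric.ball (0 : Euc n) 1, ‖z‖ ^ (-m)

lemma ballInt_nonneg (m : ℝ) : 0 ≤ ballInt n m :=
  setIntegral_nonneg measurableSet_ball fun _ _ => by positivity

lemma setIntegral_ball_norm_rpow {m R : ℝ} (hR : 0 < R) :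
    ∫ z in Metric.ball (0 : Euc n) R, ‖z‖ ^ (-m) = R ^ ((n : ℝ) - m) * ballInt n m := by
  have h := MeasureTheory.Measure.setIntegral_comp_smul_of_pos (μ := volume)
    (fun z : Euc n => ‖z‖ ^ (-m)) (Metric.ball 0 1) hR
  rw [smul_unitBall_of_pos hR] at h
  have h2 : ∀ z : Euc n, ‖R • z‖ ^ (-m) = R ^ (-m) * ‖z‖ ^ (-m) := fun z => by
    rw [norm_smul, Real.mul_rpow (by positivity) (by positivity), Real.norm_of_nonneg hR.le]
  simp only [h2, integral_const_mul, finrank_euclideanSpace, Fintype.card_fin, smul_eq_mul] at h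
  unfold ballInt
  rw [sub_eq_add_neg, Real.rpow_add hR, Real.rpow_natCast, mul_assoc, h]
  field_simp

lemma setIntegral_ball_norm_sub_rpow {m R : ℝ} (hR : 0 < R) (x : Euc n) :
    ∫ y in Metric.ball x R, ‖x - y‖ ^ (-m) = R ^ ((n : ℝ) - m) * ballInt n m := by
  rw [← setIntegral_ball_norm_rpow hR, ← integral_indicator measurableSet_ball,
    ← integral_indicator measurableSet_ball,
    ← integral_sub_left_eq_self ((Metric.ball (0 : Euc n) R).indicator _) volume x]
  congr 1
  ext y
  simp [Set.indicator, dist_eq_norm, norm_sub_rev]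

lemma integrableOn_norm_sub_rpow (hn : 1 ≤ n) {m : ℝ} (hm : m < n) (R : ℝ) (x : Euc n) :
    IntegrableOn (fun y : Euc n => ‖x - y‖ ^ (-m)) (Metric.ball x R) := by
  have h := integrableOn_norm_rpow hn hm R
  rw [← integrable_indicator_iff measurableSet_ball] at h ⊢
  refine (h.comp_sub_left x).congr (Eventually.of_forall fun y => ?_)
  simp [Set.indicator, dist_eq_norm, norm_sub_rev]

/-- The Riesz kernel `|x - y|^{-m}` against the weight `⟨y⟩^{-2-s}`. -/
lemma kernel_pointwise {m s θ : ℝ} (hθ : 0 ≤ θ) (hm : θ ≤ m) (x y : Euc n) :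
    ‖x - y‖ ^ (-m) * jap y ^ (-2 - s) ≤
      2 ^ |-2 - s| * jap x ^ (-2 - s) *
        (Metric.ball x (jap x / 2)).indicator (fun y => ‖x - y‖ ^ (-m)) y
      + 5 ^ m * jap x ^ (-θ) * jap y ^ (-(m - θ + 2 + s)) := by
  have hx := jap_pos x
  have hy := jap_pos y
  by_cases h : y ∈ Metric.ball x (jap x / 2)
  · rw [Set.indicator_of_mem h]
    rw [Metric.mem_ball, dist_comm, dist_eq_norm] at h
    have h1 := jap_rpow_near (-2 - s) h.le
    have h2 : ‖x - y‖ ^ (-m) * jap y ^ (-2 - s) ≤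
        ‖x - y‖ ^ (-m) * (2 ^ |-2 - s| * jap x ^ (-2 - s)) := by gcongr
    have h3 : 0 ≤ 5 ^ m * jap x ^ (-θ) * jap y ^ (-(m - θ + 2 + s)) := by positivity
    linarith
  · rw [Set.indicator_of_notMem h]
    rw [Metric.mem_ball, dist_comm, dist_eq_norm, not_lt] at h
    have h1 := far_kernel_le hθ hm (x := x) (y := y) (by linarith)
    have h2 : jap y ^ (-(m - θ + 2 + s)) = jap y ^ (-(m - θ)) * jap y ^ (-2 - s) := by
      rw [← Real.rpow_add hy]; ring_nf
    rw [h2, mul_zero, zero_add, ← mul_assoc]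
    gcongr

lemma integrable_kernel (hn : 1 ≤ n) {m s : ℝ} (hm0 : 0 ≤ m) (hm : m < n)
    (hms : (n : ℝ) < m + 2 + s) (x : Euc n) :
    Integrable (fun y : Euc n => ‖x - y‖ ^ (-m) * jap y ^ (-2 - s)) := by
  have h1 := ((integrable_indicator_iff measurableSet_ball).2
    (integrableOn_norm_sub_rpow hn hm (jap x / 2) x)).const_mul (2 ^ |-2 - s| * jap x ^ (-2 - s))
  have h2 := (integrable_jap (n := n) (r := m - 0 + 2 + s) (by linarith)).const_mul
    (5 ^ m * jap x ^ (-(0:ℝ)))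
  refine (h1.add h2).mono' ?_ (Eventually.of_forall fun y => ?_)
  · refine AEStronglyMeasurable.mul ?_ (continuous_jap_rpow _).aestronglyMeasurable
    exact (Measurable.pow_const (by fun_prop) _).aestronglyMeasurable
  · rw [Real.norm_of_nonneg (mul_nonneg (by positivity) (Real.rpow_nonneg (jap_pos y).le _))]
    exact kernel_pointwise le_rfl hm0 x y

lemma kernel_bound (hn : 1 ≤ n) {m s θ : ℝ} (hθ : 0 ≤ θ) (hθm : θ ≤ m) (hm : m < n)
    (hms : θ < m + 2 + s - n) :
    ∃ C, 0 ≤ C ∧ ∀ x : Euc n, ∫ y, ‖x - y‖ ^ (-m) * jap y ^ (-2 - s) ≤ C * jap x ^ (-θ) := by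
  refine ⟨2 ^ |-2 - s| * (1 / 2) ^ ((n : ℝ) - m) * ballInt n m
    + 5 ^ m * ∫ y : Euc n, jap y ^ (-(m - θ + 2 + s)), ?_, fun x => ?_⟩
  · have := ballInt_nonneg (n := n) m
    have : 0 ≤ ∫ y : Euc n, jap y ^ (-(m - θ + 2 + s)) :=
      integral_nonneg fun y => Real.rpow_nonneg (jap_pos y).le _
    positivity
  have hx := jap_pos x
  have h1 := ((integrable_indicator_iff measurableSet_ball).2
    (integrableOn_norm_sub_rpow hn hm (jap x / 2) x)).const_mul (2 ^ |-2 - s| * jap x ^ (-2 - s))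
  have h2 := (integrable_jap (n := n) (r := m - θ + 2 + s) (by linarith)).const_mul
    (5 ^ m * jap x ^ (-θ))
  have h3 := integral_mono (integrable_kernel hn (hθ.trans hθm) hm (by linarith) x) (h1.add h2)
    (fun y => kernel_pointwise hθ hθm x y)
  refine h3.trans ?_
  simp only [Pi.add_apply]
  rw [integral_add h1 h2, integral_const_mul, integral_const_mul,
    integral_indicator measurableSet_ball, setIntegral_ball_norm_sub_rpow (by positivity), add_mul]
  have h4 : jap x ^ (-2 - s) * (jap x / 2) ^ ((n : ℝ) - m) ≤
      (1 / 2) ^ ((n : ℝ) - m) * jap x ^ (-θ) := by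
    rw [div_eq_mul_one_div, Real.mul_rpow hx.le (by norm_num), ← mul_assoc, ← Real.rpow_add hx,
      mul_comm]
    gcongr
    · exact one_le_jap x
    · linarith
  have h5 := ballInt_nonneg (n := n) m
  have h6 : 2 ^ |-2 - s| * jap x ^ (-2 - s) * ((jap x / 2) ^ ((n : ℝ) - m) * ballInt n m) ≤
      2 ^ |-2 - s| * (1 / 2) ^ ((n : ℝ) - m) * ballInt n m * jap x ^ (-θ) := by
    calc _ = 2 ^ |-2 - s| * ballInt n m * (jap x ^ (-2 - s) * (jap x / 2) ^ ((n : ℝ) - m)) := by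
          ring
      _ ≤ 2 ^ |-2 - s| * ballInt n m * ((1 / 2) ^ ((n : ℝ) - m) * jap x ^ (-θ)) := by gcongr
      _ = _ := by ring
  linarith

/-! ### The Newtonian kernel and its regularizations -/

-- Shortcut instances: nested spaces of continuous linear maps are slow to resolve otherwise.
instance instNACGDual : NormedAddCommGroup (Euc n →L[ℝ] ℝ) := inferInstance
instance instNSDual : NormedSpace ℝ (Euc n →L[ℝ] ℝ) := inferInstance
instance instNACGBil : NormedAddCommGroup (Euc n →L[ℝ] Euc n →L[ℝ] ℝ) := inferInstance
instance instNSBil : NormedSpace ℝ (Euc n →L[ℝ] Euc n →L[ℝ] ℝ) := inferInstance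

/-- The Euclidean inner product as a bilinear map, with the real (non-conjugate) typing. -/
def ip : Euc n →L[ℝ] Euc n →L[ℝ] ℝ := innerSL ℝ

@[simp] lemma ip_apply (x y : Euc n) : ip x y = inner ℝ x y := rfl

lemma norm_ip (x : Euc n) : ‖ip x‖ = ‖x‖ := innerSL_apply_norm ℝ x

lemma norm_ip_le : ‖(ip : Euc n →L[ℝ] Euc n →L[ℝ] ℝ)‖ ≤ 1 := norm_innerSL_le ℝ

/-- The regularized Newtonian kernel `(|x|² + e)^{(2-n)/2}`; the case `e = 0` is the (unnormalized)
Newtonian kernel itself, with the junk value `0` at the origin. -/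
def Gk (e : ℝ) (x : Euc n) : ℝ := (‖x‖ ^ 2 + e) ^ ((2 - (n : ℝ)) / 2)

/-- The gradient of `Gk e`. -/
def DGk (e : ℝ) (x : Euc n) : Euc n →L[ℝ] ℝ :=
  ((2 - (n : ℝ)) * (‖x‖ ^ 2 + e) ^ (-(n : ℝ) / 2)) • ip x

/-- The Hessian of `Gk e`. -/
def D2Gk (e : ℝ) (x : Euc n) : Euc n →L[ℝ] Euc n →L[ℝ] ℝ :=
  ((2 - (n : ℝ)) * (‖x‖ ^ 2 + e) ^ (-(n : ℝ) / 2)) • ip +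
  ((2 - (n : ℝ)) * (-(n : ℝ) * (‖x‖ ^ 2 + e) ^ (-(n : ℝ) / 2 - 1))) •
    (ip x).smulRight (ip x)

lemma hasFDerivAt_pow_aux (e a : ℝ) {x : Euc n} (h : 0 < ‖x‖ ^ 2 + e) :
    HasFDerivAt (fun z : Euc n => (‖z‖ ^ 2 + e) ^ a)
      ((2 * a * (‖x‖ ^ 2 + e) ^ (a - 1)) • ip x) x := by
  have h1 : HasFDerivAt (fun z : Euc n => ‖z‖ ^ 2 + e) ((2 : ℝ) • ip x) x := by
    refine (((hasStrictFDerivAt_norm_sq x).hasFDerivAt).add_const e).congr_fderiv ?_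
    ext v
    simp [two_smul]
  have h2 := h1.rpow_const (p := a) (Or.inl h.ne')
  refine h2.congr_fderiv ?_
  ext v
  simp
  ring

lemma hasFDerivAt_Gk (e : ℝ) {x : Euc n} (h : 0 < ‖x‖ ^ 2 + e) :
    HasFDerivAt (Gk e) (DGk e x) x := by
  have := hasFDerivAt_pow_aux e ((2 - (n : ℝ)) / 2) h
  refine this.congr_fderiv ?_
  unfold DGk
  congr 2
  · ring
  · congr 1; ring

lemma hasFDerivAt_DGk (e : ℝ) {x : Euc n} (h : 0 < ‖x‖ ^ 2 + e) :
    HasFDerivAt (DGk e) (D2Gk e x) x := by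
  have h1 := (hasFDerivAt_pow_aux e (-(n : ℝ) / 2) h).const_mul (2 - (n : ℝ))
  have h2 := h1.smul ip.hasFDerivAt
  refine h2.congr_fderiv ?_
  ext v w
  simp [D2Gk]
  ring

lemma trace_D2Gk (e : ℝ) {x : Euc n} (h : 0 < ‖x‖ ^ 2 + e) :
    ∑ i, D2Gk e x (EuclideanSpace.single i 1) (EuclideanSpace.single i 1) =
      -((n : ℝ) * ((n : ℝ) - 2)) * (e * (‖x‖ ^ 2 + e) ^ (-(n : ℝ) / 2 - 1)) := by
  have h1 : (‖x‖ ^ 2 + e) ^ (-(n : ℝ) / 2) = (‖x‖ ^ 2 + e) ^ (-(n : ℝ) / 2 - 1) * (‖x‖ ^ 2 + e) := by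
    rw [Real.rpow_sub_one h.ne']; field_simp
  have h2 : ∑ i, x i ^ 2 = ‖x‖ ^ 2 := by
    rw [EuclideanSpace.norm_sq_eq]; simp
  have h3 : ∀ i : Fin n, D2Gk e x (EuclideanSpace.single i 1) (EuclideanSpace.single i 1) =
      ((2 - (n : ℝ)) * (‖x‖ ^ 2 + e) ^ (-(n : ℝ) / 2)) +
      ((2 - (n : ℝ)) * (-(n : ℝ) * (‖x‖ ^ 2 + e) ^ (-(n : ℝ) / 2 - 1))) * x i ^ 2 := by
    intro i
    have e1 : inner ℝ x (EuclideanSpace.single i (1 : ℝ)) = x i := by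
      simp [EuclideanSpace.inner_single_right]
    have e2 : inner ℝ (EuclideanSpace.single i (1 : ℝ)) (EuclideanSpace.single i (1 : ℝ)) = (1 : ℝ) := by
      simp
    simp only [D2Gk, add_apply, smul_apply,
      ContinuousLinearMap.smulRight_apply, ip_apply, e1, e2, smul_eq_mul]
    ring
  rw [Finset.sum_congr rfl fun i _ => h3 i, Finset.sum_add_distrib, ← Finset.mul_sum _ (fun i => x i ^ 2), h2, h1]
  simp
  ring

lemma continuous_Gk {e : ℝ} (he : 0 < e) : Continuous (Gk e : Euc n → ℝ) :=
  continuous_iff_continuousAt.2 fun x => (hasFDerivAt_Gk e (by positivity)).continuousAt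

lemma continuous_DGk {e : ℝ} (he : 0 < e) : Continuous (DGk e : Euc n → _) :=
  continuous_iff_continuousAt.2 fun x => (hasFDerivAt_DGk e (by positivity)).continuousAt

lemma continuous_D2Gk {e : ℝ} (he : 0 < e) : Continuous (D2Gk e : Euc n → _) := by
  have h : ∀ a : ℝ, Continuous fun x : Euc n => (‖x‖ ^ 2 + e) ^ a := fun a =>
    Continuous.rpow_const (by fun_prop) fun x => Or.inl (by positivity)
  have h1 := h (-(n : ℝ) / 2)
  have h2 := h (-(n : ℝ) / 2 - 1)
  unfold D2Gk
  have h3 : Continuous fun x : Euc n => (ip x).smulRight (ip x) :=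
    ((ContinuousLinearMap.smulRightL ℝ (Euc n) (Euc n →L[ℝ] ℝ)).continuous.comp
      ip.continuous).clm_apply ip.continuous
  exact ((h1.const_mul _).smul continuous_const).add
    (((h2.const_mul _).const_mul _).smul h3)

lemma Gk_nonneg {e : ℝ} (he : 0 ≤ e) (x : Euc n) : 0 ≤ Gk e x := by
  unfold Gk; positivity

lemma measurable_Gk (e : ℝ) : Measurable (Gk e : Euc n → ℝ) := by
  unfold Gk
  exact Measurable.pow_const (by fun_prop) _

lemma measurable_coef (e a : ℝ) : Measurable fun x : Euc n => (‖x‖ ^ 2 + e) ^ a :=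
  Measurable.pow_const (by fun_prop) _

lemma aesm_DGk (e : ℝ) : AEStronglyMeasurable (DGk e : Euc n → _) volume := by
  have h1 : AEStronglyMeasurable (fun x : Euc n => ip x) volume :=
    ip.continuous.aestronglyMeasurable
  have h2 : AEStronglyMeasurable
      (fun x : Euc n => (2 - (n : ℝ)) * (‖x‖ ^ 2 + e) ^ (-(n : ℝ) / 2)) volume :=
    ((measurable_coef e _).const_mul _).aestronglyMeasurable
  exact h2.smul h1

lemma norm_sq_rpow (x : Euc n) (a : ℝ) : (‖x‖ ^ 2) ^ a = ‖x‖ ^ (2 * a) := by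
  rw [← Real.rpow_natCast, ← Real.rpow_mul (norm_nonneg x)]; norm_num

lemma coef_le {e a : ℝ} (he : 0 ≤ e) (ha : 0 ≤ a) {x : Euc n} (hx : x ≠ 0) :
    (‖x‖ ^ 2 + e) ^ (-a / 2) ≤ ‖x‖ ^ (-a) := by
  have hx' : 0 < ‖x‖ := norm_pos_iff.2 hx
  calc (‖x‖ ^ 2 + e) ^ (-a / 2) ≤ (‖x‖ ^ 2) ^ (-a / 2) :=
        Real.rpow_le_rpow_of_nonpos (by positivity) (by linarith) (by linarith)
    _ = ‖x‖ ^ (-a) := by rw [norm_sq_rpow]; congr 1; ring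

lemma coef_le_jap {e a : ℝ} (he : 0 < e) (he1 : e ≤ 1) (ha : 0 ≤ a) (x : Euc n) :
    (‖x‖ ^ 2 + e) ^ (-a / 2) ≤ e ^ (-a / 2) * jap x ^ (-a) := by
  have h1 : e * jap x ^ 2 ≤ ‖x‖ ^ 2 + e := by
    rw [jap_sq]; nlinarith [sq_nonneg ‖x‖]
  have hj := jap_pos x
  calc (‖x‖ ^ 2 + e) ^ (-a / 2) ≤ (e * jap x ^ 2) ^ (-a / 2) :=
        Real.rpow_le_rpow_of_nonpos (by positivity) h1 (by linarith)
    _ = e ^ (-a / 2) * jap x ^ (-a) := by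
        rw [Real.mul_rpow he.le (by positivity), ← Real.rpow_natCast, ← Real.rpow_mul hj.le]
        congr 2; push_cast; ring

lemma Gk_le (hn : 3 ≤ n) {e : ℝ} (he : 0 ≤ e) {x : Euc n} (hx : x ≠ 0) :
    Gk e x ≤ ‖x‖ ^ (-((n : ℝ) - 2)) := by
  have hn' : (3 : ℝ) ≤ n := by exact_mod_cast hn
  have := coef_le he (a := (n : ℝ) - 2) (by linarith) hx
  unfold Gk
  convert this using 2
  ring

lemma Gk_le_jap (hn : 3 ≤ n) {e : ℝ} (he : 0 < e) (he1 : e ≤ 1) :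
    ∃ C, ∀ x : Euc n, ‖Gk e x‖ ≤ C * jap x ^ (2 - (n : ℝ)) := by
  have hn' : (3 : ℝ) ≤ n := by exact_mod_cast hn
  refine ⟨e ^ (-((n : ℝ) - 2) / 2), fun x => ?_⟩
  have := coef_le_jap he he1 (a := (n : ℝ) - 2) (by linarith) x
  rw [Real.norm_of_nonneg (Gk_nonneg he.le x)]
  unfold Gk
  convert this using 2 <;> ring_nf

lemma norm_DGk (hn : 3 ≤ n) {e : ℝ} (he : 0 ≤ e) (x : Euc n) :
    ‖DGk e x‖ = ((n : ℝ) - 2) * (‖x‖ ^ 2 + e) ^ (-(n : ℝ) / 2) * ‖x‖ := by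
  have hn' : (3 : ℝ) ≤ n := by exact_mod_cast hn
  unfold DGk
  rw [norm_smul, norm_ip, norm_mul, Real.norm_of_nonpos (by linarith),
    Real.norm_of_nonneg (by positivity)]
  ring

lemma norm_DGk_le (hn : 3 ≤ n) {e : ℝ} (he : 0 ≤ e) (x : Euc n) :
    ‖DGk e x‖ ≤ ((n : ℝ) - 2) * ‖x‖ ^ (-((n : ℝ) - 1)) := by
  have hn' : (3 : ℝ) ≤ n := by exact_mod_cast hn
  rw [norm_DGk hn he, mul_assoc]
  refine mul_le_mul_of_nonneg_left ?_ (by linarith)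
  rcases eq_or_ne x 0 with rfl | hx
  · simp; positivity
  have hx' : 0 < ‖x‖ := norm_pos_iff.2 hx
  calc (‖x‖ ^ 2 + e) ^ (-(n : ℝ) / 2) * ‖x‖ ≤ ‖x‖ ^ (-(n : ℝ)) * ‖x‖ := by
        gcongr; exact coef_le he (by positivity) hx
    _ = _ := by
        rw [← Real.rpow_add_one hx'.ne']; congr 1; ring

lemma norm_DGk_le_jap (hn : 3 ≤ n) {e : ℝ} (he : 0 < e) (he1 : e ≤ 1) :
    ∃ C, ∀ x : Euc n, ‖DGk e x‖ ≤ C * jap x ^ (2 - (n : ℝ)) := by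
  have hn' : (3 : ℝ) ≤ n := by exact_mod_cast hn
  refine ⟨((n : ℝ) - 2) * e ^ (-(n : ℝ) / 2), fun x => ?_⟩
  have hj := jap_pos x
  rw [norm_DGk hn he.le, mul_assoc, mul_assoc]
  refine mul_le_mul_of_nonneg_left ?_ (by linarith)
  calc (‖x‖ ^ 2 + e) ^ (-(n : ℝ) / 2) * ‖x‖
      ≤ (e ^ (-(n : ℝ) / 2) * jap x ^ (-(n : ℝ))) * jap x := by
        gcongr
        · exact coef_le_jap he he1 (by positivity) x
        · exact norm_le_jap x
    _ = e ^ (-(n : ℝ) / 2) * jap x ^ (-(n : ℝ) + 1) := by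
        rw [mul_assoc, Real.rpow_add_one hj.ne']
    _ ≤ _ := by
        gcongr
        · exact one_le_jap x
        · linarith

lemma norm_D2Gk_le (hn : 3 ≤ n) {e : ℝ} {x : Euc n} (h : 0 < ‖x‖ ^ 2 + e) (he : 0 ≤ e) :
    ‖D2Gk e x‖ ≤ ((n : ℝ) - 2) * (n + 1) * (‖x‖ ^ 2 + e) ^ (-(n : ℝ) / 2) := by
  have hn' : (3 : ℝ) ≤ n := by exact_mod_cast hn
  have h1 : (‖x‖ ^ 2 + e) ^ (-(n : ℝ) / 2) = (‖x‖ ^ 2 + e) ^ (-(n : ℝ) / 2 - 1) * (‖x‖ ^ 2 + e) := by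
    rw [Real.rpow_sub_one h.ne']; field_simp
  have hB : 0 ≤ (‖x‖ ^ 2 + e) ^ (-(n : ℝ) / 2 - 1) := by positivity
  unfold D2Gk
  refine (norm_add_le (E := Euc n →L[ℝ] Euc n →L[ℝ] ℝ) _ _).trans ?_
  rw [norm_smul, norm_smul, ContinuousLinearMap.norm_smulRight_apply, norm_ip,
    norm_mul, norm_mul, norm_mul, norm_neg, Real.norm_of_nonpos (by linarith : 2 - (n : ℝ) ≤ 0),
    Real.norm_of_nonneg (by positivity : 0 ≤ (‖x‖ ^ 2 + e) ^ (-(n : ℝ) / 2)),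
    Real.norm_of_nonneg hB, Real.norm_of_nonneg (by positivity : (0:ℝ) ≤ n)]
  have h2 : ‖(ip : Euc n →L[ℝ] Euc n →L[ℝ] ℝ)‖ ≤ 1 := norm_ip_le
  have h3 : (‖x‖ ^ 2 + e) ^ (-(n : ℝ) / 2 - 1) * (‖x‖ * ‖x‖) ≤ (‖x‖ ^ 2 + e) ^ (-(n : ℝ) / 2) := by
    rw [h1]; gcongr; nlinarith
  have h4 : 0 ≤ (‖x‖ ^ 2 + e) ^ (-(n : ℝ) / 2) := by positivity
  calc _ ≤ -(2 - (n : ℝ)) * (‖x‖ ^ 2 + e) ^ (-(n : ℝ) / 2) * 1 +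
      -(2 - (n : ℝ)) * n * ((‖x‖ ^ 2 + e) ^ (-(n : ℝ) / 2 - 1) * (‖x‖ * ‖x‖)) := by
        refine add_le_add (mul_le_mul_of_nonneg_left h2 (mul_nonneg (by linarith) h4)) (le_of_eq ?_)
        ring
    _ ≤ -(2 - (n : ℝ)) * (‖x‖ ^ 2 + e) ^ (-(n : ℝ) / 2) * 1 +
      -(2 - (n : ℝ)) * n * (‖x‖ ^ 2 + e) ^ (-(n : ℝ) / 2) := by
        gcongr
        nlinarith
    _ = _ := by ring

lemma norm_D2Gk_le_jap (hn : 3 ≤ n) {e : ℝ} (he : 0 < e) (he1 : e ≤ 1) :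
    ∃ C, ∀ x : Euc n, ‖D2Gk e x‖ ≤ C * jap x ^ (2 - (n : ℝ)) := by
  have hn' : (3 : ℝ) ≤ n := by exact_mod_cast hn
  refine ⟨((n : ℝ) - 2) * (n + 1) * e ^ (-(n : ℝ) / 2), fun x => ?_⟩
  have hA : 0 ≤ ((n : ℝ) - 2) * (n + 1) := mul_nonneg (by linarith) (by linarith)
  refine (norm_D2Gk_le hn (by positivity) he.le).trans ?_
  rw [mul_assoc _ (e ^ _)]
  refine mul_le_mul_of_nonneg_left ?_ hA
  refine (coef_le_jap he he1 (by positivity) x).trans ?_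
  gcongr
  · exact one_le_jap x
  · linarith

lemma norm_DGk_sub (hn : 3 ≤ n) {e : ℝ} (he : 0 ≤ e) (he1 : e ≤ 1) (x : Euc n) :
    ‖DGk e x - DGk 0 x‖ ≤ 2 * ((n : ℝ) - 2) *
        (Metric.ball 0 1).indicator (fun z => ‖z‖ ^ (-((n : ℝ) - 1))) x
      + ((n : ℝ) - 2) * n * 2 ^ ((n : ℝ) + 1) * jap x ^ (-((n : ℝ) + 1)) := by
  have hn' : (3 : ℝ) ≤ n := by exact_mod_cast hn
  have hj := jap_pos x
  by_cases hx : x ∈ Metric.ball (0 : Euc n) 1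
  · rw [Set.indicator_of_mem hx]
    have h1 := norm_DGk_le hn he x
    have h2 := norm_DGk_le hn le_rfl x
    have h3 := norm_sub_le (DGk e x) (DGk 0 x)
    have h4 : 0 ≤ ((n : ℝ) - 2) * n * 2 ^ ((n : ℝ) + 1) * jap x ^ (-((n : ℝ) + 1)) :=
      mul_nonneg (mul_nonneg (mul_nonneg (by linarith) (by linarith)) (by positivity))
        (by positivity)
    linarith
  · rw [Set.indicator_of_notMem hx, mul_zero, zero_add]
    rw [mem_ball_zero_iff, not_lt] at hx
    have hx0 : 0 < ‖x‖ := by linarith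
    have hj2 : jap x ≤ 2 * ‖x‖ := by
      have := jap_sq x
      nlinarith
    have h1 : DGk e x - DGk 0 x = ((2 - (n : ℝ)) * ((‖x‖ ^ 2 + e) ^ (-(n : ℝ) / 2) -
        ‖x‖ ^ (-(n : ℝ)))) • ip x := by
      have h0 : (‖x‖ ^ 2) ^ (-(n : ℝ) / 2) = ‖x‖ ^ (-(n : ℝ)) := by
        rw [norm_sq_rpow]; congr 1; ring
      ext v
      simp only [DGk, add_zero, h0, sub_apply, smul_apply,
        smul_eq_mul]
      ring
    have h2 : (‖x‖ ^ 2 + e) ^ (-(n : ℝ) / 2) ≤ ‖x‖ ^ (-(n : ℝ)) :=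
      coef_le he (by positivity) (norm_pos_iff.1 hx0)
    -- Bernoulli's inequality for the negative exponent `-n/2`
    have h3 : ‖x‖ ^ (-(n : ℝ)) * (1 - n / 2 * (e / ‖x‖ ^ 2)) ≤ (‖x‖ ^ 2 + e) ^ (-(n : ℝ) / 2) := by
      have ht : 0 < 1 + e / ‖x‖ ^ 2 := by positivity
      have h5 : ‖x‖ ^ 2 + e = ‖x‖ ^ 2 * (1 + e / ‖x‖ ^ 2) := by field_simp
      rw [h5, Real.mul_rpow (by positivity) ht.le, norm_sq_rpow,
        show 2 * (-(n : ℝ) / 2) = -n by ring]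
      gcongr
      rw [Real.rpow_def_of_pos ht]
      have h6 := Real.add_one_le_exp (Real.log (1 + e / ‖x‖ ^ 2) * (-(n : ℝ) / 2))
      have h7 := Real.log_le_sub_one_of_pos ht
      nlinarith
    rw [h1, norm_smul, norm_ip, norm_mul, Real.norm_of_nonpos (by linarith),
      Real.norm_of_nonpos (by linarith)]
    have h8 : -((‖x‖ ^ 2 + e) ^ (-(n : ℝ) / 2) - ‖x‖ ^ (-(n : ℝ))) ≤
        ‖x‖ ^ (-(n : ℝ)) * (n / 2 * (e / ‖x‖ ^ 2)) := by linarith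
    have h9 : ‖x‖ ^ (-(n : ℝ)) * (n / 2 * (e / ‖x‖ ^ 2)) * ‖x‖ ≤ n * ‖x‖ ^ (-((n : ℝ) + 1)) := by
      have : ‖x‖ ^ (-((n : ℝ) + 1)) = ‖x‖ ^ (-(n : ℝ)) / ‖x‖ := by
        rw [neg_add, ← sub_eq_add_neg, Real.rpow_sub_one hx0.ne']
      rw [this]
      have h10 : ‖x‖ ^ (-(n : ℝ)) * (n / 2 * (e / ‖x‖ ^ 2)) * ‖x‖ =
          (e / 2) * (n * (‖x‖ ^ (-(n : ℝ)) / ‖x‖)) := by field_simp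
      rw [h10]
      have : 0 ≤ n * (‖x‖ ^ (-(n : ℝ)) / ‖x‖) := by positivity
      nlinarith
    have h11 : ‖x‖ ^ (-((n : ℝ) + 1)) ≤ 2 ^ ((n : ℝ) + 1) * jap x ^ (-((n : ℝ) + 1)) := by
      have h12 : (2 * ‖x‖) ^ (-((n : ℝ) + 1)) ≤ jap x ^ (-((n : ℝ) + 1)) :=
        Real.rpow_le_rpow_of_nonpos hj hj2 (by linarith)
      rw [Real.mul_rpow (by norm_num) hx0.le] at h12
      calc ‖x‖ ^ (-((n : ℝ) + 1)) =
            2 ^ ((n : ℝ) + 1) * (2 ^ (-((n : ℝ) + 1)) * ‖x‖ ^ (-((n : ℝ) + 1))) := by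
            rw [← mul_assoc, ← Real.rpow_add (by norm_num)]; simp
        _ ≤ _ := by gcongr
    have hA : 0 ≤ (n : ℝ) - 2 := by linarith
    calc _ = ((n : ℝ) - 2) * (-((‖x‖ ^ 2 + e) ^ (-(n : ℝ) / 2) - ‖x‖ ^ (-(n : ℝ))) * ‖x‖) := by ring
      _ ≤ ((n : ℝ) - 2) * (‖x‖ ^ (-(n : ℝ)) * (n / 2 * (e / ‖x‖ ^ 2)) * ‖x‖) := by gcongr
      _ ≤ ((n : ℝ) - 2) * (n * ‖x‖ ^ (-((n : ℝ) + 1))) := by gcongr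
      _ ≤ ((n : ℝ) - 2) * (n * (2 ^ ((n : ℝ) + 1) * jap x ^ (-((n : ℝ) + 1)))) := by gcongr
      _ = _ := by ring

/-- The regularization parameters `1/(k+1)`. -/
def ek (k : ℕ) : ℝ := 1 / ((k : ℝ) + 1)

lemma ek_pos (k : ℕ) : 0 < ek k := by unfold ek; positivity

lemma ek_le_one (k : ℕ) : ek k ≤ 1 := by
  unfold ek
  rw [div_le_one (by positivity)]
  linarith [(Nat.cast_nonneg k : (0:ℝ) ≤ k)]

lemma tendsto_ek : Tendsto ek atTop (𝓝 0) := tendsto_one_div_add_atTop_nhds_zero_nat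

lemma tendsto_coef (a : ℝ) {x : Euc n} (hx : x ≠ 0) :
    Tendsto (fun k => (‖x‖ ^ 2 + ek k) ^ a) atTop (𝓝 ((‖x‖ ^ 2 + 0) ^ a)) := by
  have hx' : 0 < ‖x‖ := norm_pos_iff.2 hx
  refine Tendsto.rpow_const ?_ (Or.inl (by positivity))
  exact tendsto_const_nhds.add tendsto_ek

/-- The regularized gradients converge to the gradient of the Newtonian kernel in `L¹`, so that
convolutions with bounded densities converge uniformly. -/
lemma tendsto_integral_DGk_sub (hn : 3 ≤ n) :
    Tendsto (fun k => ∫ x : Euc n, ‖DGk (ek k) x - DGk 0 x‖) atTop (𝓝 0) := by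
  have hn1 : 1 ≤ n := by omega
  suffices h : Tendsto (fun k => ∫ x : Euc n, ‖DGk (ek k) x - DGk 0 x‖) atTop
      (𝓝 (∫ _ : Euc n, (0 : ℝ))) by simpa using h
  refine tendsto_integral_of_dominated_convergence (fun x => 2 * ((n : ℝ) - 2) *
        (Metric.ball 0 1).indicator (fun z => ‖z‖ ^ (-((n : ℝ) - 1))) x
      + ((n : ℝ) - 2) * n * 2 ^ ((n : ℝ) + 1) * jap x ^ (-((n : ℝ) + 1))) ?_ ?_ ?_ ?_
  · exact fun k => ((aesm_DGk _).sub (aesm_DGk _)).norm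
  · refine Integrable.add (Integrable.const_mul ?_ _) (Integrable.const_mul ?_ _)
    · rw [integrable_indicator_iff measurableSet_ball]
      exact integrableOn_norm_rpow hn1 (by linarith) 1
    · exact integrable_jap (by linarith)
  · intro k
    refine Eventually.of_forall fun x => ?_
    rw [norm_norm]
    exact norm_DGk_sub hn (ek_pos k).le (ek_le_one k) x
  · refine Eventually.of_forall fun x => ?_
    have : Tendsto (fun k => DGk (ek k) x) atTop (𝓝 (DGk 0 x)) := by
      rcases eq_or_ne x 0 with rfl | hx
      · simp [DGk]
      · exact ((tendsto_coef _ hx).const_mul _).smul_const _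
    simpa using (this.sub_const (DGk 0 x)).norm

lemma integrable_DGk_sub (hn : 3 ≤ n) (k : ℕ) :
    Integrable (fun x : Euc n => ‖DGk (ek k) x - DGk 0 x‖) := by
  have hn1 : 1 ≤ n := by omega
  have h : Integrable (fun x : Euc n => 2 * ((n : ℝ) - 2) *
        (Metric.ball 0 1).indicator (fun z => ‖z‖ ^ (-((n : ℝ) - 1))) x
      + ((n : ℝ) - 2) * n * 2 ^ ((n : ℝ) + 1) * jap x ^ (-((n : ℝ) + 1))) := by
    refine Integrable.add (Integrable.const_mul ?_ _) (Integrable.const_mul ?_ _)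
    · rw [integrable_indicator_iff measurableSet_ball]
      exact integrableOn_norm_rpow hn1 (by linarith) 1
    · exact integrable_jap (by linarith)
  refine h.mono' ((aesm_DGk _).sub (aesm_DGk _)).norm (Eventually.of_forall fun x => ?_)
  rw [norm_norm]
  exact norm_DGk_sub hn (ek_pos k).le (ek_le_one k) x

/-! ### Convolution with a decaying density -/

/-- The convolution `∫ h(y) k(x - y) dy` of a real density `h` with a vector-valued kernel `k`. -/
def cv {F : Type*} [NormedAddCommGroup F] [NormedSpace ℝ F] (k : Euc n → F) (h : Euc n → ℝ)
    (x : Euc n) : F := ∫ y, h y • k (x - y)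

/-- Continuous densities of size `O(⟨y⟩^{-2-s})`. -/
structure Dec (s : ℝ) (h : Euc n → ℝ) : Prop where
  cont : Continuous h
  bd : ∃ C, 0 ≤ C ∧ ∀ y, |h y| ≤ C * jap y ^ (-2 - s)

lemma aesm_comp_sub {F : Type*} [NormedAddCommGroup F] {k : Euc n → F} (hk : AEStronglyMeasurable k volume)
    (x : Euc n) :
    AEStronglyMeasurable (fun y => k (x - y)) volume :=
  hk.comp_measurePreserving (volume.measurePreserving_sub_left x)

section
variable {F : Type*} [NormedAddCommGroup F] [NormedSpace ℝ F]

lemma aesm_smul_sub {k : Euc n → F} {h : Euc n → ℝ} (hk : AEStronglyMeasurable k volume)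
    (hh : Continuous h) (x : Euc n) :
    AEStronglyMeasurable (fun y => h y • k (x - y)) volume :=
  hh.aestronglyMeasurable.smul (aesm_comp_sub hk x)

/-- Differentiation under the convolution integral, when the kernel is regular at all the points
`x - y` that matter. -/
lemma hasFDerivAt_cv {k : Euc n → F} {k' : Euc n → Euc n →L[ℝ] F} {h : Euc n → ℝ} {s : ℝ}
    (hs : 0 < s) (hh : Dec s h) {x0 : Euc n} {r : ℝ} (hr : 0 < r) {C : ℝ}
    (hk : AEStronglyMeasurable k volume) (hk' : AEStronglyMeasurable k' volume)
    (hd : ∀ x ∈ Metric.ball x0 r, ∀ y, h y ≠ 0 → HasFDerivAt k (k' (x - y)) (x - y) ∧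
      ‖k (x - y)‖ ≤ C * jap y ^ (2 - (n : ℝ)) ∧ ‖k' (x - y)‖ ≤ C * jap y ^ (2 - (n : ℝ))) :
    HasFDerivAt (cv k h) (cv k' h x0) x0 := by
  obtain ⟨A, hA0, hA⟩ := hh.bd
  have hjj : ∀ y : Euc n, jap y ^ (-2 - s) * jap y ^ (2 - (n : ℝ)) = jap y ^ (-((n : ℝ) + s)) := by
    intro y; rw [← Real.rpow_add (jap_pos y)]; congr 1; ring
  have hint : Integrable (fun y : Euc n => A * C * jap y ^ (-((n : ℝ) + s))) :=
    (integrable_jap (by linarith)).const_mul _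
  have key : ∀ y : Euc n, ∀ t : ℝ, 0 ≤ t → (h y ≠ 0 → t ≤ C * jap y ^ (2 - (n : ℝ))) →
      (h y = 0 ∧ |h y| * t = 0) ∨ |h y| * t ≤ A * C * jap y ^ (-((n : ℝ) + s)) := by
    intro y t ht hb
    by_cases h0 : h y = 0
    · left; simp [h0]
    · right
      calc |h y| * t ≤ (A * jap y ^ (-2 - s)) * (C * jap y ^ (2 - (n : ℝ))) := by
            have := jap_pos y
            gcongr
            · exact hA y
            · exact hb h0
        _ = _ := by rw [← hjj]; ring
  have key' : ∀ y : Euc n, ∀ t : ℝ, 0 ≤ t → (h y ≠ 0 → t ≤ C * jap y ^ (2 - (n : ℝ))) →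
      |h y| * t ≤ |A * C * jap y ^ (-((n : ℝ) + s))| := by
    intro y t ht hb
    rcases key y t ht hb with h0 | h1
    · rw [h0.2]; positivity
    · exact h1.trans (le_abs_self _)
  refine hasFDerivAt_integral_of_dominated_of_fderiv_le
    (F := fun x y => h y • k (x - y)) (F' := fun x y => h y • k' (x - y))
    (bound := fun y => |A * C * jap y ^ (-((n : ℝ) + s))|)
    (Metric.ball_mem_nhds x0 hr) (Eventually.of_forall fun x => aesm_smul_sub hk hh.cont x)
    ?_ (aesm_smul_sub hk' hh.cont x0) ?_ hint.abs ?_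
  · refine hint.abs.mono' (aesm_smul_sub hk hh.cont x0) (Eventually.of_forall fun y => ?_)
    rw [norm_smul, Real.norm_eq_abs]
    exact key' y _ (norm_nonneg _) fun h0 => (hd x0 (Metric.mem_ball_self hr) y h0).2.1
  · refine Eventually.of_forall fun y x hx => ?_
    rw [norm_smul, Real.norm_eq_abs]
    exact key' y _ (norm_nonneg _) fun h0 => (hd x hx y h0).2.2
  · refine Eventually.of_forall fun y x hx => ?_
    by_cases h0 : h y = 0
    · simp only [h0, zero_smul]
      exact hasFDerivAt_const 0 x
    · have h1 := (hd x hx y h0).1.comp x ((hasFDerivAt_id x).sub_const y)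
      exact h1.const_smul (h y)

/-- Peetre's inequality turns decay of the kernel into decay in `y`, locally uniformly in `x`. -/
lemma jap_sub_rpow_le {a : ℝ} (ha : a ≤ 0) (x y : Euc n) :
    jap (x - y) ^ a ≤ (2 * jap x) ^ (-a) * jap y ^ a := by
  have hx := jap_pos x
  have hy := jap_pos y
  have hxy := jap_pos (x - y)
  have h := Real.rpow_le_rpow_of_nonpos hy (jap_le_mul x y) ha
  rw [Real.mul_rpow (by positivity) hxy.le] at h
  calc jap (x - y) ^ a = (2 * jap x) ^ (-a) * ((2 * jap x) ^ a * jap (x - y) ^ a) := by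
        rw [← mul_assoc, ← Real.rpow_add (by positivity)]; simp
    _ ≤ _ := by gcongr

lemma hasFDerivAt_cv_of_le_jap (hn : 3 ≤ n) {k : Euc n → F} {k' : Euc n → Euc n →L[ℝ] F}
    {h : Euc n → ℝ} {s : ℝ} (hs : 0 < s) (hh : Dec s h) {C C' : ℝ}
    (hk' : AEStronglyMeasurable k' volume)
    (hd : ∀ z, HasFDerivAt k (k' z) z)
    (hC : ∀ z, ‖k z‖ ≤ C * jap z ^ (2 - (n : ℝ)))
    (hC' : ∀ z, ‖k' z‖ ≤ C' * jap z ^ (2 - (n : ℝ))) (x0 : Euc n) :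
    HasFDerivAt (cv k h) (cv k' h x0) x0 := by
  have hn' : (3 : ℝ) ≤ n := by exact_mod_cast hn
  have hk : Continuous k := continuous_iff_continuousAt.2 fun z => (hd z).continuousAt
  have hB : ∀ x ∈ Metric.ball x0 1, jap x ≤ 2 * jap x0 := by
    intro x hx
    have h1 := jap_le_jap_add x x0
    rw [Metric.mem_ball, dist_eq_norm] at hx
    linarith [one_le_jap x0]
  have hM : ∀ t D : ℝ, ∀ x ∈ Metric.ball x0 1, ∀ y,
      t ≤ D * jap (x - y) ^ (2 - (n : ℝ)) → D ≤ |C| + |C'| →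
      t ≤ (|C| + |C'|) * (4 * jap x0) ^ ((n : ℝ) - 2) * jap y ^ (2 - (n : ℝ)) := by
    intro t D x hx y ht hD
    have hxp := jap_pos x
    have hyp := jap_pos y
    have hxy := jap_pos (x - y)
    have h1 := jap_sub_rpow_le (a := 2 - (n : ℝ)) (by linarith) x y
    have h2 : (2 * jap x) ^ (-(2 - (n : ℝ))) ≤ (4 * jap x0) ^ ((n : ℝ) - 2) := by
      rw [neg_sub]
      refine Real.rpow_le_rpow (by positivity) (by linarith [hB x hx]) (by linarith)
    calc t ≤ (|C| + |C'|) * jap (x - y) ^ (2 - (n : ℝ)) := ht.trans (by gcongr)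
      _ ≤ (|C| + |C'|) * ((4 * jap x0) ^ ((n : ℝ) - 2) * jap y ^ (2 - (n : ℝ))) := by
          gcongr
          exact h1.trans (by gcongr)
      _ = _ := by ring
  refine hasFDerivAt_cv hs hh one_pos hk.aestronglyMeasurable hk'
    (C := (|C| + |C'|) * (4 * jap x0) ^ ((n : ℝ) - 2)) fun x hx y _ => ⟨hd _, ?_, ?_⟩
  · exact hM _ C x hx y (hC _) (by linarith [le_abs_self C, abs_nonneg C'])
  · exact hM _ C' x hx y (hC' _) (by linarith [le_abs_self C', abs_nonneg C])

end

lemma Dec.le_const {s : ℝ} (hs : 0 < s) {h : Euc n → ℝ} (hh : Dec s h) : ∃ C, 0 ≤ C ∧ ∀ y, |h y| ≤ C := by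
  obtain ⟨C, hC0, hC⟩ := hh.bd
  refine ⟨C, hC0, fun y => (hC y).trans ?_⟩
  have : jap y ^ (-2 - s) ≤ jap y ^ (0 : ℝ) := jap_rpow_mono y (by linarith)
  rw [Real.rpow_zero] at this
  nlinarith

lemma integrable_smul_Gk (hn : 3 ≤ n) {s e : ℝ} (hs : 0 < s) (he : 0 ≤ e) {h : Euc n → ℝ}
    (hh : Dec s h) (x : Euc n) : Integrable (fun y => h y • Gk e (x - y)) := by
  have hn' : (3 : ℝ) ≤ n := by exact_mod_cast hn
  obtain ⟨A, hA0, hA⟩ := hh.bd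
  have hI := (integrable_kernel (n := n) (by omega) (m := (n : ℝ) - 2) (s := s) (by linarith)
    (by linarith) (by linarith) x).const_mul A
  refine hI.mono' (aesm_smul_sub (measurable_Gk e).aestronglyMeasurable hh.cont x) ?_
  have : ∀ᵐ y : Euc n, y ≠ x := by
    have : Nonempty (Fin n) := ⟨⟨0, by omega⟩⟩
    exact Measure.ae_ne volume x
  filter_upwards [this] with y hy
  rw [norm_smul, Real.norm_eq_abs, Real.norm_of_nonneg (Gk_nonneg he _)]
  calc |h y| * Gk e (x - y) ≤ (A * jap y ^ (-2 - s)) * ‖x - y‖ ^ (-((n : ℝ) - 2)) := by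
        have := jap_pos y
        gcongr
        · exact Gk_nonneg he _
        · exact hA y
        · exact Gk_le hn he (sub_ne_zero.2 hy.symm)
    _ = _ := by ring

lemma norm_smul_DGk_le (hn : 3 ≤ n) {s e A : ℝ} (he : 0 ≤ e) {h : Euc n → ℝ}
    (hA0 : 0 ≤ A) (hA : ∀ y, |h y| ≤ A * jap y ^ (-2 - s)) (x y : Euc n) :
    ‖h y • DGk e (x - y)‖ ≤
      A * ((n : ℝ) - 2) * (‖x - y‖ ^ (-((n : ℝ) - 1)) * jap y ^ (-2 - s)) := by
  have hn' : (3 : ℝ) ≤ n := by exact_mod_cast hn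
  rw [norm_smul, Real.norm_eq_abs]
  calc |h y| * ‖DGk e (x - y)‖
      ≤ (A * jap y ^ (-2 - s)) * (((n : ℝ) - 2) * ‖x - y‖ ^ (-((n : ℝ) - 1))) := by
        have := jap_pos y
        gcongr
        · exact hA y
        · exact norm_DGk_le hn he _
    _ = _ := by ring

lemma integrable_smul_DGk (hn : 3 ≤ n) {s e : ℝ} (hs : 0 < s) (he : 0 ≤ e) {h : Euc n → ℝ}
    (hh : Dec s h) (x : Euc n) : Integrable (fun y => h y • DGk e (x - y)) := by
  have hn' : (3 : ℝ) ≤ n := by exact_mod_cast hn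
  obtain ⟨A, hA0, hA⟩ := hh.bd
  have hI := (integrable_kernel (n := n) (by omega) (m := (n : ℝ) - 1) (s := s) (by linarith)
    (by linarith) (by linarith) x).const_mul (A * ((n : ℝ) - 2))
  exact hI.mono' (aesm_smul_sub (aesm_DGk e) hh.cont x)
    (Eventually.of_forall fun y => norm_smul_DGk_le hn he hA0 hA x y)

lemma hasFDerivAt_cv_Gk (hn : 3 ≤ n) {s e : ℝ} (hs : 0 < s) (he : 0 < e) (he1 : e ≤ 1)
    {h : Euc n → ℝ} (hh : Dec s h) (x : Euc n) :
    HasFDerivAt (cv (Gk e) h) (cv (DGk e) h x) x := by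
  obtain ⟨C, hC⟩ := Gk_le_jap hn he he1
  obtain ⟨C', hC'⟩ := norm_DGk_le_jap hn he he1
  exact hasFDerivAt_cv_of_le_jap hn hs hh (aesm_DGk e)
    (fun z => hasFDerivAt_Gk e (by positivity)) hC hC' x

lemma hasFDerivAt_cv_DGk (hn : 3 ≤ n) {s e : ℝ} (hs : 0 < s) (he : 0 < e) (he1 : e ≤ 1)
    {h : Euc n → ℝ} (hh : Dec s h) (x : Euc n) :
    HasFDerivAt (cv (DGk e) h) (cv (D2Gk e) h x) x := by
  obtain ⟨C, hC⟩ := norm_DGk_le_jap hn he he1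
  obtain ⟨C', hC'⟩ := norm_D2Gk_le_jap hn he he1
  exact hasFDerivAt_cv_of_le_jap hn hs hh (continuous_D2Gk he).aestronglyMeasurable
    (fun z => hasFDerivAt_DGk e (by positivity)) hC hC' x

/-- `L¹` convergence of the kernels gives uniform convergence of the convolutions. -/
lemma tendstoUniformly_cv_DGk (hn : 3 ≤ n) {s : ℝ} (hs : 0 < s) {h : Euc n → ℝ} (hh : Dec s h) :
    TendstoUniformly (fun k => cv (DGk (ek k)) h) (cv (DGk 0) h) atTop := by
  obtain ⟨A, hA0, hA⟩ := hh.le_const hs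
  have hbd : ∀ k x, dist (cv (DGk 0) h x) (cv (DGk (ek k)) h x) ≤
      A * ∫ z : Euc n, ‖DGk (ek k) z - DGk 0 z‖ := by
    intro k x
    rw [dist_comm, dist_eq_norm, cv, cv,
      ← integral_sub (integrable_smul_DGk hn hs (ek_pos k).le hh x)
        (integrable_smul_DGk hn hs le_rfl hh x),
      ← integral_sub_left_eq_self (fun z : Euc n => ‖DGk (ek k) z - DGk 0 z‖) volume x,
      ← integral_const_mul]
    refine norm_integral_le_of_norm_le
      (((integrable_DGk_sub hn k).comp_sub_left x).const_mul A) (Eventually.of_forall fun y => ?_)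
    rw [← smul_sub, norm_smul]
    exact mul_le_mul_of_nonneg_right (hA y) (norm_nonneg _)
  have hlim : Tendsto (fun k => A * ∫ z : Euc n, ‖DGk (ek k) z - DGk 0 z‖) atTop (𝓝 0) := by
    simpa using (tendsto_integral_DGk_sub hn).const_mul A
  rw [Metric.tendstoUniformly_iff]
  intro ε hε
  filter_upwards [hlim.eventually_lt_const hε] with k hk x
  exact (hbd k x).trans_lt hk

lemma continuous_cv_DGk (hn : 3 ≤ n) {s : ℝ} (hs : 0 < s) {h : Euc n → ℝ} (hh : Dec s h) :
    Continuous (cv (DGk 0) h) :=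
  (tendstoUniformly_cv_DGk hn hs hh).continuous (Frequently.of_forall fun k =>
    continuous_iff_continuousAt.2 fun x =>
      (hasFDerivAt_cv_DGk hn hs (ek_pos k) (ek_le_one k) hh x).continuousAt)

/-- The Newtonian potential of a decaying density is differentiable, with the expected gradient. -/
lemma hasFDerivAt_P (hn : 3 ≤ n) {s : ℝ} (hs : 0 < s) {h : Euc n → ℝ} (hh : Dec s h) (x : Euc n) :
    HasFDerivAt (cv (Gk 0) h) (cv (DGk 0) h x) x := by
  refine hasFDerivAt_of_tendstoUniformly (tendstoUniformly_cv_DGk hn hs hh)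
    (fun k x => hasFDerivAt_cv_Gk hn hs (ek_pos k) (ek_le_one k) hh x) (fun x => ?_) x
  have hn' : (3 : ℝ) ≤ n := by exact_mod_cast hn
  obtain ⟨A, hA0, hA⟩ := hh.bd
  have hne : ∀ᵐ y : Euc n, y ≠ x := by
    have : Nonempty (Fin n) := ⟨⟨0, by omega⟩⟩
    exact Measure.ae_ne volume x
  have hI := (integrable_kernel (n := n) (by omega) (m := (n : ℝ) - 2) (s := s) (by linarith)
    (by linarith) (by linarith) x).const_mul A
  refine tendsto_integral_of_dominated_convergence
    (fun y => A * (‖x - y‖ ^ (-((n : ℝ) - 2)) * jap y ^ (-2 - s)))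
    (fun k => aesm_smul_sub (measurable_Gk _).aestronglyMeasurable hh.cont x) hI (fun k => ?_) ?_
  · filter_upwards [hne] with y hy
    rw [norm_smul, Real.norm_eq_abs, Real.norm_of_nonneg (Gk_nonneg (ek_pos k).le _)]
    calc |h y| * Gk (ek k) (x - y) ≤ (A * jap y ^ (-2 - s)) * ‖x - y‖ ^ (-((n : ℝ) - 2)) := by
          have := jap_pos y
          gcongr
          · exact Gk_nonneg (ek_pos k).le _
          · exact hA y
          · exact Gk_le hn (ek_pos k).le (sub_ne_zero.2 hy.symm)
      _ = _ := by ring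
  · filter_upwards [hne] with y hy
    exact (tendsto_coef _ (sub_ne_zero.2 hy.symm)).const_smul (h y)

lemma contDiff_one_P (hn : 3 ≤ n) {s : ℝ} (hs : 0 < s) {h : Euc n → ℝ} (hh : Dec s h) :
    ContDiff ℝ 1 (cv (Gk 0) h) :=
  contDiff_one_iff_hasFDerivAt.2 ⟨_, continuous_cv_DGk hn hs hh, hasFDerivAt_P hn hs hh⟩

lemma fderiv_P (hn : 3 ≤ n) {s : ℝ} (hs : 0 < s) {h : Euc n → ℝ} (hh : Dec s h) :
    fderiv ℝ (cv (Gk 0) h) = cv (DGk 0) h :=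
  funext fun x => (hasFDerivAt_P hn hs hh x).fderiv

lemma abs_P_le (hn : 3 ≤ n) {s : ℝ} {h : Euc n → ℝ} {A : ℝ} (hA0 : 0 ≤ A) (hs : 0 < s)
    (hA : ∀ y, |h y| ≤ A * jap y ^ (-2 - s)) (x : Euc n) :
    |cv (Gk 0) h x| ≤ A * ∫ y, ‖x - y‖ ^ (-((n : ℝ) - 2)) * jap y ^ (-2 - s) := by
  have hn' : (3 : ℝ) ≤ n := by exact_mod_cast hn
  rw [← Real.norm_eq_abs, cv, ← integral_const_mul]
  have hne : ∀ᵐ y : Euc n, y ≠ x := by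
    have : Nonempty (Fin n) := ⟨⟨0, by omega⟩⟩
    exact Measure.ae_ne volume x
  refine norm_integral_le_of_norm_le ((integrable_kernel (n := n) (by omega) (m := (n : ℝ) - 2)
    (s := s) (by linarith) (by linarith) (by linarith) x).const_mul A) ?_
  filter_upwards [hne] with y hy
  rw [norm_smul, Real.norm_eq_abs, Real.norm_of_nonneg (Gk_nonneg le_rfl _)]
  calc |h y| * Gk 0 (x - y) ≤ (A * jap y ^ (-2 - s)) * ‖x - y‖ ^ (-((n : ℝ) - 2)) := by
        have := jap_pos y
        gcongr
        · exact Gk_nonneg le_rfl _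
        · exact hA y
        · exact Gk_le hn le_rfl (sub_ne_zero.2 hy.symm)
    _ = _ := by ring

lemma norm_DP_le (hn : 3 ≤ n) {s : ℝ} {h : Euc n → ℝ} {A : ℝ} (hA0 : 0 ≤ A) (hs : 0 < s)
    (hA : ∀ y, |h y| ≤ A * jap y ^ (-2 - s)) (x : Euc n) :
    ‖cv (DGk 0) h x‖ ≤
      A * ((n : ℝ) - 2) * ∫ y, ‖x - y‖ ^ (-((n : ℝ) - 1)) * jap y ^ (-2 - s) := by
  have hn' : (3 : ℝ) ≤ n := by exact_mod_cast hn
  rw [cv, ← integral_const_mul]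
  exact norm_integral_le_of_norm_le ((integrable_kernel (n := n) (by omega) (m := (n : ℝ) - 1)
    (s := s) (by linarith) (by linarith) (by linarith) x).const_mul _)
    (Eventually.of_forall fun y => norm_smul_DGk_le hn le_rfl hA0 hA x y)

/-! ### Smoothness of potentials -/

/-- Homogeneous kernels of degree `d`, smooth away from the origin. -/
structure Hom {F : Type*} [NormedAddCommGroup F] [NormedSpace ℝ F] (d : ℝ) (k : Euc n → F) :
    Prop where
  smooth : ContDiffOn ℝ (⊤ : ℕ∞) k {0}ᶜ
  hom : ∀ c : ℝ, 0 < c → ∀ x, x ≠ 0 → k (c • x) = c ^ d • k x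

lemma aesm_of_continuousOn_compl {F : Type*} [NormedAddCommGroup F] (hn : 1 ≤ n)
    {k : Euc n → F} (hk : ContinuousOn k {0}ᶜ) :
    AEStronglyMeasurable k volume := by
  have h := hk.aestronglyMeasurable (μ := volume) (measurableSet_singleton (0 : Euc n)).compl
  have : Nonempty (Fin n) := ⟨⟨0, by omega⟩⟩
  rwa [Measure.restrict_eq_self_of_ae_mem] at h
  exact Measure.ae_ne volume 0

section
variable {F : Type*} [NormedAddCommGroup F] [NormedSpace ℝ F]

lemma Hom.differentiableAt {d : ℝ} {k : Euc n → F} (hk : Hom d k) {x : Euc n} (hx : x ≠ 0) :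
    DifferentiableAt ℝ k x :=
  ((hk.smooth.contDiffAt (isOpen_compl_singleton.mem_nhds hx)).differentiableAt (by simp))

lemma Hom.fder {d : ℝ} {k : Euc n → F} (hk : Hom d k) : Hom (d - 1) (fderiv ℝ k) := by
  refine ⟨?_, fun c hc x hx => ?_⟩
  · exact hk.smooth.fderiv_of_isOpen isOpen_compl_singleton (by simp)
  · have hcx : c • x ≠ 0 := smul_ne_zero hc.ne' hx
    have h1 : HasFDerivAt (fun y => k (c • y)) ((fderiv ℝ k (c • x)).comp (c • .id ℝ (Euc n))) x :=
      (hk.differentiableAt hcx).hasFDerivAt.comp x ((hasFDerivAt_id x).const_smul c)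
    have h2 : HasFDerivAt (fun y => k (c • y)) (c ^ d • fderiv ℝ k x) x := by
      refine ((hk.differentiableAt hx).hasFDerivAt.const_smul (c ^ d)).congr_of_eventuallyEq ?_
      filter_upwards [isOpen_compl_singleton.mem_nhds hx] with y hy
      exact hk.hom c hc y hy
    have h3 := h1.unique h2
    ext v
    have h4 := congrArg (fun L => L v) h3
    simp only [ContinuousLinearMap.comp_apply, smul_apply, ContinuousLinearMap.id_apply,
      map_smul] at h4 ⊢
    rw [Real.rpow_sub_one hc.ne', div_eq_inv_mul, mul_smul, ← h4, smul_smul,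
      inv_mul_cancel₀ hc.ne', one_smul]

lemma Hom.bound {d : ℝ} {k : Euc n → F} (hk : Hom d k) :
    ∃ C, 0 ≤ C ∧ ∀ x, x ≠ 0 → ‖k x‖ ≤ C * ‖x‖ ^ d := by
  have hc : ContinuousOn k (Metric.sphere 0 1) :=
    hk.smooth.continuousOn.mono fun x hx => by
      simpa using ne_of_mem_of_not_mem hx (by simp)
  obtain ⟨C, hC⟩ := (isCompact_sphere (0 : Euc n) 1).exists_bound_of_continuousOn hc
  refine ⟨|C|, abs_nonneg C, fun x hx => ?_⟩
  have hx' : 0 < ‖x‖ := norm_pos_iff.2 hx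
  have hu : ‖(‖x‖⁻¹ • x)‖ = 1 := by
    rw [norm_smul, norm_inv, norm_norm, inv_mul_cancel₀ hx'.ne']
  have h1 := hk.hom ‖x‖ hx' (‖x‖⁻¹ • x) (smul_ne_zero (inv_ne_zero hx'.ne') hx)
  rw [smul_smul, mul_inv_cancel₀ hx'.ne', one_smul] at h1
  rw [h1, norm_smul, Real.norm_of_nonneg (by positivity), mul_comm]
  gcongr
  exact (hC _ (by simpa using hu)).trans (le_abs_self C)

/-- If the density vanishes near `x0`, a kernel which is only singular at the origin may be
differentiated under the integral. -/
lemma hasFDerivAt_cv_far (hn : 3 ≤ n) {k : Euc n → F} {k' : Euc n → Euc n →L[ℝ] F}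
    {h : Euc n → ℝ} {s : ℝ} (hs : 0 < s) (hh : Dec s h) {C d d' : ℝ} (hC : 0 ≤ C)
    (hd0 : d ≤ 2 - (n : ℝ)) (hd0' : d' ≤ 2 - (n : ℝ))
    (hk : AEStronglyMeasurable k volume) (hk' : AEStronglyMeasurable k' volume)
    (hd : ∀ z, z ≠ 0 → HasFDerivAt k (k' z) z)
    (hC1 : ∀ z, z ≠ 0 → ‖k z‖ ≤ C * ‖z‖ ^ d) (hC2 : ∀ z, z ≠ 0 → ‖k' z‖ ≤ C * ‖z‖ ^ d')
    {x0 : Euc n} {r : ℝ} (h0 : ∀ y ∈ Metric.ball x0 (2 * r), h y = 0)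
    {x : Euc n} (hx : x ∈ Metric.ball x0 r) :
    HasFDerivAt (cv k h) (cv k' h x) x := by
  have hn' : (3 : ℝ) ≤ n := by exact_mod_cast hn
  have hr : 0 < r := dist_nonneg.trans_lt hx
  set B := jap x0 + r with hB
  have hBp : 0 < B := by have := jap_pos x0; positivity
  -- on the support of `h` the distance to `x` is at least `r` and at least comparable to `⟨y⟩`
  have hsep : ∀ z ∈ Metric.ball x0 r, ∀ y, h y ≠ 0 →
      r ≤ ‖z - y‖ ∧ jap y ≤ (B / r + 1) * ‖z - y‖ := by
    intro z hz y hy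
    have h1 : 2 * r ≤ ‖x0 - y‖ := by
      by_contra hlt
      exact hy (h0 y (by rw [Metric.mem_ball, dist_comm, dist_eq_norm]; linarith))
    have h2 : ‖x0 - y‖ ≤ ‖x0 - z‖ + ‖z - y‖ := norm_sub_le_norm_sub_add_norm_sub _ _ _
    rw [Metric.mem_ball, dist_comm, dist_eq_norm] at hz
    have h3 : r ≤ ‖z - y‖ := by linarith
    refine ⟨h3, ?_⟩
    have h4 := jap_le_jap_add y z
    have h5 := jap_le_jap_add z x0
    rw [norm_sub_rev] at h4 h5
    have h6 : B ≤ B / r * ‖z - y‖ := by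
      rw [div_mul_eq_mul_div, le_div_iff₀ hr]; gcongr
    nlinarith
  have hpow : ∀ a : ℝ, a ≤ 2 - (n : ℝ) → ∀ z ∈ Metric.ball x0 r, ∀ y, h y ≠ 0 →
      ‖z - y‖ ^ a ≤ r ^ (a - (2 - (n : ℝ))) * (B / r + 1) ^ (-(2 - (n : ℝ))) *
        jap y ^ (2 - (n : ℝ)) := by
    intro a ha z hz y hy
    obtain ⟨h1, h2⟩ := hsep z hz y hy
    have hzp : 0 < ‖z - y‖ := by linarith
    have hyp := jap_pos y
    have hq : 0 < B / r + 1 := by positivity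
    have h3 : ‖z - y‖ ^ (a - (2 - (n : ℝ))) ≤ r ^ (a - (2 - (n : ℝ))) :=
      Real.rpow_le_rpow_of_nonpos hr h1 (by linarith)
    have h4 : ((B / r + 1) * ‖z - y‖) ^ (2 - (n : ℝ)) ≤ jap y ^ (2 - (n : ℝ)) :=
      Real.rpow_le_rpow_of_nonpos hyp h2 (by linarith)
    rw [Real.mul_rpow hq.le hzp.le] at h4
    have h5 : ‖z - y‖ ^ (2 - (n : ℝ)) ≤ (B / r + 1) ^ (-(2 - (n : ℝ))) * jap y ^ (2 - (n : ℝ)) := by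
      rw [Real.rpow_neg hq.le, ← div_eq_inv_mul, le_div_iff₀ (by positivity), mul_comm]
      exact h4
    calc ‖z - y‖ ^ a = ‖z - y‖ ^ (a - (2 - (n : ℝ))) * ‖z - y‖ ^ (2 - (n : ℝ)) := by
          rw [← Real.rpow_add hzp]; congr 1; ring
      _ ≤ r ^ (a - (2 - (n : ℝ))) * ((B / r + 1) ^ (-(2 - (n : ℝ))) * jap y ^ (2 - (n : ℝ))) := by
          gcongr
      _ = _ := by ring
  set M := (B / r + 1) ^ (-(2 - (n : ℝ))) with hM
  have hMp : 0 ≤ M := by positivity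
  refine hasFDerivAt_cv hs hh (r := r - dist x x0) (by simpa using hx) hk hk'
    (C := C * ((r ^ (d - (2 - (n : ℝ))) + r ^ (d' - (2 - (n : ℝ)))) * M)) fun z hz y hy => ?_
  have hz' : z ∈ Metric.ball x0 r := by
    rw [Metric.mem_ball] at hz ⊢
    linarith [dist_triangle z x x0]
  have hzy : z - y ≠ 0 := norm_pos_iff.1 (hr.trans_le (hsep z hz' y hy).1)
  have hj := Real.rpow_nonneg (jap_pos y).le (2 - (n : ℝ))
  have hra := Real.rpow_nonneg hr.le (d - (2 - (n : ℝ)))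
  have hrb := Real.rpow_nonneg hr.le (d' - (2 - (n : ℝ)))
  refine ⟨hd _ hzy, (hC1 _ hzy).trans ?_, (hC2 _ hzy).trans ?_⟩
  · rw [mul_assoc]
    refine mul_le_mul_of_nonneg_left ((hpow d hd0 z hz' y hy).trans ?_) hC
    refine mul_le_mul_of_nonneg_right (mul_le_mul_of_nonneg_right ?_ hMp) hj
    linarith
  · rw [mul_assoc]
    refine mul_le_mul_of_nonneg_left ((hpow d' hd0' z hz' y hy).trans ?_) hC
    refine mul_le_mul_of_nonneg_right (mul_le_mul_of_nonneg_right ?_ hMp) hj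
    linarith

end

lemma Hom.hasFDerivAt_cv {F : Type*} [NormedAddCommGroup F] [NormedSpace ℝ F] (hn : 3 ≤ n)
    {d : ℝ} (hd : d ≤ 2 - (n : ℝ)) {k : Euc n → F} (hk : Hom d k)
    {h : Euc n → ℝ} {s : ℝ} (hs : 0 < s) (hh : Dec s h) {x0 : Euc n} {r : ℝ}
    (h0 : ∀ y ∈ Metric.ball x0 (2 * r), h y = 0) {x : Euc n} (hx : x ∈ Metric.ball x0 r) :
    HasFDerivAt (cv k h) (cv (fderiv ℝ k) h x) x := by
  obtain ⟨C, hC0, hC⟩ := hk.bound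
  obtain ⟨C', hC0', hC'⟩ := hk.fder.bound
  refine hasFDerivAt_cv_far hn hs hh (C := C + C') (by linarith) hd (by linarith : d - 1 ≤ _)
    (aesm_of_continuousOn_compl (by omega) hk.smooth.continuousOn)
    (aesm_of_continuousOn_compl (by omega) hk.fder.smooth.continuousOn)
    (fun z hz => (hk.differentiableAt hz).hasFDerivAt)
    (fun z hz => (hC z hz).trans ?_) (fun z hz => (hC' z hz).trans ?_) h0 hx
  · gcongr; linarith
  · gcongr; linarith

/-- The potential of a density vanishing near `x0` is smooth near `x0`. -/
lemma Hom.contDiffOn_cv (hn : 3 ≤ n) {h : Euc n → ℝ} {s : ℝ} (hs : 0 < s) (hh : Dec s h)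
    {x0 : Euc n} {r : ℝ} (h0 : ∀ y ∈ Metric.ball x0 (2 * r), h y = 0) (m : ℕ) :
    ∀ {F : Type} [NormedAddCommGroup F] [NormedSpace ℝ F] {d : ℝ} (_ : d ≤ 2 - (n : ℝ))
      {k : Euc n → F} (_ : Hom d k), ContDiffOn ℝ m (cv k h) (Metric.ball x0 r) := by
  induction m with
  | zero =>
    intro F _ _ d hd k hk
    exact contDiffOn_zero.2 fun x hx =>
      (hk.hasFDerivAt_cv hn hd hs hh h0 hx).continuousAt.continuousWithinAt
  | succ m ih =>
    intro F _ _ d hd k hk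
    refine (contDiffOn_succ_iff_hasFDerivWithinAt_of_uniqueDiffOn
      Metric.isOpen_ball.uniqueDiffOn).2 ⟨by simp, cv (fderiv ℝ k) h,
        ih (by linarith : d - 1 ≤ _) hk.fder, fun x hx =>
        (hk.hasFDerivAt_cv hn hd hs hh h0 hx).hasFDerivWithinAt⟩

lemma hom_Gk : Hom (2 - (n : ℝ)) (Gk 0 : Euc n → ℝ) := by
  refine ⟨?_, fun c hc x hx => ?_⟩
  · unfold Gk
    intro x hx
    have hx' : 0 < ‖x‖ := norm_pos_iff.2 hx
    refine ContDiffAt.contDiffWithinAt ?_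
    refine ContDiffAt.rpow_const_of_ne ?_ (by positivity)
    exact (contDiff_norm_sq ℝ).contDiffAt.add contDiffAt_const
  · simp only [Gk, add_zero, norm_sq_rpow]
    rw [norm_smul, Real.norm_of_nonneg hc.le, smul_eq_mul, Real.mul_rpow hc.le (norm_nonneg x)]
    congr 2; ring

lemma locallyIntegrable_DGk (hn : 3 ≤ n) : LocallyIntegrable (DGk 0 : Euc n → _) volume := by
  rw [locallyIntegrable_iff]
  intro K hK
  obtain ⟨R, hR⟩ := hK.isBounded.subset_ball (0 : Euc n)
  refine IntegrableOn.mono_set ?_ hR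
  refine Integrable.mono' ((integrableOn_norm_rpow (n := n) (by omega)
    (m := (n : ℝ) - 1) (by linarith) R).const_mul ((n : ℝ) - 2)) (aesm_DGk 0).restrict ?_
  exact Eventually.of_forall fun z => norm_DGk_le hn le_rfl z

lemma dec_of_hasCompactSupport (s : ℝ) {f : Euc n → ℝ} (hf : Continuous f)
    (hc : HasCompactSupport f) : Dec s f := by
  obtain ⟨C, hC⟩ := (hc.mul_right (f' := fun y => jap y ^ (2 + s))).exists_bound_of_continuous
    (hf.mul (continuous_jap_rpow (2 + s)))
  refine ⟨hf, |C|, abs_nonneg C, fun y => ?_⟩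
  have h1 := (hC y).trans (le_abs_self C)
  have hj := jap_pos y
  rw [Pi.mul_apply, norm_mul, Real.norm_eq_abs, Real.norm_of_nonneg (by positivity)] at h1
  rw [show -2 - s = -(2 + s) by ring, Real.rpow_neg hj.le, ← div_eq_mul_inv,
    le_div_iff₀ (by positivity)]
  exact h1

lemma cv_eq_convolution {F : Type*} [NormedAddCommGroup F] [NormedSpace ℝ F] (k : Euc n → F)
    (h : Euc n → ℝ) : cv k h = convolution h k (ContinuousLinearMap.lsmul ℝ ℝ) volume := by
  funext x
  simp [cv, convolution]

/-- A compactly supported density gains one derivative. -/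
lemma contDiff_P_of_compact (hn : 3 ≤ n) {f : Euc n → ℝ} (hc : HasCompactSupport f) {m : ℕ}
    (hf : ContDiff ℝ m f) : ContDiff ℝ (m + 1) (cv (Gk 0) f) := by
  have hD := dec_of_hasCompactSupport 1 hf.continuous hc
  rw [contDiff_succ_iff_fderiv]
  refine ⟨(contDiff_one_P hn one_pos hD).differentiable (by simp), by simp, ?_⟩
  rw [fderiv_P hn one_pos hD, cv_eq_convolution]
  exact hc.contDiff_convolution_left _ (n := m) (by exact_mod_cast hf) (locallyIntegrable_DGk hn)

lemma Dec.mul_bounded {s : ℝ} {h χ : Euc n → ℝ} (hh : Dec s h) (hχ : Continuous χ) {B : ℝ}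
    (hB : ∀ y, |χ y| ≤ B) : Dec s (fun y => χ y * h y) := by
  obtain ⟨C, hC0, hC⟩ := hh.bd
  have hB0 : 0 ≤ B := (abs_nonneg _).trans (hB 0)
  refine ⟨hχ.mul hh.cont, B * C, by positivity, fun y => ?_⟩
  rw [abs_mul, mul_assoc]
  exact mul_le_mul (hB y) (hC y) (abs_nonneg _) hB0

/-- A smooth cutoff equal to `1` on `ball x0 R` and supported in `closedBall x0 (2R)`. -/
def bmp (x0 : Euc n) {R : ℝ} (hR : 0 < R) : ContDiffBump x0 := ⟨R, 2 * R, hR, by linarith⟩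

lemma P_split (hn : 3 ≤ n) {s : ℝ} (hs : 0 < s) {h : Euc n → ℝ} (hh : Dec s h) {χ : Euc n → ℝ}
    (hχ : Continuous χ) {B : ℝ} (hB : ∀ y, |χ y| ≤ B) :
    cv (Gk 0) h = fun x => cv (Gk 0) (fun y => χ y * h y) x +
      cv (Gk 0) (fun y => (1 - χ y) * h y) x := by
  have h1 := hh.mul_bounded hχ hB
  have h2 : Dec s (fun y => (1 - χ y) * h y) :=
    hh.mul_bounded (continuous_const.sub hχ) (B := 1 + B) fun y =>
      (abs_sub _ _).trans (by simpa using hB y)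
  funext x
  unfold cv
  rw [← integral_add (integrable_smul_Gk hn hs le_rfl h1 x) (integrable_smul_Gk hn hs le_rfl h2 x)]
  congr 1
  funext y
  simp only [smul_eq_mul]
  ring

/-- Newtonian potentials of decaying `C^m` densities are `C^{m+1}`: near a point, split the density
into a compactly supported part and a part vanishing near the point. -/
lemma contDiff_P (hn : 3 ≤ n) {s : ℝ} (hs : 0 < s) {h : Euc n → ℝ} (hh : Dec s h) {m : ℕ}
    (hm : ContDiff ℝ m h) : ContDiff ℝ (m + 1) (cv (Gk 0) h) := by
  rw [contDiff_iff_contDiffAt]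
  intro x0
  set χ := bmp x0 (R := 2) two_pos with hχ
  have hB : ∀ y, |χ y| ≤ 1 := fun y => by rw [abs_of_nonneg χ.nonneg]; exact χ.le_one
  rw [P_split hn hs hh χ.continuous hB]
  have h2 : Dec s (fun y => (1 - χ y) * h y) :=
    hh.mul_bounded (continuous_const.sub χ.continuous) (B := 1 + 1) fun y =>
      (abs_sub _ _).trans (by simpa using hB y)
  refine ContDiffAt.add ?_ ?_
  · refine (contDiff_P_of_compact hn (f := fun y => χ y * h y) χ.hasCompactSupport.mul_right
      (χ.contDiff.mul hm)).contDiffAt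
  · have := Hom.contDiffOn_cv hn hs h2 (x0 := x0) (r := 1) (fun y hy => by
      rw [χ.one_of_mem_closedBall (by rw [mul_one] at hy; exact Metric.ball_subset_closedBall hy)]
      simp) (m + 1) le_rfl hom_Gk
    exact_mod_cast this.contDiffAt (Metric.ball_mem_nhds x0 one_pos)

/-! ### The Poisson equation -/

lemma clm_integral_apply {F : Type*} [NormedAddCommGroup F] [NormedSpace ℝ F]
    {φ : Euc n → Euc n →L[ℝ] F} (hφ : Integrable φ) (v : Euc n) :
    (∫ y, φ y) v = ∫ y, φ y v := ContinuousLinearMap.integral_apply hφ v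

/-- The normalization constant: `-Δ` of the kernel `|x|^{2-n}` is `kap n` times the Dirac mass. -/
def kap (n : ℕ) : ℝ := (n : ℝ) * ((n : ℝ) - 2) * ∫ z : Euc n, jap z ^ (-((n : ℝ) + 2))

lemma kap_pos (hn : 3 ≤ n) : 0 < kap n := by
  have hn' : (3 : ℝ) ≤ n := by exact_mod_cast hn
  have h1 : 0 < ∫ z : Euc n, jap z ^ (-((n : ℝ) + 2)) := by
    refine (integral_pos_iff_support_of_nonneg
      (fun z => Real.rpow_nonneg (jap_pos z).le _) (integrable_jap (by linarith))).2 ?_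
    have : Function.support (fun z : Euc n => jap z ^ (-((n : ℝ) + 2))) = Set.univ := by
      ext z; simp [(Real.rpow_pos_of_pos (jap_pos z) _).ne']
    rw [this]
    exact isOpen_univ.measure_pos volume Set.univ_nonempty
  unfold kap
  have : (0 : ℝ) < n * (n - 2) := mul_pos (by linarith) (by linarith)
  positivity

lemma jap_eq_coef (z : Euc n) :
    (‖z‖ ^ 2 + 1) ^ (-(n : ℝ) / 2 - 1) = jap z ^ (-((n : ℝ) + 2)) := by
  rw [add_comm, ← jap_sq, ← Real.rpow_natCast, ← Real.rpow_mul (jap_pos z).le]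
  congr 1; push_cast; ring

/-- Rescaling an approximate identity to unit width. -/
lemma integral_approx_id {e : ℝ} (he : 0 < e) (f : Euc n → ℝ) (x : Euc n) :
    ∫ y, f y * (e * (‖x - y‖ ^ 2 + e) ^ (-(n : ℝ) / 2 - 1)) =
      ∫ w, f (x - Real.sqrt e • w) * jap w ^ (-((n : ℝ) + 2)) := by
  have hse : 0 < Real.sqrt e := Real.sqrt_pos.2 he
  have h1 := integral_sub_left_eq_self
    (fun y => f y * (e * (‖x - y‖ ^ 2 + e) ^ (-(n : ℝ) / 2 - 1))) volume x
  rw [← h1]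
  simp only [sub_sub_cancel]
  have h2 := Measure.integral_comp_smul_of_nonneg (μ := volume) (fun z : Euc n =>
    f (x - z) * (e * (‖z‖ ^ 2 + e) ^ (-(n : ℝ) / 2 - 1))) (Real.sqrt e) (hR := hse.le)
  rw [finrank_euclideanSpace_fin, smul_eq_mul, ← div_eq_inv_mul,
    eq_div_iff (by positivity)] at h2
  rw [← h2, ← integral_mul_const]
  congr 1
  funext w
  have h3 : ‖Real.sqrt e • w‖ ^ 2 + e = e * (‖w‖ ^ 2 + 1) := by
    rw [norm_smul, mul_pow, Real.norm_of_nonneg hse.le, Real.sq_sqrt he.le]; ring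
  have h4 : Real.sqrt e ^ n = e ^ ((n : ℝ) / 2) := by
    rw [Real.sqrt_eq_rpow, ← Real.rpow_natCast, ← Real.rpow_mul he.le]; congr 1; ring
  rw [h3, Real.mul_rpow he.le (by positivity), jap_eq_coef, h4]
  have h5 : e * e ^ (-(n : ℝ) / 2 - 1) * e ^ ((n : ℝ) / 2) = 1 := by
    have h6 : e * e ^ (-(n : ℝ) / 2 - 1) = e ^ (-(n : ℝ) / 2) := by
      rw [Real.rpow_sub_one he.ne']; field_simp
    rw [h6, ← Real.rpow_add he, neg_div, neg_add_cancel, Real.rpow_zero]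
  linear_combination f (x - Real.sqrt e • w) * jap w ^ (-((n : ℝ) + 2)) * h5

lemma tendsto_approx_id {f : Euc n → ℝ} (hf : Continuous f) {B : ℝ}
    (hB : ∀ y, |f y| ≤ B) (x : Euc n) :
    Tendsto (fun k => ∫ w, f (x - Real.sqrt (ek k) • w) * jap w ^ (-((n : ℝ) + 2))) atTop
      (𝓝 (f x * ∫ w : Euc n, jap w ^ (-((n : ℝ) + 2)))) := by
  rw [← integral_const_mul]
  refine tendsto_integral_of_dominated_convergence (fun w => B * jap w ^ (-((n : ℝ) + 2)))
    (fun k => ?_) ((integrable_jap (by linarith)).const_mul B) (fun k => ?_) ?_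
  · exact (Continuous.mul (by fun_prop) (continuous_jap_rpow _)).aestronglyMeasurable
  · refine Eventually.of_forall fun w => ?_
    rw [norm_mul, Real.norm_eq_abs, Real.norm_of_nonneg (Real.rpow_nonneg (jap_pos w).le _)]
    exact mul_le_mul_of_nonneg_right (hB _) (Real.rpow_nonneg (jap_pos w).le _)
  · refine Eventually.of_forall fun w => ?_
    refine Tendsto.mul_const _ ?_
    have h1 : Tendsto (fun k => x - Real.sqrt (ek k) • w) atTop (𝓝 (x - Real.sqrt 0 • w)) :=
      (((Real.continuous_sqrt.tendsto 0).comp tendsto_ek).smul_const w).const_sub x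
    rw [Real.sqrt_zero, zero_smul, sub_zero] at h1
    exact (hf.tendsto x).comp h1

lemma hasCompactSupport_fderiv_apply {f : Euc n → ℝ} (hc : HasCompactSupport f) (v : Euc n) :
    HasCompactSupport (fun y => fderiv ℝ f y v) := hc.fderiv_apply (𝕜 := ℝ) v

lemma continuous_fderiv_apply' {f : Euc n → ℝ} (hf : ContDiff ℝ 1 f) (v : Euc n) :
    Continuous (fun y => fderiv ℝ f y v) :=
  (hf.continuous_fderiv (by simp)).clm_apply continuous_const

lemma dec_fderiv (s : ℝ) {f : Euc n → ℝ} (hf : ContDiff ℝ 1 f) (hc : HasCompactSupport f)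
    (v : Euc n) : Dec s (fun y => fderiv ℝ f y v) :=
  dec_of_hasCompactSupport s (continuous_fderiv_apply' hf v) (hasCompactSupport_fderiv_apply hc v)

lemma cv_DGk_fderiv_apply (hn : 3 ≤ n) {e : ℝ} (he : 0 < e) {f : Euc n → ℝ}
    (hf : ContDiff ℝ 1 f) (hc : HasCompactSupport f) (x v : Euc n) :
    cv (DGk e) (fun y => fderiv ℝ f y v) x v = ∫ y, f y * D2Gk e (x - y) v v := by
  have hg : ∀ y, HasFDerivAt (fun y => DGk e (x - y) v)
      (-((ContinuousLinearMap.apply ℝ ℝ v).comp (D2Gk e (x - y)))) y := by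
    intro y
    have h1 : HasFDerivAt (fun y => x - y) (-(ContinuousLinearMap.id ℝ (Euc n))) y :=
      (hasFDerivAt_id y).const_sub x
    have h2 := (hasFDerivAt_DGk e (x := x - y) (by positivity)).comp y h1
    have h3 := ((ContinuousLinearMap.apply ℝ ℝ v).hasFDerivAt).comp y h2
    refine h3.congr_fderiv ?_
    ext w
    simp
  have hg' : ∀ y, fderiv ℝ (fun y => DGk e (x - y) v) y v = - D2Gk e (x - y) v v := by
    intro y
    rw [(hg y).fderiv]
    simp
  have hgc : Continuous fun y => DGk e (x - y) v :=
    ((continuous_DGk he).comp (continuous_const.sub continuous_id)).clm_apply continuous_const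
  have hgc' : Continuous fun y => fderiv ℝ (fun y => DGk e (x - y) v) y v := by
    simp only [hg']
    exact (((((continuous_D2Gk he).comp (continuous_const.sub continuous_id)).clm_apply
      continuous_const).clm_apply continuous_const)).neg
  have hIBP := integral_mul_fderiv_eq_neg_fderiv_mul_of_integrable (μ := volume) (f := f)
    (g := fun y => DGk e (x - y) v) (v := v)
    (((continuous_fderiv_apply' hf v).mul hgc).integrable_of_hasCompactSupport
      (hasCompactSupport_fderiv_apply hc v).mul_right)
    ((hf.continuous.mul hgc').integrable_of_hasCompactSupport hc.mul_right)
    ((hf.continuous.mul hgc).integrable_of_hasCompactSupport hc.mul_right)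
    (fun y _ => (hf.differentiable (by simp)) y) (fun y _ => (hg y).differentiableAt)
  rw [cv, clm_integral_apply (integrable_smul_DGk hn one_pos he.le (dec_fderiv 1 hf hc v) x)]
  simp only [hg', mul_neg, integral_neg, neg_inj] at hIBP
  rw [hIBP]
  rfl

/-- The fundamental solution property, for compactly supported `C¹` densities. -/
lemma sum_cv_DGk_fderiv (hn : 3 ≤ n) {f : Euc n → ℝ} (hf : ContDiff ℝ 1 f)
    (hc : HasCompactSupport f) (x : Euc n) :
    ∑ i, cv (DGk 0) (fun y => fderiv ℝ f y (EuclideanSpace.single i 1)) x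
      (EuclideanSpace.single i 1) = -kap n * f x := by
  have hn' : (3 : ℝ) ≤ n := by exact_mod_cast hn
  have hlim : Tendsto (fun k => ∑ i, cv (DGk (ek k))
      (fun y => fderiv ℝ f y (EuclideanSpace.single i 1)) x (EuclideanSpace.single i 1)) atTop
      (𝓝 (∑ i, cv (DGk 0) (fun y => fderiv ℝ f y (EuclideanSpace.single i 1)) x
        (EuclideanSpace.single i 1))) := by
    refine tendsto_finsetSum _ fun i _ => ?_
    have h1 := (tendstoUniformly_cv_DGk hn one_pos
      (dec_fderiv 1 hf hc (EuclideanSpace.single i 1))).tendsto_at x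
    exact ((ContinuousLinearMap.apply ℝ ℝ (EuclideanSpace.single i (1 : ℝ))).continuous.tendsto
      _).comp h1
  have hval : ∀ k, ∑ i, cv (DGk (ek k))
      (fun y => fderiv ℝ f y (EuclideanSpace.single i 1)) x (EuclideanSpace.single i 1) =
      -((n : ℝ) * ((n : ℝ) - 2)) *
        ∫ w, f (x - Real.sqrt (ek k) • w) * jap w ^ (-((n : ℝ) + 2)) := by
    intro k
    rw [Finset.sum_congr rfl fun i _ => cv_DGk_fderiv_apply hn (ek_pos k) hf hc x _,
      ← integral_finsetSum, ← integral_approx_id (ek_pos k), ← integral_const_mul]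
    · congr 1
      funext y
      have := ek_pos k
      rw [← Finset.mul_sum, trace_D2Gk (ek k) (by positivity)]
      ring
    · intro i _
      refine (hf.continuous.mul ?_).integrable_of_hasCompactSupport hc.mul_right
      exact (((continuous_D2Gk (ek_pos k)).comp (continuous_const.sub continuous_id)).clm_apply
        continuous_const).clm_apply continuous_const
  obtain ⟨B, hB⟩ := hc.exists_bound_of_continuous hf.continuous
  have hlim2 := (tendsto_approx_id hf.continuous hB x).const_mul (-((n : ℝ) * ((n : ℝ) - 2)))
  simp only [hval] at hlim
  rw [tendsto_nhds_unique hlim hlim2, kap]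
  ring

/-- Derivatives of convolutions with compactly supported densities may be put on the density. -/
lemma fderiv_cv_DGk_compact (hn : 3 ≤ n) {f : Euc n → ℝ} (hf : ContDiff ℝ 1 f)
    (hc : HasCompactSupport f) (x v : Euc n) :
    fderiv ℝ (cv (DGk 0) f) x v = cv (DGk 0) (fun y => fderiv ℝ f y v) x := by
  have h := hc.hasFDerivAt_convolution_left (ContinuousLinearMap.lsmul ℝ ℝ) hf
    (locallyIntegrable_DGk hn) x
  rw [← cv_eq_convolution] at h
  rw [h.fderiv, convolution, clm_integral_apply, cv]
  · rfl
  · exact (hc.fderiv (𝕜 := ℝ)).convolutionExists_left _ (hf.continuous_fderiv (by simp))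
      (locallyIntegrable_DGk hn) x

lemma aesm_D2Gk (hn : 3 ≤ n) : AEStronglyMeasurable (D2Gk 0 : Euc n → _) volume := by
  refine aesm_of_continuousOn_compl (by omega) ?_
  have h : ∀ a : ℝ, ContinuousOn (fun x : Euc n => (‖x‖ ^ 2 + 0) ^ a) {0}ᶜ := fun a =>
    ContinuousOn.rpow_const (by fun_prop) fun x hx => Or.inl (by
      have : 0 < ‖x‖ := norm_pos_iff.2 hx
      positivity)
  have h3 : Continuous fun x : Euc n => (ip x).smulRight (ip x) :=
    ((ContinuousLinearMap.smulRightL ℝ (Euc n) (Euc n →L[ℝ] ℝ)).continuous.comp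
      ip.continuous).clm_apply ip.continuous
  exact (((h _).const_mul _).smul continuousOn_const).add
    ((((h _).const_mul _).const_mul _).smul h3.continuousOn)

lemma norm_D2Gk_zero_le (hn : 3 ≤ n) {z : Euc n} (hz : z ≠ 0) :
    ‖D2Gk 0 z‖ ≤ ((n : ℝ) - 2) * (n + 1) * ‖z‖ ^ (-(n : ℝ)) := by
  have hz' : 0 < ‖z‖ := norm_pos_iff.2 hz
  refine (norm_D2Gk_le hn (e := 0) (by positivity) le_rfl).trans (le_of_eq ?_)
  rw [add_zero, norm_sq_rpow]
  congr 2; ring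

/-- For densities vanishing near `x` the Hessian kernel is absolutely integrable. -/
lemma integrable_smul_D2Gk (hn : 3 ≤ n) {s : ℝ} (hs : 0 < s) {h : Euc n → ℝ} (hh : Dec s h)
    {x : Euc n} {r : ℝ} (hr : 0 < r) (h0 : ∀ y ∈ Metric.ball x r, h y = 0) :
    Integrable (fun y => h y • D2Gk 0 (x - y)) := by
  have hn' : (3 : ℝ) ≤ n := by exact_mod_cast hn
  obtain ⟨A, hA0, hA⟩ := hh.bd
  have hI := (integrable_kernel (n := n) (by omega) (m := (n : ℝ) - 1) (s := s) (by linarith)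
    (by linarith) (by linarith) x).const_mul (A * (((n : ℝ) - 2) * (n + 1) * r⁻¹))
  have hcn : 0 ≤ ((n : ℝ) - 2) * (n + 1) := mul_nonneg (by linarith) (by linarith)
  refine hI.mono' (aesm_smul_sub (aesm_D2Gk hn) hh.cont x) (Eventually.of_forall fun y => ?_)
  have hj := jap_pos y
  by_cases hy : y ∈ Metric.ball x r
  · rw [h0 y hy, zero_smul, norm_zero]
    exact mul_nonneg (mul_nonneg hA0 (mul_nonneg hcn (by positivity))) (by positivity)
  · rw [Metric.mem_ball, dist_comm, dist_eq_norm, not_lt] at hy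
    have hp : 0 < ‖x - y‖ := hr.trans_le hy
    rw [norm_smul, Real.norm_eq_abs]
    have h1 : ‖x - y‖ ^ (-(n : ℝ)) ≤ r⁻¹ * ‖x - y‖ ^ (-((n : ℝ) - 1)) := by
      rw [show -(n : ℝ) = -((n : ℝ) - 1) - 1 by ring, Real.rpow_sub_one hp.ne', div_eq_inv_mul]
      gcongr
    calc |h y| * ‖D2Gk 0 (x - y)‖ ≤ (A * jap y ^ (-2 - s)) *
          (((n : ℝ) - 2) * (n + 1) * (r⁻¹ * ‖x - y‖ ^ (-((n : ℝ) - 1)))) := by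
          gcongr
          · exact hA y
          · exact (norm_D2Gk_zero_le hn (norm_pos_iff.1 hp)).trans (by gcongr)
      _ = _ := by ring

lemma hasFDerivAt_cv_DGk_far (hn : 3 ≤ n) {s : ℝ} (hs : 0 < s) {h : Euc n → ℝ} (hh : Dec s h)
    {x : Euc n} {r : ℝ} (hr : 0 < r) (h0 : ∀ y ∈ Metric.ball x r, h y = 0) :
    HasFDerivAt (cv (DGk 0) h) (cv (D2Gk 0) h x) x := by
  have hn' : (3 : ℝ) ≤ n := by exact_mod_cast hn
  have hcn : 0 ≤ ((n : ℝ) - 2) * (n + 1) := mul_nonneg (by linarith) (by linarith)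
  refine hasFDerivAt_cv_far hn hs hh (C := ((n : ℝ) - 2) * (n + 1)) (d := -((n : ℝ) - 1))
    (d' := -(n : ℝ)) hcn (by linarith) (by linarith) (aesm_DGk 0) (aesm_D2Gk hn)
    (fun z hz => hasFDerivAt_DGk 0 (by have := norm_pos_iff.2 hz; positivity))
    (fun z hz => (norm_DGk_le hn le_rfl z).trans ?_) (fun z hz => norm_D2Gk_zero_le hn hz)
    (x0 := x) (r := r / 2) (fun y hy => h0 y (by rwa [mul_div_cancel₀ _ two_ne_zero] at hy))
    (Metric.mem_ball_self (by positivity))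
  gcongr
  nlinarith

/-- The Hessian of a Newtonian potential: near `x` the derivative falls on the density, away from
`x` on the kernel. -/
lemma hess_P (hn : 3 ≤ n) {s : ℝ} (hs : 0 < s) {h : Euc n → ℝ} (hh : Dec s h)
    (h1 : ContDiff ℝ 1 h) (x : Euc n) {R : ℝ} (hR : 0 < R) (v : Euc n) :
    fderiv ℝ (cv (DGk 0) h) x v =
      cv (DGk 0) (fun y => fderiv ℝ (fun z => bmp x hR z * h z) y v) x +
      cv (D2Gk 0) (fun y => (1 - bmp x hR y) * h y) x v := by
  set χ := bmp x hR with hχ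
  have hB : ∀ y, |χ y| ≤ 1 := fun y => by rw [abs_of_nonneg χ.nonneg]; exact χ.le_one
  have hd1 := hh.mul_bounded χ.continuous hB
  have hd2 : Dec s (fun y => (1 - χ y) * h y) :=
    hh.mul_bounded (continuous_const.sub χ.continuous) (B := 1 + 1) fun y =>
      (abs_sub _ _).trans (by simpa using hB y)
  have hsplit : cv (DGk 0) h = fun x => cv (DGk 0) (fun y => χ y * h y) x +
      cv (DGk 0) (fun y => (1 - χ y) * h y) x := by
    funext x
    unfold cv
    rw [← integral_add (integrable_smul_DGk hn hs le_rfl hd1 x)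
      (integrable_smul_DGk hn hs le_rfl hd2 x)]
    congr 1
    funext y
    rw [← add_smul]
    congr 1
    ring
  have hc : HasCompactSupport (fun y => χ y * h y) := χ.hasCompactSupport.mul_right
  have hs1 : ContDiff ℝ 1 (fun y => χ y * h y) := χ.contDiff.mul h1
  have e1 : DifferentiableAt ℝ (cv (DGk 0) (fun y => χ y * h y)) x := by
    rw [cv_eq_convolution]
    exact (hc.hasFDerivAt_convolution_left (ContinuousLinearMap.lsmul ℝ ℝ) hs1
      (locallyIntegrable_DGk hn) x).differentiableAt
  have e2 := hasFDerivAt_cv_DGk_far hn hs hd2 (x := x) hR (fun y hy => by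
      rw [χ.one_of_mem_closedBall (Metric.ball_subset_closedBall hy)]
      simp)
  rw [hsplit, fderiv_fun_add e1 e2.differentiableAt, e2.fderiv, add_apply,
    fderiv_cv_DGk_compact hn hs1 hc]

lemma differentiableAt_fderiv {f : Euc n → ℝ} (hf : ContDiff ℝ 2 f) (x : Euc n) :
    DifferentiableAt ℝ (fderiv ℝ f) x :=
  ((hf.fderiv_right (m := 1) (by norm_num)).differentiable (by simp)) x

lemma lap_eq {f : Euc n → ℝ} {x : Euc n} (hf : DifferentiableAt ℝ (fderiv ℝ f) x) :
    lap f x = ∑ i, fderiv ℝ (fderiv ℝ f) x (EuclideanSpace.single i 1)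
      (EuclideanSpace.single i 1) := by
  unfold lap
  refine Finset.sum_congr rfl fun i _ => ?_
  have h := (((ContinuousLinearMap.apply ℝ ℝ (EuclideanSpace.single i (1 : ℝ))).hasFDerivAt).comp x
    hf.hasFDerivAt)
  have h2 : pd i f = (ContinuousLinearMap.apply ℝ ℝ (EuclideanSpace.single i (1 : ℝ))) ∘
    fderiv ℝ f := rfl
  rw [h2, pd, h.fderiv]
  rfl

/-- The Poisson equation for Newtonian potentials. -/
lemma lap_P (hn : 3 ≤ n) {s : ℝ} (hs : 0 < s) {h : Euc n → ℝ} (hh : Dec s h)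
    (h1 : ContDiff ℝ 1 h) (x : Euc n) : lap (cv (Gk 0) h) x = -kap n * h x := by
  have hC2 : ContDiff ℝ 2 (cv (Gk 0) h) := by
    have := contDiff_P hn hs hh (m := 1) h1
    norm_num at this
    exact this
  rw [lap_eq (differentiableAt_fderiv hC2 x), fderiv_P hn hs hh]
  simp only [hess_P hn hs hh h1 x one_pos, add_apply]
  set χ := bmp x one_pos with hχ
  have hB : ∀ y, |χ y| ≤ 1 := fun y => by rw [abs_of_nonneg χ.nonneg]; exact χ.le_one
  have hd2 : Dec s (fun y => (1 - χ y) * h y) :=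
    hh.mul_bounded (continuous_const.sub χ.continuous) (B := 1 + 1) fun y =>
      (abs_sub _ _).trans (by simpa using hB y)
  have h0 : ∀ y ∈ Metric.ball x 1, (1 - χ y) * h y = 0 := fun y hy => by
      rw [χ.one_of_mem_closedBall (Metric.ball_subset_closedBall hy)]
      simp
  have hc : HasCompactSupport (fun y => χ y * h y) := χ.hasCompactSupport.mul_right
  have hs1 : ContDiff ℝ 1 (fun y => χ y * h y) := χ.contDiff.mul h1
  have hI := integrable_smul_D2Gk hn hs hd2 one_pos h0
  rw [Finset.sum_add_distrib, sum_cv_DGk_fderiv hn hs1 hc x]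
  have hfar : ∑ i, cv (D2Gk 0) (fun y => (1 - χ y) * h y) x (EuclideanSpace.single i 1)
      (EuclideanSpace.single i 1) = 0 := by
    have h3 : ∀ i : Fin n, cv (D2Gk 0) (fun y => (1 - χ y) * h y) x (EuclideanSpace.single i 1)
        (EuclideanSpace.single i 1) = ∫ y, ((1 - χ y) * h y) *
          D2Gk 0 (x - y) (EuclideanSpace.single i 1) (EuclideanSpace.single i 1) := by
      intro i
      rw [cv, clm_integral_apply hI, clm_integral_apply (hI.apply_continuousLinearMap _)]
      rfl
    rw [Finset.sum_congr rfl fun i _ => h3 i, ← integral_finsetSum]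
    · refine integral_eq_zero_of_ae (Eventually.of_forall fun y => ?_)
      simp only [← Finset.mul_sum, Pi.zero_apply]
      by_cases hy : y ∈ Metric.ball x 1
      · rw [h0 y hy, zero_mul]
      · rw [Metric.mem_ball, dist_comm, dist_eq_norm, not_lt] at hy
        rw [trace_D2Gk 0 (by positivity)]
        simp
    · intro i _
      exact (hI.apply_continuousLinearMap (EuclideanSpace.single i 1)).apply_continuousLinearMap
        (EuclideanSpace.single i 1)
  rw [hfar, χ.one_of_mem_closedBall (Metric.mem_closedBall_self (by simp [hχ, bmp]))]
  ring

/-! ### Local estimates: the weighted Morrey inequality and Hessian decay -/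

lemma bmp_scale (x0 : Euc n) {R : ℝ} (hR : 0 < R) (y : Euc n) :
    bmp x0 hR y = bmp (0 : Euc n) one_pos (R⁻¹ • (y - x0)) := by
  rw [ContDiffBump.apply, ContDiffBump.apply]
  simp [bmp, mul_div_cancel_right₀ (2 : ℝ) hR.ne']

/-- The cutoffs at scale `R` have gradient `O(1/R)`. -/
lemma norm_fderiv_bmp_le : ∃ C, 0 ≤ C ∧ ∀ (x0 : Euc n) (R : ℝ) (hR : 0 < R) (y : Euc n),
    ‖fderiv ℝ (bmp x0 hR) y‖ ≤ C * R⁻¹ := by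
  set χ := bmp (0 : Euc n) one_pos with hχ
  have hd : ContDiff ℝ 1 χ := χ.contDiff
  obtain ⟨C, hC⟩ := (χ.hasCompactSupport.fderiv (𝕜 := ℝ)).exists_bound_of_continuous
    (hd.continuous_fderiv (by simp))
  refine ⟨C, (norm_nonneg _).trans (hC 0), fun x0 R hR y => ?_⟩
  have h1 : HasFDerivAt (fun y : Euc n => R⁻¹ • (y - x0))
      (R⁻¹ • ContinuousLinearMap.id ℝ (Euc n)) y :=
    ((hasFDerivAt_id y).sub_const x0).const_smul R⁻¹
  have h2 : HasFDerivAt χ (fderiv ℝ χ (R⁻¹ • (y - x0))) (R⁻¹ • (y - x0)) :=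
    (hd.differentiable (by simp) _).hasFDerivAt
  have h3 := h2.comp y h1
  have h4 : (bmp x0 hR : Euc n → ℝ) = χ ∘ fun y : Euc n => R⁻¹ • (y - x0) :=
    funext fun y => bmp_scale x0 hR y
  rw [h4, h3.fderiv, ContinuousLinearMap.comp_smul, ContinuousLinearMap.comp_id, norm_smul,
    Real.norm_of_nonneg (by positivity), mul_comm]
  exact mul_le_mul_of_nonneg_right (hC _) (by positivity)

/-- `LocB β q`: the potentials `∫ |x-y|^{1-n} q(y) dy` over the balls `B(x, ⟨x⟩/2)` are
`O(⟨x⟩^β)`. -/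
structure LocB (β : ℝ) (q : Euc n → ℝ) : Prop where
  cont : Continuous q
  bd : ∃ C, 0 ≤ C ∧ ∀ x, ∫ y in Metric.ball x (jap x / 2), ‖x - y‖ ^ (-((n : ℝ) - 1)) * q y
    ≤ C * jap x ^ β

lemma integrableOn_ker_mul (hn : 3 ≤ n) {q : Euc n → ℝ} (hq : Continuous q) (x : Euc n) (R : ℝ) :
    IntegrableOn (fun y => ‖x - y‖ ^ (-((n : ℝ) - 1)) * q y) (Metric.ball x R) := by
  obtain ⟨B, hB⟩ := (isCompact_closedBall x R).exists_bound_of_continuousOn hq.continuousOn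
  have h := integrableOn_norm_sub_rpow (n := n) (by omega) (m := (n : ℝ) - 1) (by linarith) R x
  refine Integrable.mul_bdd (c := B) h hq.aestronglyMeasurable ?_
  exact (ae_restrict_iff' measurableSet_ball).2 (Eventually.of_forall fun y hy =>
    hB y (Metric.ball_subset_closedBall hy))

lemma LocB.add (hn : 3 ≤ n) {β : ℝ} {q r : Euc n → ℝ} (hq : LocB β q) (hr : LocB β r) :
    LocB β (fun y => q y + r y) := by
  obtain ⟨C, hC0, hC⟩ := hq.bd
  obtain ⟨D, hD0, hD⟩ := hr.bd
  refine ⟨hq.cont.add hr.cont, C + D, by positivity, fun x => ?_⟩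
  simp only [mul_add]
  rw [integral_add (integrableOn_ker_mul hn hq.cont x _) (integrableOn_ker_mul hn hr.cont x _),
    add_mul]
  exact add_le_add (hC x) (hD x)

lemma LocB.const_mul {β : ℝ} {q : Euc n → ℝ} (hq : LocB β q) {A : ℝ} (hA : 0 ≤ A) :
    LocB β (fun y => A * q y) := by
  obtain ⟨C, hC0, hC⟩ := hq.bd
  refine ⟨continuous_const.mul hq.cont, A * C, by positivity, fun x => ?_⟩
  simp only [mul_left_comm _ A]
  rw [integral_const_mul, mul_assoc]
  exact mul_le_mul_of_nonneg_left (hC x) hA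

lemma LocB.mono (hn : 3 ≤ n) {β : ℝ} {q r : Euc n → ℝ} (hq : LocB β q) (hr : Continuous r)
    (hle : ∀ y, r y ≤ q y) : LocB β r := by
  obtain ⟨C, hC0, hC⟩ := hq.bd
  refine ⟨hr, C, hC0, fun x => le_trans ?_ (hC x)⟩
  refine setIntegral_mono (integrableOn_ker_mul hn hr x _) (integrableOn_ker_mul hn hq.cont x _)
    fun y => ?_
  exact mul_le_mul_of_nonneg_left (hle y) (by positivity)

lemma LocB.jap_mul (hn : 3 ≤ n) {β : ℝ} {q : Euc n → ℝ} (hq : LocB β q) (h0 : ∀ y, 0 ≤ q y)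
    (a : ℝ) : LocB (a + β) (fun y => jap y ^ a * q y) := by
  obtain ⟨C, hC0, hC⟩ := hq.bd
  have hc : Continuous fun y => jap y ^ a * q y := (continuous_jap_rpow a).mul hq.cont
  refine ⟨hc, 2 ^ |a| * C, by positivity, fun x => ?_⟩
  have hx := jap_pos x
  calc ∫ y in Metric.ball x (jap x / 2), ‖x - y‖ ^ (-((n : ℝ) - 1)) * (jap y ^ a * q y)
      ≤ ∫ y in Metric.ball x (jap x / 2),
        (2 ^ |a| * jap x ^ a) * (‖x - y‖ ^ (-((n : ℝ) - 1)) * q y) := by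
        refine setIntegral_mono_on (integrableOn_ker_mul hn hc x _)
          ((integrableOn_ker_mul hn hq.cont x _).const_mul _) measurableSet_ball fun y hy => ?_
        rw [Metric.mem_ball, dist_comm, dist_eq_norm] at hy
        rw [mul_left_comm]
        exact mul_le_mul_of_nonneg_right (jap_rpow_near a hy.le)
          (mul_nonneg (by positivity) (h0 y))
    _ ≤ (2 ^ |a| * jap x ^ a) * (C * jap x ^ β) := by
        rw [integral_const_mul]
        exact mul_le_mul_of_nonneg_left (hC x) (by positivity)
    _ = 2 ^ |a| * C * jap x ^ (a + β) := by rw [Real.rpow_add hx]; ring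

lemma locB_one : LocB (n := n) 1 (fun _ => 1) := by
  refine ⟨continuous_const, (1 / 2) * ballInt n ((n : ℝ) - 1),
    mul_nonneg (by norm_num) (ballInt_nonneg _), fun x => ?_⟩
  have hx := jap_pos x
  simp only [mul_one]
  rw [setIntegral_ball_norm_sub_rpow (by positivity), sub_sub_cancel, Real.rpow_one, Real.rpow_one]
  exact le_of_eq (by ring)

lemma locB_jap (hn : 3 ≤ n) (β : ℝ) : LocB (n := n) β (fun y => jap y ^ (β - 1)) := by
  have h := (locB_one (n := n)).jap_mul hn (fun _ => zero_le_one) (β - 1)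
  simpa using h

/-- Hölder's inequality against the kernel `|x-y|^{1-n}`, which is locally in `L^{p/(p-1)}` because
`p > n`. -/
lemma locB_of_integrable (hn : 3 ≤ n) {p β : ℝ} (hp : (n : ℝ) < p) {q : Euc n → ℝ}
    (hq : Continuous q) (h0 : ∀ y, 0 ≤ q y)
    (hI : Integrable (fun y => (jap y ^ (-β - (n : ℝ) / p + 1) * q y) ^ p)) : LocB β q := by
  have hn' : (3 : ℝ) ≤ n := by exact_mod_cast hn
  have hp1 : 1 < p := by linarith
  have hp0 : 0 < p := by linarith
  set a := -β - (n : ℝ) / p + 1 with ha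
  set p' := p / (p - 1) with hp'
  have hpq : p.HolderConjugate p' := Real.HolderConjugate.conjExponent hp1
  have hp'0 : 0 < p' := hpq.symm.pos
  have hm : ((n : ℝ) - 1) * p' < n := by
    rw [hp', ← mul_div_assoc, div_lt_iff₀ (by linarith)]; nlinarith
  set w := fun y => jap y ^ a * q y with hw
  have hwc : Continuous w := (continuous_jap_rpow a).mul hq
  have hw0 : ∀ y, 0 ≤ w y := fun y => mul_nonneg (Real.rpow_nonneg (jap_pos y).le _) (h0 y)
  have hJ0 : 0 ≤ ∫ y, w y ^ p := integral_nonneg fun y => Real.rpow_nonneg (hw0 y) _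
  have hwL : MemLp w (ENNReal.ofReal p) volume := by
    refine (integrable_norm_rpow_iff hwc.aestronglyMeasurable (by simpa using hp0) (by simp)).1 ?_
    refine hI.congr (Eventually.of_forall fun y => ?_)
    simp only [ENNReal.toReal_ofReal hp0.le, Real.norm_of_nonneg (hw0 y)]
    rfl
  have hb0 := ballInt_nonneg (n := n) (((n : ℝ) - 1) * p')
  refine ⟨hq, 2 ^ |-a| * ((∫ y, w y ^ p) ^ (1 / p) * ((1 / 2) ^ (1 - (n : ℝ) / p) *
    ballInt n (((n : ℝ) - 1) * p') ^ (1 / p'))), by positivity, fun x => ?_⟩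
  have hx := jap_pos x
  set B := Metric.ball x (jap x / 2) with hB
  have hKp : ∀ y, (‖x - y‖ ^ (-((n : ℝ) - 1))) ^ p' = ‖x - y‖ ^ (-(((n : ℝ) - 1) * p')) := by
    intro y; rw [← Real.rpow_mul (norm_nonneg _)]; congr 1; ring
  have hKm : AEStronglyMeasurable (fun y => ‖x - y‖ ^ (-((n : ℝ) - 1))) (volume.restrict B) :=
    (((measurable_const.sub measurable_id).norm).pow_const _).aestronglyMeasurable
  have hKL : MemLp (fun y => ‖x - y‖ ^ (-((n : ℝ) - 1))) (ENNReal.ofReal p')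
      (volume.restrict B) := by
    refine (integrable_norm_rpow_iff hKm (by simpa using hp'0) (by simp)).1 ?_
    refine (integrableOn_norm_sub_rpow (n := n) (by omega) hm (jap x / 2) x).congr
      (Eventually.of_forall fun y => ?_)
    simp only [ENNReal.toReal_ofReal hp'0.le, Real.norm_of_nonneg
      (Real.rpow_nonneg (norm_nonneg (x - y)) _), hKp]
  have hH := integral_mul_le_Lp_mul_Lq_of_nonneg (μ := volume.restrict B) hpq
    (Eventually.of_forall hw0)
    (Eventually.of_forall fun y => Real.rpow_nonneg (norm_nonneg (x - y)) (-((n : ℝ) - 1)))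
    (hwL.restrict B) hKL
  have h2 : (∫ y in B, w y ^ p) ^ (1 / p) ≤ (∫ y, w y ^ p) ^ (1 / p) := by
    refine Real.rpow_le_rpow (integral_nonneg fun y => Real.rpow_nonneg (hw0 y) _) ?_
      (by positivity)
    exact setIntegral_le_integral hI (Eventually.of_forall fun y => Real.rpow_nonneg (hw0 y) _)
  have h3 : (∫ y in B, (‖x - y‖ ^ (-((n : ℝ) - 1))) ^ p') ^ (1 / p') =
      jap x ^ (1 - (n : ℝ) / p) * ((1 / 2) ^ (1 - (n : ℝ) / p) *
        ballInt n (((n : ℝ) - 1) * p') ^ (1 / p')) := by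
    simp only [hKp]
    rw [hB, setIntegral_ball_norm_sub_rpow (by positivity), Real.mul_rpow (by positivity) hb0,
      ← Real.rpow_mul (by positivity), div_eq_mul_one_div (jap x) 2,
      Real.mul_rpow hx.le (by norm_num)]
    have h4 : ((n : ℝ) - ((n : ℝ) - 1) * p') * (1 / p') = 1 - (n : ℝ) / p := by
      rw [hp']
      have : p - 1 ≠ 0 := by linarith
      field_simp
      ring
    rw [h4]
    ring
  calc ∫ y in B, ‖x - y‖ ^ (-((n : ℝ) - 1)) * q y
      ≤ ∫ y in B, (2 ^ |-a| * jap x ^ (-a)) * (w y * ‖x - y‖ ^ (-((n : ℝ) - 1))) := by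
        refine setIntegral_mono_on (integrableOn_ker_mul hn hq x _) ?_ measurableSet_ball
          fun y hy => ?_
        · have := (integrableOn_ker_mul hn hwc x (jap x / 2)).const_mul (2 ^ |-a| * jap x ^ (-a))
          simp only [mul_comm (w _)]
          exact this
        rw [hB, Metric.mem_ball, dist_comm, dist_eq_norm] at hy
        have hq' : q y = jap y ^ (-a) * w y := by
          rw [hw, ← mul_assoc, ← Real.rpow_add (jap_pos y)]; simp
        rw [hq']
        calc _ = jap y ^ (-a) * (w y * ‖x - y‖ ^ (-((n : ℝ) - 1))) := by ring
          _ ≤ _ := mul_le_mul_of_nonneg_right (jap_rpow_near (-a) hy.le)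
            (mul_nonneg (hw0 y) (by positivity))
    _ ≤ (2 ^ |-a| * jap x ^ (-a)) * ((∫ y, w y ^ p) ^ (1 / p) * (jap x ^ (1 - (n : ℝ) / p) *
          ((1 / 2) ^ (1 - (n : ℝ) / p) * ballInt n (((n : ℝ) - 1) * p') ^ (1 / p')))) := by
        rw [integral_const_mul, ← h3]
        refine mul_le_mul_of_nonneg_left (hH.trans ?_) (by positivity)
        exact mul_le_mul_of_nonneg_right h2 (by rw [h3]; positivity)
    _ = 2 ^ |-a| * ((∫ y, w y ^ p) ^ (1 / p) * ((1 / 2) ^ (1 - (n : ℝ) / p) *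
    ballInt n (((n : ℝ) - 1) * p') ^ (1 / p'))) * (jap x ^ (-a) * jap x ^ (1 - (n : ℝ) / p)) := by
        ring
    _ = _ := by
        rw [← Real.rpow_add hx]
        congr 2
        rw [ha]; ring

/-- The gradient of `f`, cut off at scale `⟨x⟩` around `x`, integrated against the kernel. -/
lemma norm_cv_cutoff_le (hn : 3 ≤ n) {β : ℝ} {f : Euc n → ℝ} (hf : ContDiff ℝ 1 f)
    (h1 : LocB β (fun y => |f y| * jap y ^ (-1 : ℝ))) (h2 : LocB β (fun y => ‖fderiv ℝ f y‖)) :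
    ∃ C, 0 ≤ C ∧ ∀ (x : Euc n) (hR : 0 < jap x / 4) (v : Euc n),
      ‖cv (DGk 0) (fun y => fderiv ℝ (fun z => bmp x hR z * f z) y v) x‖ ≤
        C * jap x ^ β * ‖v‖ := by
  have hn' : (3 : ℝ) ≤ n := by exact_mod_cast hn
  obtain ⟨K, hK0, hK⟩ := norm_fderiv_bmp_le (n := n)
  obtain ⟨C, hC0, hC⟩ := ((h1.const_mul (A := 8 * K) (by positivity)).add hn h2).bd
  refine ⟨((n : ℝ) - 2) * C, mul_nonneg (by linarith) hC0, fun x hR v => ?_⟩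
  have hx := jap_pos x
  set χ := bmp x hR with hχ
  set q : Euc n → ℝ := fun y => 8 * K * (|f y| * jap y ^ (-1 : ℝ)) + ‖fderiv ℝ f y‖ with hq
  have hqc : Continuous q := ((h1.const_mul (A := 8 * K) (by positivity)).add hn h2).cont
  set B := Metric.ball x (jap x / 2) with hB
  have hout : ∀ y, y ∉ B → χ y = 0 := fun y hy => χ.zero_of_le_dist (by
    rw [hB, Metric.mem_ball, not_lt] at hy
    refine le_trans (le_of_eq ?_) hy
    simp only [hχ, bmp]; ring)
  have hd : ∀ y, fderiv ℝ (fun z => χ z * f z) y = χ y • fderiv ℝ f y + f y • fderiv ℝ χ y :=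
    fun y => fderiv_fun_mul ((χ.contDiff (n := 1)).differentiable (by simp) y)
      (hf.differentiable (by simp) y)
  have hpt : ∀ y, ‖fderiv ℝ (fun z => χ z * f z) y v • DGk 0 (x - y)‖ ≤
      B.indicator (fun y => (((n : ℝ) - 2) * ‖v‖) * (‖x - y‖ ^ (-((n : ℝ) - 1)) * q y)) y := by
    intro y
    by_cases hy : y ∈ B
    · rw [Set.indicator_of_mem hy, norm_smul]
      have hyn : ‖x - y‖ ≤ jap x / 2 := by
        rw [hB, Metric.mem_ball, dist_comm, dist_eq_norm] at hy; exact hy.le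
      have h3 : ‖fderiv ℝ (fun z => χ z * f z) y‖ ≤ q y := by
        rw [hd y]
        refine (norm_add_le _ _).trans ?_
        rw [norm_smul, norm_smul, Real.norm_eq_abs, Real.norm_eq_abs, abs_of_nonneg χ.nonneg,
          add_comm]
        refine add_le_add ?_ (mul_le_of_le_one_left (norm_nonneg _) χ.le_one)
        calc |f y| * ‖fderiv ℝ χ y‖ ≤ |f y| * (K * (jap x / 4)⁻¹) :=
              mul_le_mul_of_nonneg_left (hK x _ hR y) (abs_nonneg _)
          _ ≤ |f y| * (K * (8 * jap y ^ (-1 : ℝ))) := by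
              gcongr
              rw [Real.rpow_neg_one, inv_le_iff_one_le_mul₀ hR]
              have := jap_near' hyn
              have hy' := jap_pos y
              rw [mul_assoc, inv_mul_eq_div, mul_div_assoc', le_div_iff₀ hy']
              linarith
          _ = _ := by ring
      calc ‖fderiv ℝ (fun z => χ z * f z) y v‖ * ‖DGk 0 (x - y)‖
          ≤ (q y * ‖v‖) * (((n : ℝ) - 2) * ‖x - y‖ ^ (-((n : ℝ) - 1))) := by
            refine mul_le_mul ?_ (norm_DGk_le hn le_rfl _) (norm_nonneg _)
              (mul_nonneg ((norm_nonneg _).trans h3) (norm_nonneg _))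
            exact (ContinuousLinearMap.le_opNorm _ _).trans
              (mul_le_mul_of_nonneg_right h3 (norm_nonneg _))
        _ = _ := by ring
    · rw [Set.indicator_of_notMem hy]
      have h4 : fderiv ℝ χ y = 0 := by
        refine IsLocalMin.fderiv_eq_zero (Eventually.of_forall fun z => ?_)
        rw [hout y hy]
        exact χ.nonneg
      rw [hd y, h4, hout y hy]
      simp
  have hint : Integrable (B.indicator
      (fun y => (((n : ℝ) - 2) * ‖v‖) * (‖x - y‖ ^ (-((n : ℝ) - 1)) * q y))) :=
    (integrable_indicator_iff measurableSet_ball).2 ((integrableOn_ker_mul hn hqc x _).const_mul _)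
  refine (norm_integral_le_of_norm_le hint (Eventually.of_forall hpt)).trans ?_
  rw [integral_indicator measurableSet_ball, integral_const_mul]
  calc _ ≤ (((n : ℝ) - 2) * ‖v‖) * (C * jap x ^ β) :=
        mul_le_mul_of_nonneg_left (hC x) (mul_nonneg (by linarith) (norm_nonneg _))
    _ = _ := by ring

/-- The weighted Morrey inequality. -/
lemma morrey (hn : 3 ≤ n) {β : ℝ} {f : Euc n → ℝ} (hf : ContDiff ℝ 1 f)
    (h1 : LocB β (fun y => |f y| * jap y ^ (-1 : ℝ))) (h2 : LocB β (fun y => ‖fderiv ℝ f y‖)) :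
    ∃ C, 0 ≤ C ∧ ∀ x, |f x| ≤ C * jap x ^ β := by
  obtain ⟨C, hC0, hC⟩ := norm_cv_cutoff_le hn hf h1 h2
  have hk := kap_pos hn
  refine ⟨(kap n)⁻¹ * (n * C), by positivity, fun x => ?_⟩
  have hx := jap_pos x
  have hR : 0 < jap x / 4 := by positivity
  set χ := bmp x hR with hχ
  have hs := sum_cv_DGk_fderiv hn (f := fun z => χ z * f z) (χ.contDiff.mul hf)
    χ.hasCompactSupport.mul_right x
  rw [χ.one_of_mem_closedBall (Metric.mem_closedBall_self χ.rIn_pos.le), one_mul] at hs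
  have h3 : kap n * |f x| ≤ n * (C * jap x ^ β) := by
    rw [← abs_of_pos hk, ← abs_mul, ← abs_neg, ← neg_mul, ← hs]
    refine (Finset.abs_sum_le_sum_abs _ _).trans ?_
    refine (Finset.sum_le_card_nsmul _ _ (C * jap x ^ β) fun i _ => ?_).trans (by simp)
    have h4 := hC x hR (EuclideanSpace.single i 1)
    have h5 := (cv (DGk 0) (fun y => fderiv ℝ (fun z => χ z * f z) y
      (EuclideanSpace.single i 1)) x).le_opNorm (EuclideanSpace.single i 1)
    simp only [PiLp.norm_single, norm_one, mul_one] at h4 h5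
    exact h5.trans h4
  rw [inv_mul_eq_div, div_mul_eq_mul_div, le_div_iff₀ hk]
  linarith

lemma norm_cv_D2Gk_far_le (hn : 3 ≤ n) {s θ : ℝ} {h : Euc n → ℝ} (hh : Dec s h) (hθ0 : 0 ≤ θ)
    (hθn : θ ≤ n) (hθs : θ < 2 + s) :
    ∃ C, 0 ≤ C ∧ ∀ (x : Euc n) (hR : 0 < jap x / 4),
      ‖cv (D2Gk 0) (fun y => (1 - bmp x hR y) * h y) x‖ ≤ C * jap x ^ (-θ) := by
  have hn' : (3 : ℝ) ≤ n := by exact_mod_cast hn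
  obtain ⟨A, hA0, hA⟩ := hh.bd
  have hcn : 0 ≤ ((n : ℝ) - 2) * (n + 1) := mul_nonneg (by linarith) (by linarith)
  have hI := integrable_jap (n := n) (r := n - θ + 2 + s) (by linarith)
  have hJ : 0 ≤ ∫ y : Euc n, jap y ^ (-(n - θ + 2 + s)) :=
    integral_nonneg fun y => Real.rpow_nonneg (jap_pos y).le _
  refine ⟨A * (((n : ℝ) - 2) * (n + 1)) * 5 ^ (n : ℝ) *
    ∫ y : Euc n, jap y ^ (-(n - θ + 2 + s)), by positivity, fun x hR => ?_⟩
  have hx := jap_pos x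
  set χ := bmp x hR with hχ
  have hb : ∀ y, ‖((1 - χ y) * h y) • D2Gk 0 (x - y)‖ ≤
      (A * (((n : ℝ) - 2) * (n + 1)) * 5 ^ (n : ℝ) * jap x ^ (-θ)) *
        jap y ^ (-(n - θ + 2 + s)) := by
    intro y
    have hy := jap_pos y
    by_cases hd : ‖x - y‖ < jap x / 4
    · rw [χ.one_of_mem_closedBall (by
        rw [Metric.mem_closedBall, dist_comm, dist_eq_norm]; exact hd.le)]
      rw [sub_self, zero_mul, zero_smul, norm_zero]
      positivity
    · rw [not_lt] at hd
      have hp : 0 < ‖x - y‖ := hR.trans_le hd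
      rw [norm_smul, norm_mul, Real.norm_eq_abs, Real.norm_eq_abs,
        abs_of_nonneg (sub_nonneg.2 χ.le_one)]
      calc (1 - χ y) * |h y| * ‖D2Gk 0 (x - y)‖
          ≤ 1 * (A * jap y ^ (-2 - s)) * (((n : ℝ) - 2) * (n + 1) *
            (5 ^ (n : ℝ) * jap x ^ (-θ) * jap y ^ (-((n : ℝ) - θ)))) := by
            have : 0 ≤ χ y := χ.nonneg
            gcongr
            · linarith
            · exact hA y
            · exact (norm_D2Gk_zero_le hn (norm_pos_iff.1 hp)).trans
                (mul_le_mul_of_nonneg_left (far_kernel_le hθ0 hθn hd) hcn)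
        _ = (A * (((n : ℝ) - 2) * (n + 1)) * 5 ^ (n : ℝ) * jap x ^ (-θ)) *
            (jap y ^ (-((n : ℝ) - θ)) * jap y ^ (-2 - s)) := by ring
        _ = _ := by
            rw [← Real.rpow_add hy]
            congr 2; ring
  refine (norm_integral_le_of_norm_le (hI.const_mul _) (Eventually.of_forall hb)).trans ?_
  rw [integral_const_mul]
  exact le_of_eq (by ring)

/-- Pointwise decay of the Hessian of a Newtonian potential. -/
lemma norm_hess_P_le (hn : 3 ≤ n) {s θ : ℝ} (hs : 0 < s) {h : Euc n → ℝ} (hh : Dec s h)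
    (h1 : ContDiff ℝ 1 h) (hD : LocB (-2 - s) (fun y => ‖fderiv ℝ h y‖)) (hθ0 : 0 ≤ θ)
    (hθn : θ ≤ n) (hθs : θ < 2 + s) :
    ∃ C, 0 ≤ C ∧ ∀ x, ‖fderiv ℝ (cv (DGk 0) h) x‖ ≤ C * jap x ^ (-θ) := by
  obtain ⟨A, hA0, hA⟩ := hh.bd
  have hL : LocB (-2 - s) (fun y => |h y| * jap y ^ (-1 : ℝ)) := by
    refine ((locB_jap hn (-2 - s)).const_mul hA0).mono hn
      (hh.cont.abs.mul (continuous_jap_rpow _)) fun y => ?_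
    rw [sub_eq_add_neg _ (1 : ℝ), Real.rpow_add (jap_pos y), ← mul_assoc]
    exact mul_le_mul_of_nonneg_right (hA y) (Real.rpow_nonneg (jap_pos y).le _)
  obtain ⟨C, hC0, hC⟩ := norm_cv_cutoff_le hn h1 hL hD
  obtain ⟨D, hD0, hD'⟩ := norm_cv_D2Gk_far_le hn hh hθ0 hθn hθs
  refine ⟨C + D, by positivity, fun x => ?_⟩
  have hx := jap_pos x
  have hR : 0 < jap x / 4 := by positivity
  refine ContinuousLinearMap.opNorm_le_bound _ (by positivity) fun v => ?_
  rw [hess_P hn hs hh h1 x hR v, add_mul, add_mul]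
  refine (norm_add_le _ _).trans (add_le_add ?_ ?_)
  · refine (hC x hR v).trans ?_
    have : jap x ^ (-2 - s) ≤ jap x ^ (-θ) := jap_rpow_mono x (by linarith)
    gcongr
  · exact (ContinuousLinearMap.le_opNorm _ _).trans
      (mul_le_mul_of_nonneg_right (hD' x hR) (norm_nonneg _))

/-! ### The maximum principle -/

/-- The second derivative test along a line. -/
lemma hess_nonpos_of_isLocalMax {f : Euc n → ℝ} (hf : ContDiff ℝ 2 f) {x : Euc n}
    (hx : IsLocalMax f x) (v : Euc n) : fderiv ℝ (fderiv ℝ f) x v v ≤ 0 := by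
  by_contra! hpos
  set g : ℝ → ℝ := fun t => f (x + t • v) with hg
  have hl : ∀ t : ℝ, HasDerivAt (fun t : ℝ => x + t • v) v t := fun t => by
    simpa using ((hasDerivAt_id t).smul_const v).const_add x
  have hl0 : Tendsto (fun t : ℝ => x + t • v) (𝓝 0) (𝓝 x) := by
    simpa using (hl 0).continuousAt.tendsto
  have h1 : ∀ t, HasDerivAt g (fderiv ℝ f (x + t • v) v) t := fun t =>
    ((hf.differentiable (by simp) _).hasFDerivAt).comp_hasDerivAt t (hl t)
  have h1' : deriv g = fun t => fderiv ℝ f (x + t • v) v := funext fun t => (h1 t).deriv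
  have h2 : HasDerivAt (deriv g) (fderiv ℝ (fderiv ℝ f) x v v) 0 := by
    rw [h1']
    have h3 : HasFDerivAt (fderiv ℝ f) (fderiv ℝ (fderiv ℝ f) x) (x + (0 : ℝ) • v) := by
      simpa using (differentiableAt_fderiv hf x).hasFDerivAt
    have h4 := h3.comp_hasDerivAt (0 : ℝ) (hl 0)
    exact ((ContinuousLinearMap.apply ℝ ℝ v).hasFDerivAt).comp_hasDerivAt (0 : ℝ) h4
  have hmax : IsLocalMax g 0 := by
    have : ∀ᶠ t in 𝓝 (0 : ℝ), f (x + t • v) ≤ f x := hl0.eventually hx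
    simpa [IsLocalMax, IsMaxFilter, hg] using this
  have hd0 : deriv g 0 = 0 := hmax.deriv_eq_zero
  have hmin : IsLocalMin g 0 :=
    isLocalMin_of_deriv_deriv_pos (by rw [h2.deriv]; exact hpos) hd0 (h1 0).continuousAt
  -- `g` is then locally constant, contradicting the positivity of its second derivative at `0`
  have hconst : g =ᶠ[𝓝 0] fun _ => g 0 := by
    filter_upwards [hmax, hmin] with t ht1 ht2 using le_antisymm ht1 ht2
  have h5 := hconst.deriv.deriv_eq
  rw [h2.deriv] at h5
  simp at h5
  exact hpos.ne' h5

lemma lap_nonpos_of_isLocalMax {f : Euc n → ℝ} (hf : ContDiff ℝ 2 f) {x : Euc n}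
    (hx : IsLocalMax f x) : lap f x ≤ 0 := by
  rw [lap_eq (differentiableAt_fderiv hf x)]
  exact Finset.sum_nonpos fun i _ => hess_nonpos_of_isLocalMax hf hx _

lemma lap_add {f g : Euc n → ℝ} (hf : ContDiff ℝ 2 f) (hg : ContDiff ℝ 2 g) (x : Euc n) :
    lap (fun y => f y + g y) x = lap f x + lap g x := by
  have h1 : fderiv ℝ (fun y => f y + g y) = fun y => fderiv ℝ f y + fderiv ℝ g y :=
    funext fun y => fderiv_fun_add (hf.differentiable (by simp) y) (hg.differentiable (by simp) y)
  rw [lap_eq (differentiableAt_fderiv (hf.add hg) x), lap_eq (differentiableAt_fderiv hf x),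
    lap_eq (differentiableAt_fderiv hg x), h1,
    fderiv_fun_add (differentiableAt_fderiv hf x) (differentiableAt_fderiv hg x),
    ← Finset.sum_add_distrib]
  rfl

lemma lap_const_mul {f : Euc n → ℝ} (hf : ContDiff ℝ 2 f) (c : ℝ) (x : Euc n) :
    lap (fun y => c * f y) x = c * lap f x := by
  have h1 : fderiv ℝ (fun y => c * f y) = fun y => c • fderiv ℝ f y :=
    funext fun y => fderiv_const_mul (hf.differentiable (by simp) y) c
  rw [lap_eq (differentiableAt_fderiv (contDiff_const.mul hf) x),
    lap_eq (differentiableAt_fderiv hf x), h1,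
    fderiv_fun_const_smul (differentiableAt_fderiv hf x), Finset.mul_sum]
  rfl

lemma lap_norm_sq (x : Euc n) : lap (fun y : Euc n => ‖y‖ ^ 2) x = 2 * n := by
  have h1 : ∀ i, pd i (fun y : Euc n => ‖y‖ ^ 2) = fun y => 2 * y i := by
    intro i
    funext y
    rw [pd, (hasStrictFDerivAt_norm_sq y).hasFDerivAt.fderiv]
    simp [EuclideanSpace.inner_single_right]
  have h2 : ∀ i, pd i (fun y : Euc n => 2 * y i) x = 2 := by
    intro i
    have h3 : HasFDerivAt (fun y : Euc n => 2 * y i)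
        ((2 : ℝ) • (EuclideanSpace.proj i : Euc n →L[ℝ] ℝ)) x :=
      ((EuclideanSpace.proj i : Euc n →L[ℝ] ℝ).hasFDerivAt (x := x)).const_mul 2
    rw [pd, h3.fderiv]
    simp
  unfold lap
  simp only [h1, h2]
  simp [mul_comm]

lemma lap_exp_neg {v : Euc n → ℝ} (hv : ContDiff ℝ 2 v) (x : Euc n) :
    -Real.exp (-v x) * lap v x ≤ lap (fun y => Real.exp (-v y)) x := by
  have h1 : ∀ i, pd i (fun y => Real.exp (-v y)) = fun y => -(Real.exp (-v y) * pd i v y) := by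
    intro i
    funext y
    have : HasFDerivAt (fun y => Real.exp (-v y)) (Real.exp (-v y) • -fderiv ℝ v y) y :=
      ((hv.differentiable (by simp) y).hasFDerivAt.neg).exp
    rw [pd, this.fderiv]
    simp [pd]
  have hpd : ∀ i, DifferentiableAt ℝ (pd i v) x := fun i =>
    ((ContinuousLinearMap.apply ℝ ℝ (EuclideanSpace.single i (1 : ℝ))).differentiableAt).comp x
      (differentiableAt_fderiv hv x)
  have h2 : ∀ i, pd i (fun y => -(Real.exp (-v y) * pd i v y)) x =
      Real.exp (-v x) * pd i v x ^ 2 - Real.exp (-v x) * pd i (pd i v) x := by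
    intro i
    have h3 := (((hv.differentiable (by simp) x).hasFDerivAt.neg).exp.mul (hpd i).hasFDerivAt).neg
    have h4 : pd i (fun y => -(Real.exp (-v y) * pd i v y)) x = _ :=
      congrArg (fun L => L (EuclideanSpace.single i (1 : ℝ))) h3.fderiv
    rw [h4]
    simp [pd]
    ring
  unfold lap
  rw [Finset.mul_sum]
  refine Finset.sum_le_sum fun i _ => ?_
  rw [h1, h2]
  have := mul_nonneg (Real.exp_pos (-v x)).le (sq_nonneg (pd i v x))
  linarith

/-- The maximum principle on the whole space, for functions vanishing at infinity which are
subharmonic where they exceed `M`. -/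
lemma max_principle (hn : 3 ≤ n) {q : Euc n → ℝ} (hq : ContDiff ℝ 2 q)
    (hlim : Tendsto q (cocompact (Euc n)) (𝓝 0)) {M : ℝ} (hM : 0 ≤ M)
    (hsub : ∀ x, M < q x → 0 ≤ lap q x) (x : Euc n) : q x ≤ M := by
  by_contra! hx
  have hn' : (3 : ℝ) ≤ n := by exact_mod_cast hn
  set η := q x - M with hη
  have hη0 : 0 < η := sub_pos.2 hx
  have hev : ∀ᶠ y in cocompact (Euc n), q y < M + η / 2 :=
    hlim.eventually (gt_mem_nhds (by linarith))
  obtain ⟨K, hK, hKs⟩ := mem_cocompact.1 hev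
  obtain ⟨ρ, hρ⟩ := hK.isBounded.subset_closedBall (0 : Euc n)
  set R := max (ρ + 1) (‖x‖ + 1) with hRdef
  have hR1 : ‖x‖ + 1 ≤ R := le_max_right _ _
  have hR0 : 0 < R := by linarith [norm_nonneg x]
  have hfar : ∀ y, R ≤ ‖y‖ → q y < M + η / 2 := by
    intro y hy
    refine hKs fun hyK => ?_
    have := hρ hyK
    rw [mem_closedBall_zero_iff] at this
    linarith [le_max_left (ρ + 1) (‖x‖ + 1)]
  set ε := η / (4 * R ^ 2) with hε
  have hε0 : 0 < ε := by positivity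
  have hεR : ε * R ^ 2 = η / 4 := by rw [hε]; field_simp
  set f := fun y : Euc n => q y + ε * ‖y‖ ^ 2 with hf
  have hns : ContDiff ℝ 2 (fun y : Euc n => ‖y‖ ^ 2) := contDiff_norm_sq ℝ
  have hfC : ContDiff ℝ 2 f := hq.add (contDiff_const.mul hns)
  obtain ⟨y, hy, hymax⟩ := (isCompact_closedBall (0 : Euc n) R).exists_isMaxOn
    ⟨0, Metric.mem_closedBall_self hR0.le⟩ hfC.continuous.continuousOn
  rw [mem_closedBall_zero_iff] at hy
  have hfx : f x ≤ f y := hymax (by rw [mem_closedBall_zero_iff]; linarith)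
  have hyq : ε * ‖y‖ ^ 2 ≤ η / 4 := by
    rw [← hεR]; gcongr
  have hxε : 0 ≤ ε * ‖x‖ ^ 2 := by positivity
  simp only [hf] at hfx
  have hyR : ‖y‖ < R := by
    by_contra! h
    have := hfar y h
    linarith
  have hloc : IsLocalMax f y := hymax.isLocalMax
    (Metric.closedBall_mem_nhds_of_mem (by rwa [mem_ball_zero_iff]))
  have h1 := lap_nonpos_of_isLocalMax hfC hloc
  have h2 : lap f y = lap q y + ε * (2 * n) := by
    rw [hf, lap_add hq (contDiff_const.mul hns), lap_const_mul hns, lap_norm_sq]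
  have h3 := hsub y (by linarith)
  have : 0 < ε * (2 * n) := by positivity
  linarith

/-! ### The semilinear integral equation -/

/-- The solution `z` of `-Δz = w φ` vanishing at infinity. -/
def pot (w φ : Euc n → ℝ) (x : Euc n) : ℝ := cv (Gk 0) (fun y => φ y * ((kap n)⁻¹ * w y)) x

lemma Dec.const_mul {s : ℝ} {w : Euc n → ℝ} (hw : Dec s w) (c : ℝ) : Dec s (fun y => c * w y) :=
  hw.mul_bounded (χ := fun _ => c) continuous_const fun _ => le_rfl

lemma dec_pot {s : ℝ} {w φ : Euc n → ℝ} (hw : Dec s w) (hφ : Continuous φ) {B : ℝ}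
    (hB : ∀ y, |φ y| ≤ B) : Dec s (fun y => φ y * ((kap n)⁻¹ * w y)) :=
  (hw.const_mul _).mul_bounded hφ hB

lemma pot_sub (hn : 3 ≤ n) {s : ℝ} (hs : 0 < s) {w φ ψ : Euc n → ℝ} (hw : Dec s w)
    (hφ : Continuous φ) (hψ : Continuous ψ) {B D : ℝ} (hB : ∀ y, |φ y| ≤ B)
    (hD : ∀ y, |ψ y| ≤ D) (x : Euc n) :
    pot w (fun y => φ y - ψ y) x = pot w φ x - pot w ψ x := by
  unfold pot cv
  rw [← integral_sub (integrable_smul_Gk hn hs le_rfl (dec_pot hw hφ hB) x)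
    (integrable_smul_Gk hn hs le_rfl (dec_pot hw hψ hD) x)]
  congr 1
  funext y
  simp only [smul_eq_mul]
  ring

lemma pot_nonneg (hn : 3 ≤ n) {w φ : Euc n → ℝ} (hw : ∀ y, 0 ≤ w y) (hφ : ∀ y, 0 ≤ φ y)
    (x : Euc n) : 0 ≤ pot w φ x := by
  have hk := kap_pos hn
  refine integral_nonneg fun y => ?_
  have h1 := hw y
  have h2 := hφ y
  have h3 := Gk_nonneg le_rfl (x - y)
  simp only [smul_eq_mul]
  positivity

lemma pot_decay (hn : 3 ≤ n) {s θ : ℝ} (hs : 0 < s) {w : Euc n → ℝ} (hw : Dec s w) (hθ : 0 ≤ θ)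
    (hθn : θ ≤ (n : ℝ) - 2) (hθs : θ < s) :
    ∃ K, 0 ≤ K ∧ ∀ (φ : Euc n → ℝ) (B : ℝ), 0 ≤ B → (∀ y, |φ y| ≤ B) →
      ∀ x, |pot w φ x| ≤ K * B * jap x ^ (-θ) := by
  have hk := kap_pos hn
  obtain ⟨A, hA0, hA⟩ := hw.bd
  obtain ⟨C, hC0, hC⟩ := kernel_bound (n := n) (by omega) (m := (n : ℝ) - 2) (s := s) hθ hθn
    (by linarith) (by linarith)
  refine ⟨(kap n)⁻¹ * A * C, by positivity, fun φ B hB0 hB x => ?_⟩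
  have h1 : ∀ y, |φ y * ((kap n)⁻¹ * w y)| ≤ (B * ((kap n)⁻¹ * A)) * jap y ^ (-2 - s) := by
    intro y
    rw [abs_mul, abs_mul, abs_of_pos (inv_pos.2 hk)]
    calc |φ y| * ((kap n)⁻¹ * |w y|) ≤ B * ((kap n)⁻¹ * (A * jap y ^ (-2 - s))) := by
          gcongr
          · exact hB y
          · exact hA y
      _ = _ := by ring
  refine (abs_P_le hn (by positivity) hs h1 x).trans ?_
  calc _ ≤ (B * ((kap n)⁻¹ * A)) * (C * jap x ^ (-θ)) :=
        mul_le_mul_of_nonneg_left (hC x) (by positivity)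
    _ = _ := by ring

lemma tendsto_jap_rpow (θ : ℝ) (hθ : 0 < θ) :
    Tendsto (fun x : Euc n => jap x ^ (-θ)) (cocompact (Euc n)) (𝓝 0) := by
  have h1 : Tendsto (jap : Euc n → ℝ) (cocompact (Euc n)) atTop :=
    tendsto_atTop_mono norm_le_jap (tendsto_norm_cocompact_atTop)
  exact (tendsto_rpow_neg_atTop hθ).comp h1

lemma exists_theta (hn : 3 ≤ n) {s : ℝ} (hs : 0 < s) :
    ∃ θ : ℝ, 0 < θ ∧ θ ≤ (n : ℝ) - 2 ∧ θ < s := by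
  have hn' : (3 : ℝ) ≤ n := by exact_mod_cast hn
  exact ⟨min (s / 2) ((n : ℝ) - 2), lt_min (by linarith) (by linarith), min_le_right _ _,
    (min_le_left _ _).trans_lt (by linarith)⟩

lemma pot_tendsto (hn : 3 ≤ n) {s : ℝ} (hs : 0 < s) {w φ : Euc n → ℝ} (hw : Dec s w) {B : ℝ}
    (hB : ∀ y, |φ y| ≤ B) : Tendsto (pot w φ) (cocompact (Euc n)) (𝓝 0) := by
  obtain ⟨θ, hθ0, hθn, hθs⟩ := exists_theta hn hs
  obtain ⟨K, hK0, hK⟩ := pot_decay hn hs hw hθ0.le hθn hθs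
  have hB0 : 0 ≤ B := (abs_nonneg _).trans (hB 0)
  refine squeeze_zero_norm (a := fun x => K * B * jap x ^ (-θ)) (fun x => hK φ B hB0 hB x) ?_
  simpa using (tendsto_jap_rpow θ hθ0).const_mul (K * B)

lemma contDiff_one_pot (hn : 3 ≤ n) {s : ℝ} (hs : 0 < s) {w φ : Euc n → ℝ} (hw : Dec s w)
    (hφ : Continuous φ) {B : ℝ} (hB : ∀ y, |φ y| ≤ B) : ContDiff ℝ 1 (pot w φ) :=
  contDiff_one_P hn hs (dec_pot hw hφ hB)

lemma contDiff_pot (hn : 3 ≤ n) {s : ℝ} (hs : 0 < s) {w φ : Euc n → ℝ} (hw : Dec s w)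
    {B : ℝ} (hB : ∀ y, |φ y| ≤ B) {m : ℕ} (hwm : ContDiff ℝ m w) (hφm : ContDiff ℝ m φ) :
    ContDiff ℝ (m + 1) (pot w φ) :=
  contDiff_P hn hs (dec_pot hw hφm.continuous hB) (hφm.mul (contDiff_const.mul hwm))

lemma contDiff_two_pot (hn : 3 ≤ n) {s : ℝ} (hs : 0 < s) {w φ : Euc n → ℝ} (hw : Dec s w)
    {B : ℝ} (hB : ∀ y, |φ y| ≤ B) (hwm : ContDiff ℝ 1 w) (hφm : ContDiff ℝ 1 φ) :
    ContDiff ℝ 2 (pot w φ) := by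
  have h := contDiff_pot hn hs hw hB (m := 1) hwm hφm
  norm_num at h
  exact h

lemma lap_pot (hn : 3 ≤ n) {s : ℝ} (hs : 0 < s) {w φ : Euc n → ℝ} (hw : Dec s w)
    {B : ℝ} (hB : ∀ y, |φ y| ≤ B) (hwm : ContDiff ℝ 1 w) (hφm : ContDiff ℝ 1 φ) (x : Euc n) :
    lap (pot w φ) x = -(w x * φ x) := by
  have h := lap_P hn hs (dec_pot hw hφm.continuous hB) (hφm.mul (contDiff_const.mul hwm)) x
  have hk := (kap_pos hn).ne'
  rw [show pot w φ = cv (Gk 0) (fun y => φ y * ((kap n)⁻¹ * w y)) from rfl, h]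
  field_simp

/-- `g ∘ u` is bounded when `g` is Lipschitz and `u` bounded. -/
lemma comp_bdd {g : ℝ → ℝ} {L : ℝ} (hL : ∀ a b, |g a - g b| ≤ L * |a - b|) (hL0 : 0 ≤ L)
    (u : BoundedContinuousFunction (Euc n) ℝ) (y : Euc n) : |g (u y)| ≤ L * ‖u‖ + |g 0| := by
  have h1 := hL (u y) 0
  have h2 : |u y| ≤ ‖u‖ := u.norm_coe_le_norm y
  rw [sub_zero] at h1
  have h3 := abs_sub_abs_le_abs_sub (g (u y)) (g 0)
  nlinarith

/-- One-sided stability estimate, from the maximum principle: where the potential `z` of the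
difference is large, `u₁ < u₂`, so that `z` is subharmonic there by monotonicity of `g`. -/
lemma stab_aux (hn : 3 ≤ n) {s : ℝ} (hs : 0 < s) {w : Euc n → ℝ} (hw : Dec s w)
    (hw0 : ∀ y, 0 ≤ w y) (hw1 : ContDiff ℝ 1 w) {g : ℝ → ℝ} {L : ℝ} (hL0 : 0 ≤ L)
    (hL : ∀ a b, |g a - g b| ≤ L * |a - b|) (hg1 : ContDiff ℝ 1 g) (hgm : Monotone g)
    {t : ℝ} (ht : 0 ≤ t) {F₁ F₂ : Euc n → ℝ} (hF₁ : ContDiff ℝ 1 F₁) (hF₂ : ContDiff ℝ 1 F₂)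
    {u₁ u₂ : BoundedContinuousFunction (Euc n) ℝ}
    (h₁ : ∀ x, u₁ x + t * pot w (fun y => g (u₁ y)) x = F₁ x)
    (h₂ : ∀ x, u₂ x + t * pot w (fun y => g (u₂ y)) x = F₂ x) {m : ℝ} (hm0 : 0 ≤ m)
    (hm : ∀ x, F₁ x - F₂ x ≤ m) (x : Euc n) :
    t * (pot w (fun y => g (u₁ y)) x - pot w (fun y => g (u₂ y)) x) ≤ m := by
  have hB := fun u : BoundedContinuousFunction (Euc n) ℝ => comp_bdd hL hL0 u
  have hgc : ∀ u : BoundedContinuousFunction (Euc n) ℝ, Continuous fun y => g (u y) :=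
    fun u => hg1.continuous.comp u.continuous
  have hreg : ∀ (u : BoundedContinuousFunction (Euc n) ℝ) (F : Euc n → ℝ), ContDiff ℝ 1 F →
      (∀ x, u x + t * pot w (fun y => g (u y)) x = F x) → ContDiff ℝ 1 (fun y => g (u y)) := by
    intro u F hF hu
    have h3 : (u : Euc n → ℝ) = fun x => F x - t * pot w (fun y => g (u y)) x :=
      funext fun x => by rw [← hu x]; ring
    have h4 : ContDiff ℝ 1 (u : Euc n → ℝ) := by
      rw [h3]
      exact hF.sub (contDiff_const.mul (contDiff_one_pot hn hs hw (hgc u) (hB u)))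
    exact hg1.comp h4
  have hr1 := hreg u₁ F₁ hF₁ h₁
  have hr2 := hreg u₂ F₂ hF₂ h₂
  have hBd : ∀ y, |g (u₁ y) - g (u₂ y)| ≤ (L * ‖u₁‖ + |g 0|) + (L * ‖u₂‖ + |g 0|) := fun y =>
    (abs_sub _ _).trans (add_le_add (hB u₁ y) (hB u₂ y))
  set z := fun x => t * pot w (fun y => g (u₁ y) - g (u₂ y)) x with hz
  have hsub := pot_sub hn hs hw (hgc u₁) (hgc u₂) (hB u₁) (hB u₂)
  have hC2 := contDiff_two_pot hn hs hw hBd hw1 (hr1.sub hr2)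
  have hmain := max_principle hn (q := z) (contDiff_const.mul hC2)
    (by simpa using (pot_tendsto hn hs hw hBd).const_mul t) hm0 (fun x hx => ?_) x
  · simp only [hz] at hmain
    rwa [hsub] at hmain
  · rw [hz, lap_const_mul hC2, lap_pot hn hs hw hBd hw1 (hr1.sub hr2)]
    have hlt : u₁ x ≤ u₂ x := by
      simp only [hz] at hx
      rw [hsub] at hx
      have := h₁ x
      have := h₂ x
      have := hm x
      linarith
    have h5 := hgm hlt
    have h6 : w x * (g (u₁ x) - g (u₂ x)) ≤ 0 :=
      mul_nonpos_of_nonneg_of_nonpos (hw0 x) (by linarith)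
    nlinarith

/-- Sup-norm stability of the solution with respect to the right-hand side, uniform in the coupling
constant `t`. -/
lemma stab (hn : 3 ≤ n) {s : ℝ} (hs : 0 < s) {w : Euc n → ℝ} (hw : Dec s w)
    (hw0 : ∀ y, 0 ≤ w y) (hw1 : ContDiff ℝ 1 w) {g : ℝ → ℝ} {L : ℝ} (hL0 : 0 ≤ L)
    (hL : ∀ a b, |g a - g b| ≤ L * |a - b|) (hg1 : ContDiff ℝ 1 g) (hgm : Monotone g)
    {t : ℝ} (ht : 0 ≤ t) {F₁ F₂ : Euc n → ℝ} (hF₁ : ContDiff ℝ 1 F₁) (hF₂ : ContDiff ℝ 1 F₂)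
    {u₁ u₂ : BoundedContinuousFunction (Euc n) ℝ}
    (h₁ : ∀ x, u₁ x + t * pot w (fun y => g (u₁ y)) x = F₁ x)
    (h₂ : ∀ x, u₂ x + t * pot w (fun y => g (u₂ y)) x = F₂ x) {m : ℝ} (hm0 : 0 ≤ m)
    (hm : ∀ x, |F₁ x - F₂ x| ≤ m) (x : Euc n) : |u₁ x - u₂ x| ≤ 2 * m := by
  have ha := stab_aux hn hs hw hw0 hw1 hL0 hL hg1 hgm ht hF₁ hF₂ h₁ h₂ hm0
    (fun x => (abs_le.1 (hm x)).2) x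
  have hb := stab_aux hn hs hw hw0 hw1 hL0 hL hg1 hgm ht hF₂ hF₁ h₂ h₁ hm0
    (fun x => by linarith [(abs_le.1 (hm x)).1]) x
  have h3 := h₁ x
  have h4 := h₂ x
  have h5 := abs_le.1 (hm x)
  rw [abs_le]
  constructor <;> linarith

/-- The continuation step: solvability at `t` gives solvability at `t + σ` for small `σ`. -/
lemma cont_step (hn : 3 ≤ n) {s : ℝ} (hs : 0 < s) {w : Euc n → ℝ} (hw : Dec s w)
    (hw0 : ∀ y, 0 ≤ w y) (hw1 : ContDiff ℝ 1 w) {g : ℝ → ℝ} {L : ℝ} (hL0 : 0 ≤ L)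
    (hL : ∀ a b, |g a - g b| ≤ L * |a - b|) (hg1 : ContDiff ℝ 1 g) (hgm : Monotone g)
    {K : ℝ} (hK0 : 0 ≤ K) (hK : ∀ (φ : Euc n → ℝ) (B : ℝ), 0 ≤ B → (∀ y, |φ y| ≤ B) →
      ∀ x, |pot w φ x| ≤ K * B) {σ : ℝ} (hσ0 : 0 ≤ σ) (hσ : 4 * (σ * (K * L)) ≤ 1)
    {t : ℝ} (ht : 0 ≤ t)
    (hsolve : ∀ F : Euc n → ℝ, ContDiff ℝ 1 F → (∃ B, ∀ x, |F x| ≤ B) →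
      ∃ u : BoundedContinuousFunction (Euc n) ℝ,
        ∀ x, u x + t * pot w (fun y => g (u y)) x = F x)
    (F : Euc n → ℝ) (hF : ContDiff ℝ 1 F) (hFb : ∃ B, ∀ x, |F x| ≤ B) :
    ∃ u : BoundedContinuousFunction (Euc n) ℝ,
      ∀ x, u x + (t + σ) * pot w (fun y => g (u y)) x = F x := by
  obtain ⟨B, hFB⟩ := hFb
  have hB := fun u : BoundedContinuousFunction (Euc n) ℝ => comp_bdd hL hL0 u
  have hgc : ∀ u : BoundedContinuousFunction (Euc n) ℝ, Continuous fun y => g (u y) :=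
    fun u => hg1.continuous.comp u.continuous
  have hreg : ∀ v : BoundedContinuousFunction (Euc n) ℝ,
      ContDiff ℝ 1 (fun x => F x - σ * pot w (fun y => g (v y)) x) := fun v =>
    hF.sub (contDiff_const.mul (contDiff_one_pot hn hs hw (hgc v) (hB v)))
  have hΦ : ∀ v : BoundedContinuousFunction (Euc n) ℝ,
      ∃ u : BoundedContinuousFunction (Euc n) ℝ, ∀ x, u x + t * pot w (fun y => g (u y)) x =
        F x - σ * pot w (fun y => g (v y)) x := by
    intro v
    refine hsolve _ (hreg v) ⟨B + σ * (K * (L * ‖v‖ + |g 0|)), fun x => ?_⟩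
    refine (abs_sub _ _).trans (add_le_add (hFB x) ?_)
    rw [abs_mul, abs_of_nonneg hσ0]
    exact mul_le_mul_of_nonneg_left (hK _ _ (by positivity) (hB v) x) hσ0
  choose Φ hΦ using hΦ
  have hlip : LipschitzWith (1 / 2 : NNReal) Φ := by
    refine LipschitzWith.of_dist_le_mul fun v₁ v₂ => ?_
    have hd : ∀ y, |g (v₁ y) - g (v₂ y)| ≤ L * dist v₁ v₂ := fun y =>
      (hL _ _).trans (mul_le_mul_of_nonneg_left (by
        rw [← Real.dist_eq]; exact BoundedContinuousFunction.dist_coe_le_dist y) hL0)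
    have hm0 : 0 ≤ σ * (K * (L * dist v₁ v₂)) := by positivity
    rw [BoundedContinuousFunction.dist_le (by positivity)]
    intro x
    rw [Real.dist_eq]
    refine (stab hn hs hw hw0 hw1 hL0 hL hg1 hgm ht (hreg v₁) (hreg v₂) (hΦ v₁) (hΦ v₂) hm0
      (fun x => ?_) x).trans ?_
    · have h3 := pot_sub hn hs hw (hgc v₁) (hgc v₂) (hB v₁) (hB v₂) x
      have h4 : F x - σ * pot w (fun y => g (v₁ y)) x - (F x - σ * pot w (fun y => g (v₂ y)) x) =
          -(σ * pot w (fun y => g (v₁ y) - g (v₂ y)) x) := by rw [h3]; ring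
      rw [h4, abs_neg, abs_mul, abs_of_nonneg hσ0]
      exact mul_le_mul_of_nonneg_left (hK _ _ (by positivity) hd x) hσ0
    · have : 0 ≤ dist v₁ v₂ := dist_nonneg
      push_cast
      nlinarith
  have hcon : ContractingWith (1 / 2 : NNReal) Φ :=
    ⟨by rw [← NNReal.coe_lt_coe]; norm_num, hlip⟩
  refine ⟨ContractingWith.fixedPoint Φ hcon, fun x => ?_⟩
  have h5 := hΦ (ContractingWith.fixedPoint Φ hcon) x
  rw [hcon.fixedPoint_isFixedPt] at h5
  linarith

/-- Existence for `u + (-Δ)⁻¹(w g(u)) = 1`, by continuation in the coupling constant. -/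
lemma exists_sol (hn : 3 ≤ n) {s : ℝ} (hs : 0 < s) {w : Euc n → ℝ} (hw : Dec s w)
    (hw0 : ∀ y, 0 ≤ w y) (hw1 : ContDiff ℝ 1 w) {g : ℝ → ℝ} {L : ℝ} (hL0 : 0 ≤ L)
    (hL : ∀ a b, |g a - g b| ≤ L * |a - b|) (hg1 : ContDiff ℝ 1 g) (hgm : Monotone g) :
    ∃ u : BoundedContinuousFunction (Euc n) ℝ, ∀ x, u x + pot w (fun y => g (u y)) x = 1 := by
  have hn' : (3 : ℝ) ≤ n := by exact_mod_cast hn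
  obtain ⟨K, hK0, hK⟩ := pot_decay hn hs hw le_rfl (by linarith) hs
  have hK' : ∀ (φ : Euc n → ℝ) (B : ℝ), 0 ≤ B → (∀ y, |φ y| ≤ B) → ∀ x, |pot w φ x| ≤ K * B := by
    intro φ B h1 h2 x
    simpa using hK φ B h1 h2 x
  obtain ⟨k, hk⟩ := exists_nat_gt (4 * (K * L))
  have hk0 : (0 : ℝ) < k := lt_of_le_of_lt (by positivity) hk
  have hσ : 4 * ((1 / (k : ℝ)) * (K * L)) ≤ 1 := by
    rw [one_div, mul_left_comm, inv_mul_le_iff₀ hk0]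
    linarith
  have hall : ∀ j : ℕ, ∀ F : Euc n → ℝ, ContDiff ℝ 1 F → (∃ B, ∀ x, |F x| ≤ B) →
      ∃ u : BoundedContinuousFunction (Euc n) ℝ,
        ∀ x, u x + (j * (1 / (k : ℝ))) * pot w (fun y => g (u y)) x = F x := by
    intro j
    induction j with
    | zero =>
      rintro F hF ⟨B, hB⟩
      exact ⟨BoundedContinuousFunction.ofNormedAddCommGroup F hF.continuous B hB, by simp⟩
    | succ j ih =>
      intro F hF hFb
      obtain ⟨u, hu⟩ := cont_step hn hs hw hw0 hw1 hL0 hL hg1 hgm hK0 hK' (by positivity) hσ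
        (by positivity) ih F hF hFb
      refine ⟨u, fun x => ?_⟩
      rw [← hu x]
      push_cast
      ring
  obtain ⟨u, hu⟩ := hall k (fun _ => 1) contDiff_const ⟨1, by simp⟩
  refine ⟨u, fun x => ?_⟩
  have h := hu x
  rwa [mul_one_div_cancel hk0.ne', one_mul] at h

/-! ### The truncated nonlinearity -/

/-- A globally Lipschitz, monotone `C¹` function agreeing with `t ↦ t^a` on `[0, 1]` and vanishing
on the negative axis. -/
lemma exists_trunc {a : ℝ} (ha : 1 < a) : ∃ g : ℝ → ℝ, ContDiff ℝ 1 g ∧ Monotone g ∧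
    (∀ s t, |g s - g t| ≤ a * |s - t|) ∧ (∀ s ≤ 0, g s = 0) ∧
    (∀ s, 0 ≤ s → s ≤ 1 → g s = s ^ a) := by
  have ha0 : 0 < a := by linarith
  set k : ℝ → ℝ := fun t => a * (max 0 (min t 1)) ^ (a - 1) with hk
  have hkc : Continuous k := by
    refine continuous_const.mul (Continuous.rpow_const (by fun_prop) fun t => Or.inr (by linarith))
  have hk0 : ∀ t, 0 ≤ k t := fun t =>
    mul_nonneg ha0.le (Real.rpow_nonneg (le_max_left _ _) _)
  have hka : ∀ t, k t ≤ a := fun t => by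
    refine mul_le_of_le_one_right ha0.le (Real.rpow_le_one (le_max_left _ _) ?_ (by linarith))
    exact max_le zero_le_one (min_le_right _ _)
  set g : ℝ → ℝ := fun s => ∫ t in (0 : ℝ)..s, k t with hg
  have hd : ∀ s, HasDerivAt g (k s) s := fun s =>
    intervalIntegral.integral_hasDerivAt_right (hkc.intervalIntegrable _ _)
      (hkc.stronglyMeasurableAtFilter _ _) hkc.continuousAt
  have hd' : deriv g = k := funext fun s => (hd s).deriv
  have hdiff : Differentiable ℝ g := fun s => (hd s).differentiableAt
  refine ⟨g, ?_, ?_, ?_, ?_, ?_⟩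
  · exact contDiff_one_iff_deriv.2 ⟨hdiff, by rw [hd']; exact hkc⟩
  · exact monotone_of_deriv_nonneg hdiff fun s => by rw [hd']; exact hk0 s
  · intro s t
    have h := Convex.norm_image_sub_le_of_norm_deriv_le (f := g) (C := a) (s := Set.univ)
      (x := t) (y := s) (fun x _ => hdiff x)
      (fun x _ => by rw [hd', Real.norm_of_nonneg (hk0 x)]; exact hka x) convex_univ
      (Set.mem_univ _) (Set.mem_univ _)
    simpa [Real.norm_eq_abs] using h
  · intro s hs
    simp only [hg]
    rw [intervalIntegral.integral_congr (g := fun _ => 0)]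
    · simp
    · intro t ht
      rw [Set.uIcc_of_ge hs] at ht
      have h1 : max 0 (min t 1) = 0 := max_eq_left ((min_le_left _ _).trans ht.2)
      simp only [hk]
      rw [h1, Real.zero_rpow (by linarith), mul_zero]
  · intro s hs0 hs1
    simp only [hg]
    rw [intervalIntegral.integral_congr (g := fun t => a * t ^ (a - 1))]
    · rw [intervalIntegral.integral_const_mul, integral_rpow (Or.inl (by linarith)),
        sub_add_cancel, Real.zero_rpow ha0.ne', sub_zero, mul_div_cancel₀ _ ha0.ne']
    · intro t ht
      rw [Set.uIcc_of_le hs0] at ht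
      simp only [hk]
      rw [min_eq_left (ht.2.trans hs1), max_eq_right ht.1]

/-! ### Positivity and smoothness of the solution -/

lemma one_lt_exponent (hn : 3 ≤ n) : 1 < Nc n - 1 := by
  have hn' : (3 : ℝ) ≤ n := by exact_mod_cast hn
  unfold Nc
  rw [lt_sub_iff_add_lt, lt_div_iff₀ (by linarith)]
  linarith

/-- A solution `0 < u ≤ 1` of `u + (-Δ)⁻¹(w u^a) = 1`. The lower barrier is `exp (-v)` with
`-Δv = w`. -/
lemma exists_pos_sol (hn : 3 ≤ n) {s : ℝ} (hs : 0 < s) {w : Euc n → ℝ} (hw : Dec s w)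
    (hw0 : ∀ y, 0 ≤ w y) (hw1 : ContDiff ℝ 1 w) {a : ℝ} (ha : 1 < a) :
    ∃ u : Euc n → ℝ, Continuous u ∧ (∀ x, 0 < u x) ∧ (∀ x, u x ≤ 1) ∧
      ∀ x, u x + pot w (fun y => u y ^ a) x = 1 := by
  have ha0 : 0 ≤ a := by linarith
  obtain ⟨g, hg1, hgm, hgL, hgneg, hgpos⟩ := exists_trunc ha
  obtain ⟨u, hu⟩ := exists_sol hn hs hw hw0 hw1 ha0 hgL hg1 hgm
  have hg0 : ∀ t, 0 ≤ g t := fun t => by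
    rcases le_total t 0 with h | h
    · rw [hgneg t h]
    · rw [← hgneg 0 le_rfl]; exact hgm h
  have hB := comp_bdd hgL ha0 u
  have hgc : Continuous fun y => g (u y) := hg1.continuous.comp u.continuous
  have hle : ∀ x, u x ≤ 1 := fun x => by
    have := pot_nonneg hn hw0 (fun y => hg0 (u y)) x
    linarith [hu x]
  have hueq : (u : Euc n → ℝ) = fun x => 1 - pot w (fun y => g (u y)) x :=
    funext fun x => by rw [← hu x]; ring
  have hu1 : ContDiff ℝ 1 (u : Euc n → ℝ) := by
    rw [hueq]; exact contDiff_const.sub (contDiff_one_pot hn hs hw hgc hB)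
  have hP2 := contDiff_two_pot hn hs hw hB hw1 (hg1.comp hu1)
  have hone : ∀ y : Euc n, |(fun _ : Euc n => (1 : ℝ)) y| ≤ 1 := fun y => by simp
  set v := pot w (fun _ => 1) with hv
  have hv2 : ContDiff ℝ 2 v := contDiff_two_pot hn hs hw hone hw1 contDiff_const
  have he2 : ContDiff ℝ 2 (fun y => Real.exp (-v y)) := hv2.neg.exp
  set q : Euc n → ℝ := fun x =>
    (Real.exp (-v x) + (-1)) + pot w (fun y => g (u y)) x with hq
  have hqu : ∀ x, q x = Real.exp (-v x) - u x := fun x => by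
    simp only [hq]; linarith [hu x]
  have hE1 : ContDiff ℝ 2 (fun y => Real.exp (-v y) + (-1)) := he2.add contDiff_const
  have hlim : Tendsto q (cocompact (Euc n)) (𝓝 0) := by
    have h1 := pot_tendsto hn hs hw hone
    have h2 := pot_tendsto hn hs hw hB
    have h3 := (Real.continuous_exp.tendsto _).comp h1.neg
    have h4 := (h3.add_const (-1)).add h2
    simpa using h4
  have hlow : ∀ x, q x ≤ 0 := by
    refine max_principle hn (q := q) (hE1.add hP2) hlim le_rfl fun x hx => ?_
    rw [hqu] at hx
    have h1 : lap q x = lap (fun y => Real.exp (-v y)) x - w x * g (u x) := by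
      rw [hq, lap_add hE1 hP2, lap_add he2 contDiff_const,
        lap_pot hn hs hw hB hw1 (hg1.comp hu1)]
      have : lap (fun _ : Euc n => (-1 : ℝ)) x = 0 := by
        unfold lap pd; simp
      rw [this]; ring
    have h2 := lap_exp_neg hv2 x
    rw [hv, lap_pot hn hs hw hone hw1 contDiff_const, ← hv] at h2
    have h3 : g (u x) ≤ Real.exp (-v x) := by
      rcases le_total (u x) 0 with h | h
      · rw [hgneg _ h]; exact (Real.exp_pos _).le
      · rw [hgpos _ h (hle x)]
        have := Real.rpow_le_rpow_of_exponent_ge' h (hle x) zero_le_one ha.le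
        rw [Real.rpow_one] at this
        linarith
    have h4 := mul_le_mul_of_nonneg_left h3 (hw0 x)
    rw [h1]
    nlinarith
  have hpos : ∀ x, 0 < u x := fun x => by
    have h1 := hlow x
    rw [hqu] at h1
    linarith [Real.exp_pos (-v x)]
  refine ⟨u, u.continuous, hpos, hle, fun x => ?_⟩
  rw [← hu x]
  congr 2
  funext y
  exact (hgpos _ (hpos y).le (hle y)).symm

/-- Bootstrapping the regularity of positive solutions. -/
lemma contDiff_sol (hn : 3 ≤ n) {s : ℝ} (hs : 0 < s) {w : Euc n → ℝ} (hw : Dec s w)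
    (hws : ContDiff ℝ (⊤ : ℕ∞) w) {a : ℝ} (ha : 0 ≤ a) {u : Euc n → ℝ} (huc : Continuous u)
    (hpos : ∀ x, 0 < u x) (hle : ∀ x, u x ≤ 1)
    (hu : ∀ x, u x + pot w (fun y => u y ^ a) x = 1) : ContDiff ℝ (⊤ : ℕ∞) u := by
  have hB : ∀ y, |u y ^ a| ≤ 1 := fun y => by
    rw [abs_of_nonneg (Real.rpow_nonneg (hpos y).le _)]
    exact Real.rpow_le_one (hpos y).le (hle y) ha
  have hueq : u = fun x => 1 - pot w (fun y => u y ^ a) x :=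
    funext fun x => by rw [← hu x]; ring
  rw [contDiff_infty]
  intro k
  induction k with
  | zero => exact contDiff_zero.2 huc
  | succ k ih =>
    rw [hueq]
    exact contDiff_const.sub (contDiff_pot hn hs hw hB (m := k)
      (hws.of_le (by exact_mod_cast le_top))
      (ih.rpow_const_of_ne fun x => (hpos x).ne'))

/-! ### Weighted Sobolev norms -/

lemma integrable_of_sob {f : Euc n → ℝ} (hf : ContDiff ℝ (⊤ : ℕ∞) f) {p β : ℝ} (hp : 0 < p)
    (h : SobW 1 p β f < ⊤) {j : ℕ} (hj : j < 2) :
    Integrable (fun x => (jap x ^ (-β - (n : ℝ) / p + (j : ℝ)) * ‖iteratedFDeriv ℝ j f x‖) ^ p) := by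
  have h1 := (ENNReal.sum_lt_top.1 h) j (by simpa using hj)
  rw [ENNReal.rpow_lt_top_iff_of_pos (by positivity)] at h1
  have hc : Continuous (fun x => iteratedFDeriv ℝ j f x) :=
    hf.continuous_iteratedFDeriv (by exact_mod_cast le_top)
  have hm : Continuous fun x =>
      (jap x ^ (-β - (n : ℝ) / p + (j : ℝ)) * ‖iteratedFDeriv ℝ j f x‖) ^ p :=
    ((continuous_jap_rpow _).mul hc.norm).rpow_const fun _ => Or.inr hp.le
  refine ⟨hm.aestronglyMeasurable, ?_⟩
  rw [hasFiniteIntegral_iff_ofReal (Eventually.of_forall fun x => ?_)]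
  · exact h1
  · exact Real.rpow_nonneg (mul_nonneg (Real.rpow_nonneg (jap_pos x).le _) (norm_nonneg _)) _

/-- Pointwise decay slightly faster than the weight gives finiteness of the weighted norm. -/
lemma sob_lt_top {f : Euc n → ℝ} {k : ℕ} {p δ θ : ℝ} (hp : 0 < p) (hθ : -δ < θ)
    (h : ∀ j ∈ Finset.range (k + 1), ∃ C, 0 ≤ C ∧
      ∀ x, ‖iteratedFDeriv ℝ j f x‖ ≤ C * jap x ^ (-θ - (j : ℝ))) : SobW k p δ f < ⊤ := by
  refine ENNReal.sum_lt_top.2 fun j hj => ?_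
  rw [ENNReal.rpow_lt_top_iff_of_pos (by positivity)]
  obtain ⟨C, hC0, hC⟩ := h j hj
  have hI := (integrable_jap (n := n) (r := n + (θ + δ) * p)
    (by nlinarith [mul_pos (by linarith : 0 < θ + δ) hp])).const_mul (C ^ p)
  refine lt_of_le_of_lt (lintegral_mono fun x => ENNReal.ofReal_le_ofReal ?_) hI.lintegral_lt_top
  have hx := jap_pos x
  calc (jap x ^ (-δ - (n : ℝ) / p + (j : ℝ)) * ‖iteratedFDeriv ℝ j f x‖) ^ p
      ≤ (jap x ^ (-δ - (n : ℝ) / p + (j : ℝ)) * (C * jap x ^ (-θ - (j : ℝ)))) ^ p := by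
        refine Real.rpow_le_rpow (by positivity) ?_ hp.le
        exact mul_le_mul_of_nonneg_left (hC x) (by positivity)
    _ = (C * jap x ^ ((-δ - (n : ℝ) / p + (j : ℝ)) + (-θ - (j : ℝ)))) ^ p := by
        rw [Real.rpow_add hx (-δ - (n : ℝ) / p + (j : ℝ)) (-θ - (j : ℝ))]; congr 1; ring
    _ = C ^ p * jap x ^ (-(n + (θ + δ) * p)) := by
        rw [Real.mul_rpow hC0 (by positivity), ← Real.rpow_mul hx.le]
        congr 2
        field_simp
        ring

/-- Under the hypotheses on `τ`, both `τ` and the local potentials of its gradient are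
`O(⟨x⟩^{δ-1})`. -/
lemma tau_bounds (hn : 3 ≤ n) {p δ : ℝ} (hp : (n : ℝ) < p) {τ : Euc n → ℝ}
    (hτs : ContDiff ℝ (⊤ : ℕ∞) τ) (hτ : SobW 1 p (δ - 1) τ < ⊤) :
    (∃ C, 0 ≤ C ∧ ∀ x, |τ x| ≤ C * jap x ^ (δ - 1)) ∧ LocB (δ - 1) (fun y => ‖fderiv ℝ τ y‖) := by
  have hn' : (3 : ℝ) ≤ n := by exact_mod_cast hn
  have hp0 : 0 < p := by linarith
  have hτ1 : ContDiff ℝ 1 τ := hτs.of_le (by exact_mod_cast le_top)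
  have h0 := integrable_of_sob hτs hp0 hτ (j := 0) (by norm_num)
  have h1 := integrable_of_sob hτs hp0 hτ (j := 1) (by norm_num)
  have hL1 : LocB (δ - 1) (fun y => ‖fderiv ℝ τ y‖) := by
    refine locB_of_integrable hn hp (hτ1.continuous_fderiv (by simp)).norm
      (fun y => norm_nonneg _) ?_
    simpa only [norm_iteratedFDeriv_one, Nat.cast_one] using h1
  have hL0 : LocB (δ - 1) (fun y => |τ y| * jap y ^ (-1 : ℝ)) := by
    refine locB_of_integrable hn hp (hτ1.continuous.abs.mul (continuous_jap_rpow _))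
      (fun y => mul_nonneg (abs_nonneg _) (Real.rpow_nonneg (jap_pos y).le _)) ?_
    refine h0.congr (Eventually.of_forall fun y => ?_)
    simp only [norm_iteratedFDeriv_zero, Nat.cast_zero, add_zero, Real.norm_eq_abs]
    rw [Real.rpow_add_one (jap_pos y).ne', Real.rpow_neg_one]
    have := (jap_pos y).ne'
    congr 1
    field_simp
  exact ⟨morrey hn hτ1 hL0 hL1, hL1⟩

/-! ### Decay of the solution -/

/-- Decay of the solution `u = 1 - (-Δ)⁻¹(b τ² u^a)` and its first two derivatives. -/
lemma sol_decay (hn : 3 ≤ n) {δ θ a b : ℝ} (hδ : δ < 0) (hθ0 : 0 ≤ θ) (hθn : θ ≤ (n : ℝ) - 2)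
    (hθδ : θ < -2 * δ) (ha : 1 < a) (hb : 0 ≤ b) {τ : Euc n → ℝ} (hτ1 : ContDiff ℝ 1 τ)
    {T : ℝ} (hT0 : 0 ≤ T) (hT : ∀ x, |τ x| ≤ T * jap x ^ (δ - 1))
    (hDτ : LocB (δ - 1) (fun y => ‖fderiv ℝ τ y‖))
    (hw : Dec (-2 * δ) (fun x => b * τ x ^ 2)) {u : Euc n → ℝ} (hu2 : ContDiff ℝ 2 u)
    (hpos : ∀ x, 0 < u x) (hle : ∀ x, u x ≤ 1)
    (hu : ∀ x, u x + pot (fun x => b * τ x ^ 2) (fun y => u y ^ a) x = 1) :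
    ∀ j ∈ Finset.range (2 + 1), ∃ C, 0 ≤ C ∧
      ∀ x, ‖iteratedFDeriv ℝ j (fun x => u x - 1) x‖ ≤ C * jap x ^ (-θ - (j : ℝ)) := by
  have hn' : (3 : ℝ) ≤ n := by exact_mod_cast hn
  have hk := kap_pos hn
  set s := -2 * δ with hs
  have hs0 : 0 < s := by linarith
  set w := fun x => b * τ x ^ 2 with hwdef
  have hw1 : ContDiff ℝ 1 w := contDiff_const.mul (hτ1.pow 2)
  have hu1 : ContDiff ℝ 1 u := hu2.of_le (by norm_num)
  have hφ0 : ∀ y, 0 ≤ u y ^ a := fun y => Real.rpow_nonneg (hpos y).le _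
  have hφle : ∀ y, u y ^ a ≤ 1 := fun y => Real.rpow_le_one (hpos y).le (hle y) (by linarith)
  have hB : ∀ y, |u y ^ a| ≤ 1 := fun y => by rw [abs_of_nonneg (hφ0 y)]; exact hφle y
  have hφ1 : ContDiff ℝ 1 (fun y => u y ^ a) := hu1.rpow_const_of_ne fun x => (hpos x).ne'
  set h := fun y => u y ^ a * ((kap n)⁻¹ * w y) with hh
  have hdec : Dec s h := dec_pot hw hφ1.continuous hB
  have hh1 : ContDiff ℝ 1 h := hφ1.mul (contDiff_const.mul hw1)
  obtain ⟨A, hA0, hA⟩ := hdec.bd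
  obtain ⟨W, hW0, hW⟩ := hw.bd
  have hfun : (fun x => u x - 1) = fun x => -cv (Gk 0) h x := funext fun x => by
    have := hu x
    simp only [pot] at this
    linarith
  have hD1 : fderiv ℝ (fun x => u x - 1) = fun x => -cv (DGk 0) h x := by
    funext x
    rw [hfun, fderiv_fun_neg, fderiv_P hn hs0 hdec]
  -- first derivatives
  obtain ⟨C1, hC10, hC1⟩ := kernel_bound (n := n) (by omega) (m := (n : ℝ) - 1) (s := s)
    (θ := θ + 1) (by linarith) (by linarith) (by linarith) (by linarith)
  have hgrad : ∀ x, ‖fderiv ℝ (fun x => u x - 1) x‖ ≤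
      A * ((n : ℝ) - 2) * C1 * jap x ^ (-(θ + 1)) := by
    intro x
    rw [hD1, norm_neg]
    refine (norm_DP_le hn hA0 hs0 hA x).trans ?_
    rw [mul_assoc _ C1]
    exact mul_le_mul_of_nonneg_left (hC1 x) (mul_nonneg hA0 (by linarith))
  set G := A * ((n : ℝ) - 2) * C1 with hG
  have hG0 : 0 ≤ G := mul_nonneg (mul_nonneg hA0 (by linarith)) hC10
  -- the gradient of the density
  have hDh : LocB (-2 - s) (fun y => ‖fderiv ℝ h y‖) := by
    have e1 := ((hDτ.jap_mul hn (fun y => norm_nonneg _) (δ - 1)).const_mul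
      (A := (kap n)⁻¹ * (2 * b * T)) (by positivity))
    rw [show δ - 1 + (δ - 1) = -2 - s by rw [hs]; ring] at e1
    have e2 := (locB_jap (n := n) hn (-2 - s)).const_mul (A := (kap n)⁻¹ * (W * (a * G)))
      (mul_nonneg (by positivity) (mul_nonneg hW0 (mul_nonneg (by linarith) hG0)))
    refine (e1.add hn e2).mono hn (hh1.continuous_fderiv (by simp)).norm fun y => ?_
    have hy := jap_pos y
    have du : HasFDerivAt u (fderiv ℝ (fun x => u x - 1) y) y := by
      have := (hu1.differentiable (by simp) y).hasFDerivAt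
      rwa [fderiv_sub_const]
    have dφ := du.rpow_const (p := a) (Or.inl (hpos y).ne')
    have dτ := (hτ1.differentiable (by simp) y).hasFDerivAt
    have dw := (dτ.pow 2).const_mul b
    have dh := dφ.mul (dw.const_mul (kap n)⁻¹)
    have hy1 : jap y ^ (-(θ + 1)) ≤ jap y ^ (-1 : ℝ) := jap_rpow_mono y (by linarith)
    have hφ' : |a * u y ^ (a - 1)| ≤ a := by
      rw [abs_of_nonneg (mul_nonneg (by linarith) (Real.rpow_nonneg (hpos y).le _))]
      exact mul_le_of_le_one_right (by linarith)
        (Real.rpow_le_one (hpos y).le (hle y) (by linarith))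
    have t1 : ‖(a * u y ^ (a - 1)) • fderiv ℝ (fun x => u x - 1) y‖ ≤
        a * (G * jap y ^ (-1 : ℝ)) := by
      rw [norm_smul, Real.norm_eq_abs]
      exact mul_le_mul hφ' ((hgrad y).trans (mul_le_mul_of_nonneg_left hy1 hG0)) (norm_nonneg _)
        (by linarith)
    have t2 : ‖b • ((2 : ℕ) • τ y ^ (2 - 1)) • fderiv ℝ τ y‖ ≤
        2 * b * T * (jap y ^ (δ - 1) * ‖fderiv ℝ τ y‖) := by
      rw [norm_smul, norm_smul, Real.norm_of_nonneg hb]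
      have : ‖(2 : ℕ) • τ y ^ (2 - 1)‖ = 2 * |τ y| := by
        simp
      rw [this]
      calc b * (2 * |τ y| * ‖fderiv ℝ τ y‖)
          ≤ b * (2 * (T * jap y ^ (δ - 1)) * ‖fderiv ℝ τ y‖) := by
            gcongr; exact hT y
        _ = _ := by ring
    have hfd := dh.fderiv
    have hfd' : fderiv ℝ h y = _ := hfd
    rw [hfd']
    refine (norm_add_le _ _).trans (add_le_add ?_ ?_)
    · rw [norm_smul, norm_smul, Real.norm_of_nonneg (hφ0 y), Real.norm_of_nonneg (by positivity)]
      calc _ ≤ 1 * ((kap n)⁻¹ * (2 * b * T * (jap y ^ (δ - 1) * ‖fderiv ℝ τ y‖))) := by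
            refine mul_le_mul (hφle y) (mul_le_mul_of_nonneg_left t2 (by positivity))
              (by positivity) zero_le_one
        _ = _ := by ring
    · rw [norm_smul, Real.norm_eq_abs, abs_mul, abs_of_pos (inv_pos.2 hk)]
      calc _ ≤ ((kap n)⁻¹ * (W * jap y ^ (-2 - s))) * (a * (G * jap y ^ (-1 : ℝ))) := by
            refine mul_le_mul (mul_le_mul_of_nonneg_left (hW y) (by positivity)) t1
              (norm_nonneg _) (by positivity)
        _ = (kap n)⁻¹ * (W * (a * G)) * (jap y ^ (-2 - s) * jap y ^ (-1 : ℝ)) := by ring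
        _ = _ := by rw [← Real.rpow_add hy]; rfl
  obtain ⟨C2, hC20, hC2⟩ := norm_hess_P_le hn hs0 hdec hh1 hDh (θ := θ + 2) (by linarith)
    (by linarith) (by linarith)
  obtain ⟨C0, hC00, hC0⟩ := pot_decay hn hs0 hw hθ0 hθn hθδ
  intro j hj
  have hj3 : j < 3 := by simpa using hj
  interval_cases j
  · refine ⟨C0 * 1, by positivity, fun x => ?_⟩
    rw [norm_iteratedFDeriv_zero, Nat.cast_zero, sub_zero,
      show u x - 1 = -pot w (fun y => u y ^ a) x by linarith [hu x], norm_neg]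
    exact hC0 _ 1 zero_le_one hB x
  · refine ⟨G, hG0, fun x => ?_⟩
    rw [norm_iteratedFDeriv_one, Nat.cast_one, ← neg_add']
    exact hgrad x
  · refine ⟨C2, hC20, fun x => ?_⟩
    rw [show (2 : ℕ) = 1 + 1 from rfl, ← norm_iteratedFDeriv_fderiv, norm_iteratedFDeriv_one, hD1,
      fderiv_fun_neg, norm_neg]
    refine (hC2 x).trans (le_of_eq ?_)
    congr 2
    push_cast
    ring

end

/-- **Prescribed scalar curvature solution on the Euclidean background.** -/
theorem prescribed_scalar_curvature (n : ℕ) (hn : 3 ≤ n) (p δ : ℝ)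
    (hp : (n : ℝ) < p) (hδ1 : 2 - (n : ℝ) < δ) (hδ2 : δ < 0)
    (τ : Euc n → ℝ) (hτs : ContDiff ℝ (⊤ : ℕ∞) τ) (hτ : SobW 1 p (δ - 1) τ < ⊤) :
    ∃ u : Euc n → ℝ,
      ContDiff ℝ (⊤ : ℕ∞) u ∧ (∀ x, 0 < u x) ∧
      SobW 2 p δ (fun x => u x - 1) < ⊤ ∧
      (∀ x, lap u x = bc n * τ x ^ 2 * u x ^ (Nc n - 1)) := by
  have hn' : (3 : ℝ) ≤ n := by exact_mod_cast hn
  have hp0 : 0 < p := by linarith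
  have hb : 0 ≤ bc n := by
    unfold bc
    exact div_nonneg (by linarith) (by linarith)
  have ha := one_lt_exponent hn
  obtain ⟨⟨T, hT0, hT⟩, hDτ⟩ := tau_bounds hn hp hτs hτ
  have hτ1 : ContDiff ℝ 1 τ := hτs.of_le (by exact_mod_cast le_top)
  have hs : 0 < -2 * δ := by linarith
  have hw : Dec (-2 * δ) (fun x => bc n * τ x ^ 2) := by
    refine ⟨continuous_const.mul (hτ1.continuous.pow 2), bc n * T ^ 2, by positivity, fun y => ?_⟩
    rw [abs_of_nonneg (by positivity), mul_assoc]
    refine mul_le_mul_of_nonneg_left ?_ hb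
    rw [← sq_abs]
    calc |τ y| ^ 2 ≤ (T * jap y ^ (δ - 1)) ^ 2 := by gcongr; exact hT y
      _ = T ^ 2 * jap y ^ (-2 - -2 * δ) := by
          rw [mul_pow, ← Real.rpow_natCast (jap y ^ (δ - 1)), ← Real.rpow_mul (jap_pos y).le]
          congr 2
          push_cast
          ring
  have hw0 : ∀ y, 0 ≤ bc n * τ y ^ 2 := fun y => by positivity
  have hws : ContDiff ℝ (⊤ : ℕ∞) (fun x => bc n * τ x ^ 2) := contDiff_const.mul (hτs.pow 2)
  have hw1 : ContDiff ℝ 1 (fun x => bc n * τ x ^ 2) := hws.of_le (by exact_mod_cast le_top)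
  obtain ⟨u, huc, hpos, hle, hu⟩ := exists_pos_sol hn hs hw hw0 hw1 ha
  have hus := contDiff_sol hn hs hw hws (by linarith) huc hpos hle hu
  have hu2 : ContDiff ℝ 2 u := contDiff_infty.mp hus 2
  have hB : ∀ y, |u y ^ (Nc n - 1)| ≤ 1 := fun y => by
    rw [abs_of_nonneg (Real.rpow_nonneg (hpos y).le _)]
    exact Real.rpow_le_one (hpos y).le (hle y) (by linarith)
  have hφ1 : ContDiff ℝ 1 (fun y => u y ^ (Nc n - 1)) :=
    (hu2.of_le (by norm_num)).rpow_const_of_ne fun x => (hpos x).ne'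
  refine ⟨u, hus, hpos, ?_, fun x => ?_⟩
  · -- any decay rate strictly between `-δ` and `min (-2δ) (n-2)` will do
    have hmin : -δ < min (-2 * δ) ((n : ℝ) - 2) := lt_min (by linarith) (by linarith)
    obtain ⟨θ, hθ1, hθ2⟩ := exists_between hmin
    exact sob_lt_top hp0 hθ1 (sol_decay hn hδ2 (by linarith)
      (hθ2.le.trans (min_le_right _ _)) (hθ2.trans_le (min_le_left _ _)) ha hb hτ1 hT0 hT hDτ hw
      hu2 hpos hle hu)
  · set P := pot (fun x => bc n * τ x ^ 2) (fun y => u y ^ (Nc n - 1)) with hP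
    have hP2 : ContDiff ℝ 2 P := contDiff_two_pot hn hs hw hB hw1 hφ1
    have hueq : u = fun x => 1 + (-1) * P x := funext fun x => by linarith [hu x]
    have hlap : lap u x = lap (fun x => 1 + (-1) * P x) x := congrArg (fun f => lap f x) hueq
    have h0 : lap (fun _ : Euc n => (1 : ℝ)) x = 0 := by
      unfold lap pd; simp
    rw [hlap, lap_add contDiff_const (contDiff_const.mul hP2), lap_const_mul hP2, h0, hP,
      lap_pot hn hs hw hB hw1 hφ1]
    ring
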